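/- Every triconnected planar simple graph with maximum degree at most 4 on n vertices admits a planar octilinear drawing whose total number of bends is at most n + 5. -/

import Mathlib

/-!
Common definitions: polylines, octilinear drawings, planarity, triconnectivity.
-/

/-- A polyline: a sequence of `len + 1` points `pt 0, pt 1, …, pt len`,
consisting of `len ≥ 1` segments. (Values of `pt` beyond `len` are irrelevant.) -/
structure Polyline where
  len : ℕ
  len_pos : 1 ≤ len
  pt : ℕ → ℝ × ℝ

namespace Polyline

/-- The number of bends of a polyline (its interior points `pt 1, …, pt (len-1)`). -/
def bends (P : Polyline) : ℕ := P.len - 1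

/-- Piecewise-linear parametrization of the polyline on the interval `[0, len]`. -/
noncomputable def param (P : Polyline) (s : ℝ) : ℝ × ℝ :=
  P.pt ⌊s⌋.toNat + (s - (⌊s⌋.toNat : ℝ)) • (P.pt (⌊s⌋.toNat + 1) - P.pt ⌊s⌋.toNat)

/-- The image (trace) of the polyline in the plane. -/
noncomputable def image (P : Polyline) : Set (ℝ × ℝ) :=
  P.param '' Set.Icc 0 (P.len : ℝ)

/-- The polyline is a simple curve. -/
def Simple (P : Polyline) : Prop :=
  Set.InjOn P.param (Set.Icc 0 (P.len : ℝ))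

/-- Every segment is nondegenerate, and no two consecutive segments are collinear. -/
def Proper (P : Polyline) : Prop :=
  (∀ i < P.len, P.pt i ≠ P.pt (i + 1)) ∧
  (∀ i, i + 1 < P.len → ¬ Collinear ℝ ({P.pt i, P.pt (i + 1), P.pt (i + 2)} : Set (ℝ × ℝ)))

/-- The segment from `a` to `b` is horizontal, vertical, or diagonal at `45°`. -/
def OctiSeg (a b : ℝ × ℝ) : Prop :=
  b.2 - a.2 = 0 ∨ b.1 - a.1 = 0 ∨ b.2 - a.2 = b.1 - a.1 ∨ b.2 - a.2 = -(b.1 - a.1)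

/-- The polyline is octilinear: proper, with all segments in octilinear directions. -/
def Octilinear (P : Polyline) : Prop :=
  P.Proper ∧ ∀ i < P.len, OctiSeg (P.pt i) (P.pt (i + 1))

end Polyline

/-- Embedding of the integer grid into the real plane. -/
def toR (p : ℤ × ℤ) : ℝ × ℝ := ((p.1 : ℝ), (p.2 : ℝ))

/-- A polyline drawing of a simple graph `G` in the plane:
an injective placement of the vertices and, for each edge, a polyline whose
endpoints are the points of the edge's endvertices, with nondegenerate segments
and no two consecutive segments collinear. -/
structure PolyDrawing {V : Type*} (G : SimpleGraph V) where
  pos : V → ℝ × ℝ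
  inj : Function.Injective pos
  poly : Sym2 V → Polyline
  ends : ∀ u v, G.Adj u v →
    ({(poly s(u, v)).pt 0, (poly s(u, v)).pt (poly s(u, v)).len} : Set (ℝ × ℝ)) =
      {pos u, pos v}
  proper : ∀ e ∈ G.edgeSet, (poly e).Proper

/-- A polyline drawing is planar: every edge-polyline is a simple curve meeting the
vertex points exactly in its two endpoints, and polylines of distinct edges intersect
only in images of common endvertices. -/
def PolyDrawing.IsPlanar {V : Type*} {G : SimpleGraph V} (D : PolyDrawing G) : Prop :=
  (∀ e ∈ G.edgeSet, (D.poly e).Simple) ∧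
  (∀ u v, G.Adj u v →
    (D.poly s(u, v)).image ∩ Set.range D.pos = {D.pos u, D.pos v}) ∧
  (∀ e ∈ G.edgeSet, ∀ e' ∈ G.edgeSet, e ≠ e' →
    (D.poly e).image ∩ (D.poly e').image ⊆ D.pos '' {w | w ∈ e ∧ w ∈ e'})

/-- A simple graph is planar if it admits a planar polyline drawing in `ℝ²`. -/
def GraphPlanar {V : Type*} (G : SimpleGraph V) : Prop :=
  ∃ D : PolyDrawing G, D.IsPlanar

/-- An octilinear drawing of a simple graph `G`: vertices are placed injectively on the
integer grid and each edge is drawn as an octilinear polyline between its endvertices. -/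
structure OctiDrawing {V : Type*} (G : SimpleGraph V) where
  pos : V → ℤ × ℤ
  inj : Function.Injective pos
  poly : Sym2 V → Polyline
  ends : ∀ u v, G.Adj u v →
    ({(poly s(u, v)).pt 0, (poly s(u, v)).pt (poly s(u, v)).len} : Set (ℝ × ℝ)) =
      {toR (pos u), toR (pos v)}
  octi : ∀ e ∈ G.edgeSet, (poly e).Octilinear

/-- An octilinear drawing is planar: every edge-polyline is a simple curve meeting the
vertex points exactly in its two endpoints, and polylines of distinct edges intersect
only in images of common endvertices. -/
def OctiDrawing.IsPlanar {V : Type*} {G : SimpleGraph V} (D : OctiDrawing G) : Prop :=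
  (∀ e ∈ G.edgeSet, (D.poly e).Simple) ∧
  (∀ u v, G.Adj u v →
    (D.poly s(u, v)).image ∩ Set.range (fun w => toR (D.pos w)) =
      {toR (D.pos u), toR (D.pos v)}) ∧
  (∀ e ∈ G.edgeSet, ∀ e' ∈ G.edgeSet, e ≠ e' →
    (D.poly e).image ∩ (D.poly e').image ⊆
      (fun w => toR (D.pos w)) '' {w | w ∈ e ∧ w ∈ e'})

/-- The total number of bends of an octilinear drawing. -/
noncomputable def OctiDrawing.totalBends {V : Type*} [Fintype V] {G : SimpleGraph V}
    (D : OctiDrawing G) : ℕ :=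
  ∑ e ∈ G.edgeSet.toFinite.toFinset, (D.poly e).bends

/-- The union of the images of the polylines of a set `S` of edges. -/
noncomputable def edgesImage {V : Type*} {G : SimpleGraph V} (D : OctiDrawing G)
    (S : Set (Sym2 V)) : Set (ℝ × ℝ) :=
  ⋃ e ∈ S, (D.poly e).image

/-- The interior (in the drawing `D`) of the closed curve formed by the edges in `S`:
the union of the bounded connected components of the complement of the curve. -/
noncomputable def interiorOf {V : Type*} {G : SimpleGraph V} (D : OctiDrawing G)
    (S : Set (Sym2 V)) : Set (ℝ × ℝ) :=
  {z | z ∉ edgesImage D S ∧ Bornology.IsBounded (connectedComponentIn (edgesImage D S)ᶜ z)}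

/-- A graph is triconnected if it has at least `4` vertices and deleting
any at most `2` vertices leaves it connected. -/
def Triconnected {V : Type*} [Fintype V] (G : SimpleGraph V) : Prop :=
  4 ≤ Fintype.card V ∧ ∀ S : Set V, S.ncard ≤ 2 → (G.induce Sᶜ).Connected

/-- The maximum degree of `G` is at most `k`. -/
def MaxDegLE {V : Type*} (G : SimpleGraph V) (k : ℕ) : Prop :=
  ∀ v, (G.neighborSet v).ncard ≤ k

/-!
Shear the given planar drawing so that no two points at which its segments end have the same
height. For a circulation on the darts, the total weight passing to the left of a point then serves
as a potential on the faces: every circulation is a coboundary. This replaces Euler's formula.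
Since no vertex separates the graph, it has an `st`-numbering for any edge `st`, and by counting
switches at the vertices and peaks of the faces the upward darts are consecutive around every vertex
and every face has a single peak. Hence, when a horizontal line sweeps over the vertices in the
order of the numbering, at each vertex it exchanges the incoming edges, which are consecutive on the
line, for the outgoing ones.

The octilinear drawing follows this sweep. Every edge but `st` leaves its lower end with horizontal
shift `-1`, `0` or `1` per unit of height, which is enough as at most three such edges go up from a
vertex of degree at most four; the heights of the strips between consecutive vertices decrease by
the factor three, which preserves the order on the line. A vertex is placed on its middle incoming
edge, which is thus straight, and the other incoming edges, at most one on either side, are bent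
horizontally towards it. The edge `st` is led around everything else with two bends. On `n` vertices
and `m` edges this makes at most `m + 2 - n` bends, and `m ≤ 2 n`.
-/

/-! ### Polylines -/

section Segments

lemma fst_mem_uIcc_of_mem_segment {a b p : ℝ × ℝ} (hp : p ∈ segment ℝ a b) :
    p.1 ∈ Set.uIcc a.1 b.1 := by
  rw [← segment_eq_uIcc]
  exact (Prod.segment_subset a b hp).1

lemma snd_mem_uIcc_of_mem_segment {a b p : ℝ × ℝ} (hp : p ∈ segment ℝ a b) :
    p.2 ∈ Set.uIcc a.2 b.2 := by
  rw [← segment_eq_uIcc]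
  exact (Prod.segment_subset a b hp).2

lemma eq_left_of_mem_segment {E : Type*} [AddCommGroup E] [Module ℝ E] (f : E →ₗ[ℝ] ℝ)
    {a b p : E} (hab : f a ≠ f b) (hp : p ∈ segment ℝ a b) (hpa : f p = f a) : p = a := by
  rw [segment_eq_image'] at hp
  obtain ⟨t, -, rfl⟩ := hp
  beta_reduce at hpa ⊢
  have ht : t * (f b - f a) = 0 := by simpa using hpa
  rw [(mul_eq_zero.1 ht).resolve_right (sub_ne_zero.2 hab.symm), zero_smul, add_zero]

lemma eq_right_of_mem_segment {E : Type*} [AddCommGroup E] [Module ℝ E] (f : E →ₗ[ℝ] ℝ)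
    {a b p : E} (hab : f a ≠ f b) (hp : p ∈ segment ℝ a b) (hpb : f p = f b) : p = b :=
  eq_left_of_mem_segment f hab.symm (segment_symm ℝ a b ▸ hp) hpb

lemma not_collinear_of_cross_ne_zero {a b c : ℝ × ℝ}
    (h : (b.1 - a.1) * (c.2 - a.2) - (b.2 - a.2) * (c.1 - a.1) ≠ 0) :
    ¬ Collinear ℝ ({a, b, c} : Set (ℝ × ℝ)) := by
  intro hc
  obtain ⟨v, hv⟩ := (collinear_iff_of_mem (p₀ := a) (by simp)).1 hc
  obtain ⟨r, rfl⟩ := hv b (by simp)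
  obtain ⟨q, rfl⟩ := hv c (by simp)
  apply h
  simp only [vadd_eq_add, Prod.fst_add, Prod.snd_add, Prod.smul_fst, Prod.smul_snd, smul_eq_mul]
  ring

end Segments

namespace Polyline

variable {P : Polyline}

/-- The `i`-th segment of a polyline. -/
def seg (P : Polyline) (i : ℕ) : Set (ℝ × ℝ) := segment ℝ (P.pt i) (P.pt (i + 1))

lemma param_natCast_add (P : Polyline) (i : ℕ) {t : ℝ} (ht : t ∈ Set.Icc (0 : ℝ) 1) :
    P.param (i + t) = P.pt i + t • (P.pt (i + 1) - P.pt i) := by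
  have hfloor {j : ℕ} {s : ℝ} (hs : s ∈ Set.Ico (0 : ℝ) 1) : ⌊(j : ℝ) + s⌋.toNat = j := by
    rw [Int.floor_natCast_add, Int.floor_eq_zero_iff.2 hs, add_zero, Int.toNat_natCast]
  rcases ht.2.lt_or_eq with h1 | rfl
  · rw [param, hfloor ⟨ht.1, h1⟩, add_sub_cancel_left]
  · simp [param]

@[simp]
lemma param_natCast (P : Polyline) (i : ℕ) : P.param i = P.pt i := by
  simpa using P.param_natCast_add i (t := 0) (by simp)

lemma param_image_Icc (P : Polyline) (i : ℕ) : P.param '' Set.Icc (i : ℝ) (i + 1) = P.seg i := by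
  have hIcc : Set.Icc (i : ℝ) (i + 1) = (fun t => (i : ℝ) + t) '' Set.Icc 0 1 := by
    simp [add_comm]
  rw [seg, segment_eq_image', hIcc, Set.image_image]
  exact Set.image_congr fun t ht => P.param_natCast_add i ht

lemma Icc_subset_Icc_len {i : ℕ} (hi : i < P.len) :
    Set.Icc (i : ℝ) (i + 1) ⊆ Set.Icc 0 (P.len : ℝ) :=
  Set.Icc_subset_Icc i.cast_nonneg (by exact_mod_cast hi)

lemma exists_mem_Icc (P : Polyline) {s : ℝ} (hs : s ∈ Set.Icc 0 (P.len : ℝ)) :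
    ∃ i < P.len, s ∈ Set.Icc (i : ℝ) (i + 1) := by
  rcases hs.2.lt_or_eq with h | rfl
  · exact ⟨⌊s⌋₊, (Nat.floor_lt hs.1).2 h, Nat.floor_le hs.1, (Nat.lt_floor_add_one s).le⟩
  · obtain ⟨n, hn⟩ := Nat.exists_eq_add_of_le' P.len_pos
    exact ⟨n, by lia, by simp [hn], by simp [hn]⟩

lemma mem_image_iff {p : ℝ × ℝ} : p ∈ P.image ↔ ∃ i < P.len, p ∈ P.seg i := by
  constructor
  · rintro ⟨s, hs, rfl⟩
    obtain ⟨i, hi, hsi⟩ := P.exists_mem_Icc hs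
    exact ⟨i, hi, P.param_image_Icc i ▸ Set.mem_image_of_mem _ hsi⟩
  · rintro ⟨i, hi, hp⟩
    rw [← P.param_image_Icc i] at hp
    exact Set.image_mono (Icc_subset_Icc_len hi) hp

lemma pt_mem_image {i : ℕ} (hi : i ≤ P.len) : P.pt i ∈ P.image :=
  ⟨i, ⟨i.cast_nonneg, by exact_mod_cast hi⟩, P.param_natCast i⟩

lemma Simple.pt_injOn (hP : P.Simple) : Set.InjOn P.pt (Set.Iic P.len) := by
  intro i hi j hj h
  have hmem {k : ℕ} (hk : k ∈ Set.Iic P.len) : (k : ℝ) ∈ Set.Icc (0 : ℝ) P.len :=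
    ⟨k.cast_nonneg, by exact_mod_cast hk⟩
  exact_mod_cast hP (hmem hi) (hmem hj) (by simpa using h)

lemma Simple.eq_or_eq_of_pt_mem_seg (hP : P.Simple) {i k : ℕ} (hi : i < P.len) (hk : k ≤ P.len)
    (h : P.pt k ∈ P.seg i) : k = i ∨ k = i + 1 := by
  rw [← P.param_image_Icc i] at h
  obtain ⟨s, hs, hsk⟩ := h
  have : s = k := hP (Icc_subset_Icc_len hi hs) ⟨k.cast_nonneg, by exact_mod_cast hk⟩
    (by rw [hsk, param_natCast])
  subst this
  have h1 : i ≤ k := by exact_mod_cast hs.1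
  have h2 : k ≤ i + 1 := by exact_mod_cast hs.2
  lia

lemma Simple.seg_inter_seg_of_lt (hP : P.Simple) {i j : ℕ} (hij : i < j) (hj : j < P.len)
    {p : ℝ × ℝ} (hpi : p ∈ P.seg i) (hpj : p ∈ P.seg j) : j = i + 1 ∧ p = P.pt j := by
  rw [← param_image_Icc] at hpi hpj
  obtain ⟨s, hs, rfl⟩ := hpi
  obtain ⟨t, ht, hst⟩ := hpj
  have hst : t = s := hP (Icc_subset_Icc_len hj ht) (Icc_subset_Icc_len (hij.trans hj) hs) hst
  subst hst
  have hji : j = i + 1 := le_antisymm (by exact_mod_cast ht.1.trans hs.2) hij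
  have htj : t = j := le_antisymm (by rw [hji]; exact_mod_cast hs.2) ht.1
  exact ⟨hji, by rw [htj, param_natCast]⟩

lemma Simple.seg_inter_seg_subset (hP : P.Simple) {i j : ℕ} (hij : i ≠ j) (hi : i < P.len)
    (hj : j < P.len) :
    P.seg i ∩ P.seg j ⊆ {P.pt i, P.pt (i + 1)} ∩ {P.pt j, P.pt (j + 1)} := by
  rintro p ⟨hpi, hpj⟩
  rcases hij.lt_or_gt with h | h
  · obtain ⟨rfl, rfl⟩ := hP.seg_inter_seg_of_lt h hj hpi hpj
    simp
  · obtain ⟨rfl, rfl⟩ := hP.seg_inter_seg_of_lt h hi hpj hpi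
    simp

lemma simple_of_seg_inter_seg (hne : ∀ i < P.len, P.pt i ≠ P.pt (i + 1))
    (hinter : ∀ i j, i < j → j < P.len → ∀ p, p ∈ P.seg i → p ∈ P.seg j →
      j = i + 1 ∧ p = P.pt j) : P.Simple := by
  have hinj {i : ℕ} (hi : i < P.len) : Set.InjOn P.param (Set.Icc (i : ℝ) (i + 1)) := by
    intro s hs t ht h
    rw [← add_sub_cancel (i : ℝ) s, ← add_sub_cancel (i : ℝ) t,
      P.param_natCast_add i ⟨by linarith [hs.1], by linarith [hs.2]⟩,
      P.param_natCast_add i ⟨by linarith [ht.1], by linarith [ht.2]⟩] at h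
    have := smul_left_injective ℝ (sub_ne_zero.2 (hne i hi).symm) (add_left_cancel h)
    linarith
  have hlt {i j : ℕ} (hij : i < j) (hj : j < P.len) {s t : ℝ} (hs : s ∈ Set.Icc (i : ℝ) (i + 1))
      (ht : t ∈ Set.Icc (j : ℝ) (j + 1)) (h : P.param s = P.param t) : s = t := by
    obtain ⟨rfl, hp⟩ := hinter i j hij hj (P.param s) (P.param_image_Icc i ▸ ⟨s, hs, rfl⟩)
      (P.param_image_Icc j ▸ ⟨t, ht, h.symm⟩)
    rw [← param_natCast] at hp
    have hs' := hinj (i.lt_succ_self.trans hj) hs (by simp) hp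
    have ht' := hinj hj ht (by simp) (h.symm.trans hp)
    exact hs'.trans ht'.symm
  intro s hs t ht h
  obtain ⟨i, hi, hsi⟩ := P.exists_mem_Icc hs
  obtain ⟨j, hj, htj⟩ := P.exists_mem_Icc ht
  rcases lt_trichotomy i j with hij | rfl | hij
  · exact hlt hij hj hsi htj h
  · exact hinj hi hsi htj h
  · exact (hlt hij hi htj hsi h.symm).symm

/-- A polyline traversed backwards. -/
def reverse (P : Polyline) : Polyline := ⟨P.len, P.len_pos, fun i => P.pt (P.len - i)⟩

lemma param_reverse (P : Polyline) {s : ℝ} (hs : s ∈ Set.Icc 0 (P.len : ℝ)) :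
    P.reverse.param s = P.param (P.len - s) := by
  obtain ⟨i, hi, hsi⟩ := P.reverse.exists_mem_Icc hs
  obtain ⟨k, hk⟩ : ∃ k, P.len = k + (i + 1) := Nat.exists_eq_add_of_le' hi
  have hlen : (P.len : ℝ) - s = k + (1 - (s - i)) := by rw [hk]; push_cast; ring
  rw [hlen, ← add_sub_cancel (i : ℝ) s,
    param_natCast_add _ _ ⟨by linarith [hsi.1], by linarith [hsi.2]⟩, add_sub_cancel_left,
    param_natCast_add _ _ ⟨by linarith [hsi.2], by linarith [hsi.1]⟩]
  have h1 : P.len - i = k + 1 := by lia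
  have h2 : P.len - (i + 1) = k := by lia
  simp only [reverse, h1, h2]
  module

lemma Simple.reverse (hP : P.Simple) : P.reverse.Simple := by
  intro s hs t ht h
  rw [P.param_reverse hs, P.param_reverse ht] at h
  have := hP ⟨sub_nonneg.2 hs.2, sub_le_self _ hs.1⟩ ⟨sub_nonneg.2 ht.2, sub_le_self _ ht.1⟩ h
  linarith

lemma image_reverse (P : Polyline) : P.reverse.image = P.image :=
  calc P.reverse.image
      = (fun s => P.param (P.len - s)) '' Set.Icc 0 (P.len : ℝ) :=
        Set.image_congr fun _ hs => P.param_reverse hs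
    _ = P.param '' ((fun s => (P.len : ℝ) - s) '' Set.Icc 0 (P.len : ℝ)) :=
        (Set.image_image ..).symm
    _ = P.image := by simp [image]

end Polyline

/-! ### Circulations and spherical rotations -/

section Circulation

variable {D P : Type*} [Fintype D]

open scoped Classical in
/-- A circulation on a graph given by its darts: a weight `z` that changes sign when a dart is
reversed and whose values on the darts with a common base sum up to zero. -/
structure IsCirculation (base : D → P) (rev : D → D) (z : D → ℝ) : Prop where
  apply_rev : ∀ d, z (rev d) = -z d
  sum_eq_zero : ∀ d, ∑ c with base c = base d, z c = 0

/-- A rotation system of a planar map: the cycles of `σ` are the sets of darts with a common base,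
and every circulation is the coboundary of a function on the faces.
A face is recorded by the darts which have it on a fixed side, so that `g d` and `g (σ d)` are the
values of one function at the two sides of `d`. -/
structure IsSphericalRotation (base : D → P) (rev : D → D) (σ : Equiv.Perm D) : Prop where
  sameCycle_iff : ∀ d d', σ.SameCycle d d' ↔ base d = base d'
  exists_potential : ∀ z, IsCirculation base rev z →
    ∃ g : D → ℝ, ∀ d, g (rev d) = g d + z d ∧ g (σ d) = g d + z d

variable {base : D → P} {rev : D → D} {z : D → ℝ}

lemma IsCirculation.sum_base_mul_eq_zero (hz : IsCirculation base rev z) (w : P → ℝ) :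
    ∑ d, w (base d) * z d = 0 := by
  classical
  rw [← Finset.sum_fiberwise_of_maps_to (t := Finset.univ.image base) (g := base) (by simp)]
  refine Finset.sum_eq_zero fun p hp => ?_
  obtain ⟨d, -, rfl⟩ := Finset.mem_image.1 hp
  rw [Finset.sum_congr rfl fun d' hd' => by rw [(Finset.mem_filter.1 hd').2], ← Finset.mul_sum]
  convert mul_zero (w (base d))
  convert hz.sum_eq_zero d

end Circulation

/-! ### Cyclic orders -/

section CyclicOrder

lemma exists_perm_lt_iff_le (F : Type*) [Finite F] [LinearOrder F] :
    ∃ ρ : Equiv.Perm F, ∀ x, (∀ y, y < ρ x ↔ y ≤ x) ∨ ∀ y, y ≤ x ∧ ρ x ≤ y := by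
  cases nonempty_fintype F
  rcases isEmpty_or_nonempty F with hF | hF
  · exact ⟨1, isEmptyElim⟩
  obtain ⟨n, hn⟩ := Nat.exists_eq_succ_of_ne_zero (Fintype.card_ne_zero (α := F))
  let e := Fintype.orderIsoFinOfCardEq F hn
  refine ⟨e.toEquiv.permCongr (finRotate _), e.surjective.forall.2 fun i => ?_⟩
  have hρ : e.toEquiv.permCongr (finRotate _) (e i) = e (i + 1) := by
    simp [Equiv.permCongr_apply]
  simp only [e.surjective.forall, hρ, e.lt_iff_lt, e.le_iff_le]
  rcases (Fin.le_last i).lt_or_eq with hi | rfl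
  · refine .inl fun j => ?_
    rw [Fin.lt_def, Fin.val_add_one_of_lt hi, Nat.lt_succ_iff, Fin.le_def]
  · exact .inr fun j => ⟨j.le_last, by simp⟩

variable {D P K : Type*} [LinearOrder K] {base : D → P} {key : D → K} {σ : Equiv.Perm D}

/-- The permutation `σ` sends every dart to the next one with the same base in the order given by
`key`, and the last dart at a base to the first one. -/
def IsCyclicSucc (base : D → P) (key : D → K) (σ : Equiv.Perm D) : Prop :=
  ∀ d, base (σ d) = base d ∧
    ((∀ d', base d' = base d → (key d' < key (σ d) ↔ key d' ≤ key d)) ∨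
      ∀ d', base d' = base d → key d' ≤ key d ∧ key (σ d) ≤ key d')

lemma exists_isCyclicSucc [Finite D] (hkey : ∀ d d', base d = base d' → key d = key d' → d = d') :
    ∃ σ, IsCyclicSucc base key σ := by
  let ord (p : P) : LinearOrder {d // base d = p} := LinearOrder.lift' (fun d => key d.1)
    fun a b h => Subtype.ext (hkey _ _ (a.2.trans b.2.symm) h)
  choose ρ hρ using fun p => exists_perm_lt_iff_le {d // base d = p}
  refine ⟨(Equiv.sigmaFiberEquiv base).permCongr (Equiv.sigmaCongrRight ρ), fun d =>
    ⟨(ρ (base d) ⟨d, rfl⟩).2, ?_⟩⟩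
  exact (hρ (base d) ⟨d, rfl⟩).imp (fun h d' hd' => h ⟨d', hd'⟩) fun h d' hd' => h ⟨d', hd'⟩

namespace IsCyclicSucc

lemma base_eq_of_sameCycle (hσ : IsCyclicSucc base key σ) {d d' : D} (h : σ.SameCycle d d') :
    base d = base d' := by
  obtain ⟨n, rfl⟩ := h
  induction n using Int.induction_on with
  | zero => rfl
  | succ n ih => rw [ih, add_comm, zpow_add, zpow_one, Equiv.Perm.mul_apply, (hσ _).1]
  | pred n ih =>
    rw [ih, ← (hσ ((σ ^ (-(n : ℤ) - 1)) d)).1, ← Equiv.Perm.mul_apply, ← zpow_one_add,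
      add_sub_cancel]

lemma exists_sameCycle_key_le [Finite D] (hσ : IsCyclicSucc base key σ) (d : D) :
    ∃ d₀, σ.SameCycle d d₀ ∧ ∀ d', base d' = base d → key d₀ ≤ key d' := by
  obtain ⟨d₀, hd₀, hmin⟩ := Set.exists_min_image {d' | σ.SameCycle d d'} key (Set.toFinite _)
    ⟨d, .refl _ _⟩
  have hpre : σ.SameCycle d (σ.symm d₀) := hd₀.symm_apply_right
  refine ⟨d₀, hd₀, fun d' hd' => ?_⟩
  have hbase := hσ.base_eq_of_sameCycle hpre
  obtain ⟨-, h | h⟩ := hσ (σ.symm d₀) <;> rw [Equiv.apply_symm_apply] at h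
  · exact absurd ((h _ rfl).2 le_rfl) (hmin _ hpre).not_gt
  · exact (h d' (hd'.trans hbase)).2

lemma sameCycle_iff [Finite D] (hσ : IsCyclicSucc base key σ)
    (hkey : ∀ d d', base d = base d' → key d = key d' → d = d') (d d' : D) :
    σ.SameCycle d d' ↔ base d = base d' := by
  refine ⟨hσ.base_eq_of_sameCycle, fun h => ?_⟩
  obtain ⟨e, he, hle⟩ := hσ.exists_sameCycle_key_le d
  obtain ⟨e', he', hle'⟩ := hσ.exists_sameCycle_key_le d'
  have hb := hσ.base_eq_of_sameCycle he
  have hb' := hσ.base_eq_of_sameCycle he'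
  have hee' : e = e' := hkey _ _ (by rw [← hb, h, hb'])
    (le_antisymm (hle _ (by rw [h, hb'])) (hle' _ (by rw [← h, hb])))
  exact he.trans (hee' ▸ he'.symm)

variable [Fintype D]

open Classical in
lemma sum_lt_apply (hσ : IsCyclicSucc base key σ)
    (hkey : ∀ d d', base d = base d' → key d = key d' → d = d') {z : D → ℝ} (d : D)
    (hz : ∑ d' with base d' = base d, z d' = 0) :
    ∑ d' with base d' = base (σ d) ∧ key d' < key (σ d), z d' =
      ∑ d' with base d' = base d ∧ key d' < key d, z d' + z d := by
  have hle : ∑ d' with base d' = base d ∧ key d' ≤ key d, z d' =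
      ∑ d' with base d' = base d ∧ key d' < key d, z d' + z d := by
    rw [add_comm, ← Finset.sum_insert (by simp)]
    refine Finset.sum_congr (Finset.ext fun d' => ?_) fun _ _ => rfl
    simp only [Finset.mem_filter_univ, Finset.mem_insert]
    grind
  obtain ⟨hbase, h | h⟩ := hσ d
  · rw [← hle, hbase]
    simp only [and_congr_right (h _)]
  · rw [← hle, hbase, Finset.filter_false_of_mem fun d' _ hd' => ((h d' hd'.1).2.not_gt hd'.2),
      Finset.sum_empty, ← hz]
    exact Finset.sum_congr (Finset.filter_congr fun d' _ =>
      (and_iff_left_of_imp fun hd' => (h d' hd').1).symm) fun _ _ => rfl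

end IsCyclicSucc

end CyclicOrder

/-! ### Systems of non-crossing segments -/

/-- Finitely many segments in the plane, each given in both directions, such that different
segments meet only in common endpoints. -/
structure SegmentSystem (B : Type*) where
  src : B → ℝ × ℝ
  rev : B → B
  rev_rev : ∀ b, rev (rev b) = b
  src_rev_ne : ∀ b, src (rev b) ≠ src b
  noncross : ∀ b b', b' ≠ b → b' ≠ rev b →
    segment ℝ (src b) (src (rev b)) ∩ segment ℝ (src b') (src (rev b')) ⊆
      {src b, src (rev b)} ∩ {src b', src (rev b')}

namespace SegmentSystem

variable {B : Type*} (S : SegmentSystem B) {a b : B}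

/-- The endpoint of a segment. -/
def tgt (b : B) : ℝ × ℝ := S.src (S.rev b)

@[simp] lemma src_rev (b : B) : S.src (S.rev b) = S.tgt b := rfl

@[simp] lemma tgt_rev (b : B) : S.tgt (S.rev b) = S.src b := by rw [tgt, S.rev_rev]

/-- General position: different endpoints have different heights. -/
def Generic : Prop := ∀ a b, (S.src a).2 = (S.src b).2 → S.src a = S.src b

/-- The segment is directed upwards. -/
def Up (b : B) : Prop := (S.src b).2 < (S.tgt b).2

/-- The inverse slope `dx / dy` of a segment. -/
noncomputable def slope (b : B) : ℝ :=
  ((S.tgt b).1 - (S.src b).1) / ((S.tgt b).2 - (S.src b).2)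

/-- The abscissa at height `h` of the line spanned by a segment. -/
noncomputable def abscissa (b : B) (h : ℝ) : ℝ := (S.src b).1 + S.slope b * (h - (S.src b).2)

/-- The centre of the range of heights common to two segments. -/
noncomputable def midHeight (a b : B) : ℝ :=
  (max (S.src a).2 (S.src b).2 + min (S.tgt a).2 (S.tgt b).2) / 2

/-- The segment `b` passes to the left of `a`. This is only meaningful if the ranges of heights of
the two segments overlap. -/
def LeftOf (b a : B) : Prop := S.abscissa b (S.midHeight a b) < S.abscissa a (S.midHeight a b)

variable {S}

@[simp]
lemma slope_rev (b : B) : S.slope (S.rev b) = S.slope b := by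
  rw [slope, slope, tgt_rev, src_rev, ← neg_sub, ← neg_sub (S.tgt b).2, neg_div_neg_eq]

@[simp]
lemma abscissa_src (b : B) : S.abscissa b (S.src b).2 = (S.src b).1 := by simp [abscissa]

lemma abscissa_tgt (hb : S.Up b) : S.abscissa b (S.tgt b).2 = (S.tgt b).1 := by
  rw [abscissa, slope, div_mul_cancel₀ _ (sub_pos.2 hb).ne', add_sub_cancel]

lemma abscissa_eq_tgt_add (hb : S.Up b) (h : ℝ) :
    S.abscissa b h = (S.tgt b).1 + S.slope b * (h - (S.tgt b).2) := by
  rw [← abscissa_tgt hb, abscissa, abscissa]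
  ring

lemma Generic.up_or_up_rev (hS : S.Generic) (b : B) : S.Up b ∨ S.Up (S.rev b) := by
  rw [Up, Up, tgt_rev]
  exact (lt_or_gt_of_ne fun h => S.src_rev_ne b (hS _ _ h).symm)

lemma Up.not_up_rev (hb : S.Up b) : ¬S.Up (S.rev b) := by
  rw [Up, tgt_rev]
  exact hb.asymm

lemma Generic.up_rev_iff (hS : S.Generic) (b : B) : S.Up (S.rev b) ↔ ¬S.Up b :=
  ⟨fun h hb => hb.not_up_rev h, (hS.up_or_up_rev b).resolve_left⟩

lemma abscissa_mem_segment (hb : S.Up b) {h : ℝ} (hh : h ∈ Set.Icc (S.src b).2 (S.tgt b).2) :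
    (S.abscissa b h, h) ∈ segment ℝ (S.src b) (S.tgt b) := by
  have hpos := sub_pos.2 hb
  rw [segment_eq_image']
  refine ⟨(h - (S.src b).2) / ((S.tgt b).2 - (S.src b).2),
    ⟨div_nonneg (sub_nonneg.2 hh.1) hpos.le, (div_le_one hpos).2 (by linarith [hh.2])⟩, ?_⟩
  ext
  · simp [abscissa, slope]
    ring
  · simp [div_mul_cancel₀ _ hpos.ne']

lemma eq_endpoint_of_abscissa_eq (ha : S.Up a) (hb : S.Up b) (hab : b ≠ a) {h : ℝ}
    (hha : h ∈ Set.Icc (S.src a).2 (S.tgt a).2) (hhb : h ∈ Set.Icc (S.src b).2 (S.tgt b).2)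
    (heq : S.abscissa b h = S.abscissa a h) :
    (h = (S.src a).2 ∨ h = (S.tgt a).2) ∧ (h = (S.src b).2 ∨ h = (S.tgt b).2) := by
  have hrev : b ≠ S.rev a := fun h => ha.not_up_rev (h ▸ hb)
  have := S.noncross a b hab hrev
    ⟨abscissa_mem_segment ha hha, heq ▸ abscissa_mem_segment hb hhb⟩
  simp only [Set.mem_inter_iff, Set.mem_insert_iff, Set.mem_singleton_iff, Prod.ext_iff] at this
  exact this.imp (Or.imp And.right And.right) (Or.imp And.right And.right)

section Overlap

variable (ha : S.Up a) (hb : S.Up b)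

include ha hb

lemma midHeight_mem_Ioo (h₁ : (S.src a).2 < (S.tgt b).2) (h₂ : (S.src b).2 < (S.tgt a).2) :
    S.midHeight a b ∈ Set.Ioo (S.src a).2 (S.tgt a).2 ∩ Set.Ioo (S.src b).2 (S.tgt b).2 := by
  have h : max (S.src a).2 (S.src b).2 < min (S.tgt a).2 (S.tgt b).2 :=
    max_lt (lt_min ha h₁) (lt_min h₂ hb)
  have hlo := left_lt_add_div_two.2 h
  have hhi := add_div_two_lt_right.2 h
  rw [max_lt_iff] at hlo
  rw [lt_min_iff] at hhi
  exact ⟨⟨hlo.1, hhi.1⟩, ⟨hlo.2, hhi.2⟩⟩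

lemma abscissa_lt_abscissa_iff (hab : b ≠ a) {h : ℝ} (hha : h ∈ Set.Icc (S.src a).2 (S.tgt a).2)
    (hhb : h ∈ Set.Icc (S.src b).2 (S.tgt b).2)
    (hend : (h ≠ (S.src a).2 ∧ h ≠ (S.tgt a).2) ∨ (h ≠ (S.src b).2 ∧ h ≠ (S.tgt b).2)) :
    S.abscissa b h < S.abscissa a h ↔ S.LeftOf b a := by
  set m := S.midHeight a b
  obtain ⟨hma, hmb⟩ : m ∈ Set.Ioo (S.src a).2 (S.tgt a).2 ∩ Set.Ioo (S.src b).2 (S.tgt b).2 := by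
    refine midHeight_mem_Ioo ha hb ?_ ?_ <;> grind
  have hne : ∀ x ∈ Set.uIcc h m, S.abscissa a x - S.abscissa b x ≠ 0 := by
    intro x hx h0
    have hxa := Set.uIcc_subset_Icc hha (Set.Ioo_subset_Icc_self hma) hx
    have hxb := Set.uIcc_subset_Icc hhb (Set.Ioo_subset_Icc_self hmb) hx
    have := eq_endpoint_of_abscissa_eq ha hb hab hxa hxb (by linarith)
    rw [Set.mem_uIcc] at hx
    grind
  have hcont : ContinuousOn (fun x => S.abscissa a x - S.abscissa b x) (Set.uIcc h m) := by
    unfold abscissa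
    fun_prop
  have hivt := intermediate_value_uIcc hcont
  rw [LeftOf, ← sub_pos, ← sub_pos (a := S.abscissa a _)]
  by_contra hcon
  obtain ⟨x, hx, hx0⟩ : (0 : ℝ) ∈ (fun x => S.abscissa a x - S.abscissa b x) '' Set.uIcc h m := by
    apply hivt
    rw [Set.mem_uIcc]
    grind
  exact hne x hx hx0

lemma slope_lt_slope_iff_of_src_eq (h : S.src b = S.src a) :
    S.slope b < S.slope a ↔ S.LeftOf b a := by
  obtain ⟨hm, -⟩ := midHeight_mem_Ioo ha hb (h ▸ hb) (h ▸ ha)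
  rw [LeftOf, abscissa, abscissa, h, add_lt_add_iff_left, mul_lt_mul_iff_left₀ (sub_pos.2 hm.1)]

lemma slope_lt_slope_iff_of_tgt_eq (h : S.tgt b = S.tgt a) :
    S.slope a < S.slope b ↔ S.LeftOf b a := by
  obtain ⟨hm, -⟩ := midHeight_mem_Ioo ha hb (h ▸ ha) (h ▸ hb)
  rw [LeftOf, abscissa_eq_tgt_add ha, abscissa_eq_tgt_add hb, h, add_lt_add_iff_left,
    mul_lt_mul_right_of_neg (sub_neg.2 hm.2)]

end Overlap

-- Both sides vanish unless `b` is to the left of `a`; then this is an identity about two intervals.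
open Classical in
lemma crossing_indicators_eq (hS : S.Generic) (ha : S.Up a) (hb : S.Up b) :
    ((if (S.src a).2 ∈ Set.Ioo (S.src b).2 (S.tgt b).2 ∧ S.abscissa b (S.src a).2 < (S.src a).1
        then 1 else 0) +
      (if S.src b = S.src a ∧ S.slope b < S.slope a then 1 else 0) -
      (if (S.tgt a).2 ∈ Set.Ioo (S.src b).2 (S.tgt b).2 ∧ S.abscissa b (S.tgt a).2 < (S.tgt a).1
        then 1 else 0) -
      (if S.tgt b = S.tgt a ∧ S.slope a < S.slope b then 1 else 0) : ℝ) =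
    (if (S.tgt b).2 ∈ Set.Ioo (S.src a).2 (S.tgt a).2 ∧ (S.tgt b).1 < S.abscissa a (S.tgt b).2
        then 1 else 0) -
      (if (S.src b).2 ∈ Set.Ioo (S.src a).2 (S.tgt a).2 ∧ (S.src b).1 < S.abscissa a (S.src b).2
        then 1 else 0) := by
  rcases eq_or_ne b a with rfl | hab
  · simp
  have h₁ (h : (S.src a).2 ∈ Set.Ioo (S.src b).2 (S.tgt b).2) :
      S.abscissa b (S.src a).2 < (S.src a).1 ↔ S.LeftOf b a := by
    rw [← abscissa_lt_abscissa_iff ha hb hab (h := (S.src a).2) ⟨le_rfl, ha.le⟩ ⟨h.1.le, h.2.le⟩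
      (.inr ⟨h.1.ne', h.2.ne⟩), abscissa_src]
  have h₂ (h : (S.tgt a).2 ∈ Set.Ioo (S.src b).2 (S.tgt b).2) :
      S.abscissa b (S.tgt a).2 < (S.tgt a).1 ↔ S.LeftOf b a := by
    rw [← abscissa_lt_abscissa_iff ha hb hab (h := (S.tgt a).2) ⟨ha.le, le_rfl⟩ ⟨h.1.le, h.2.le⟩
      (.inr ⟨h.1.ne', h.2.ne⟩), abscissa_tgt ha]
  have h₃ (h : (S.src b).2 ∈ Set.Ioo (S.src a).2 (S.tgt a).2) :
      (S.src b).1 < S.abscissa a (S.src b).2 ↔ S.LeftOf b a := by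
    rw [← abscissa_lt_abscissa_iff ha hb hab (h := (S.src b).2) ⟨h.1.le, h.2.le⟩ ⟨le_rfl, hb.le⟩
      (.inl ⟨h.1.ne', h.2.ne⟩), abscissa_src]
  have h₄ (h : (S.tgt b).2 ∈ Set.Ioo (S.src a).2 (S.tgt a).2) :
      (S.tgt b).1 < S.abscissa a (S.tgt b).2 ↔ S.LeftOf b a := by
    rw [← abscissa_lt_abscissa_iff ha hb hab (h := (S.tgt b).2) ⟨h.1.le, h.2.le⟩ ⟨hb.le, le_rfl⟩
      (.inl ⟨h.1.ne', h.2.ne⟩), abscissa_tgt hb]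
  have hsrc : S.src b = S.src a ↔ (S.src b).2 = (S.src a).2 := ⟨fun h => by rw [h], hS _ _⟩
  have htgt : S.tgt b = S.tgt a ↔ (S.tgt b).2 = (S.tgt a).2 := ⟨fun h => by rw [h], hS _ _⟩
  simp only [and_congr_right h₁, and_congr_right h₂, and_congr_right h₃, and_congr_right h₄,
    and_congr_right (slope_lt_slope_iff_of_src_eq ha hb),
    and_congr_right (slope_lt_slope_iff_of_tgt_eq ha hb)]
  have ha : (S.src a).2 < (S.tgt a).2 := ha
  have hb : (S.src b).2 < (S.tgt b).2 := hb
  by_cases hL : S.LeftOf b a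
  · simp only [hL, and_true, hsrc, htgt, Set.mem_Ioo]
    grind
  · simp [hL]

section Flow

variable [Fintype B] {z : B → ℝ}

open Classical in
/-- The total weight of the upward segments passing to the left of the point `p`. -/
noncomputable def leftFlow (S : SegmentSystem B) (z : B → ℝ) (p : ℝ × ℝ) : ℝ :=
  ∑ b with S.Up b ∧ p.2 ∈ Set.Ioo (S.src b).2 (S.tgt b).2 ∧ S.abscissa b p.2 < p.1, z b

open Classical in
lemma Generic.sum_eq_sum_up (hS : S.Generic) (f : B → ℝ) :
    ∑ b, f b = ∑ b with S.Up b, (f b + f (S.rev b)) := by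
  rw [Finset.sum_add_distrib, ← Finset.sum_filter_add_sum_filter_not _ S.Up f]
  congr 1
  exact Finset.sum_bij' (fun b _ => S.rev b) (fun b _ => S.rev b)
    (by simp [hS.up_rev_iff]) (by simp [hS.up_rev_iff]) (by simp [S.rev_rev])
    (by simp [S.rev_rev]) (by simp [S.rev_rev])

open Classical in
lemma sum_up_sub_mul_eq_zero (hS : S.Generic) (hz : IsCirculation S.src S.rev z)
    (w : ℝ × ℝ → ℝ) : ∑ b with S.Up b, (w (S.tgt b) - w (S.src b)) * z b = 0 := by
  have h := hz.sum_base_mul_eq_zero w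
  rw [hS.sum_eq_sum_up, ← neg_eq_zero, ← Finset.sum_neg_distrib] at h
  rw [← h]
  refine Finset.sum_congr rfl fun b _ => ?_
  rw [hz.apply_rev, src_rev]
  ring

open Classical in
lemma leftFlow_src_add_eq (hS : S.Generic) (hz : IsCirculation S.src S.rev z) (ha : S.Up a) :
    S.leftFlow z (S.src a) + ∑ b with S.Up b ∧ S.src b = S.src a ∧ S.slope b < S.slope a, z b =
      S.leftFlow z (S.tgt a) +
        ∑ b with S.Up b ∧ S.tgt b = S.tgt a ∧ S.slope a < S.slope b, z b := by
  have h := sum_up_sub_mul_eq_zero hS hz fun p =>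
    if p.2 ∈ Set.Ioo (S.src a).2 (S.tgt a).2 ∧ p.1 < S.abscissa a p.2 then 1 else 0
  rw [Finset.sum_congr rfl fun b hb => congrArg (· * z b)
    (crossing_indicators_eq hS ha (Finset.mem_filter.1 hb).2).symm] at h
  simp only [add_mul, sub_mul, Finset.sum_add_distrib, Finset.sum_sub_distrib, ite_mul, one_mul,
    zero_mul, ← Finset.sum_filter, Finset.filter_filter] at h
  unfold leftFlow
  linarith

end Flow

section Rotation

lemma eq_of_slope_eq (ha : S.Up a) (hb : S.Up b) (hslope : S.slope b = S.slope a)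
    (h : S.src b = S.src a ∨ S.tgt b = S.tgt a) : b = a := by
  by_contra hab
  have habs : S.abscissa b (S.midHeight a b) = S.abscissa a (S.midHeight a b) := by
    rcases h with h | h
    · rw [abscissa, abscissa, h, hslope]
    · rw [abscissa_eq_tgt_add ha, abscissa_eq_tgt_add hb, h, hslope]
  obtain ⟨hma, hmb⟩ := midHeight_mem_Ioo ha hb (by grind [Up]) (by grind [Up])
  have := eq_endpoint_of_abscissa_eq ha hb hab (Set.Ioo_subset_Icc_self hma)
    (Set.Ioo_subset_Icc_self hmb) habs
  grind

open Classical in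
/-- The position of a segment in the clockwise order around its source: first the segments directed
upwards, from left to right, then those directed downwards, from right to left. -/
noncomputable def key (S : SegmentSystem B) (b : B) : Bool ×ₗ ℝ :=
  toLex (!decide (S.Up b), S.slope b)

lemma key_lt_key_iff :
    S.key a < S.key b ↔ S.Up a ∧ ¬S.Up b ∨ (S.Up a ↔ S.Up b) ∧ S.slope a < S.slope b := by
  simp [key, Prod.Lex.toLex_lt_toLex, Bool.lt_iff]

lemma Generic.eq_of_key_eq (hS : S.Generic) (hsrc : S.src b = S.src a)
    (hkey : S.key b = S.key a) : b = a := by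
  obtain ⟨hup, hslope⟩ : (S.Up b ↔ S.Up a) ∧ S.slope b = S.slope a := by simpa [key] using hkey
  by_cases ha : S.Up a
  · exact eq_of_slope_eq ha (hup.2 ha) hslope (.inl hsrc)
  · have hrev : S.rev b = S.rev a := eq_of_slope_eq ((hS.up_rev_iff a).2 ha)
      ((hS.up_rev_iff b).2 (hup.not.2 ha)) (by simpa) (.inr (by simpa))
    rw [← S.rev_rev b, hrev, S.rev_rev]

variable [Fintype B] {z : B → ℝ}

open Classical in
lemma sum_key_lt_of_up (hb : S.Up b) :
    ∑ b' with S.src b' = S.src b ∧ S.key b' < S.key b, z b' =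
      ∑ b' with S.Up b' ∧ S.src b' = S.src b ∧ S.slope b' < S.slope b, z b' := by
  refine Finset.sum_congr (Finset.filter_congr fun b' _ => ?_) fun _ _ => rfl
  simp only [key_lt_key_iff, hb]
  tauto

open Classical in
lemma sum_key_lt_rev_of_up (hS : S.Generic) (hz : IsCirculation S.src S.rev z) (hb : S.Up b) :
    ∑ b' with S.src b' = S.src (S.rev b) ∧ S.key b' < S.key (S.rev b), z b' =
      ∑ b' with S.Up b' ∧ S.tgt b' = S.tgt b ∧ S.slope b < S.slope b', z b' + z b := by
  have hw := sum_up_sub_mul_eq_zero hS hz fun p => if p = S.tgt b then 1 else 0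
  have hterm (c : B) (hc : S.Up c) :
      ((if S.src c = S.src (S.rev b) ∧ S.key c < S.key (S.rev b) then z c else 0) +
        if S.src (S.rev c) = S.src (S.rev b) ∧ S.key (S.rev c) < S.key (S.rev b)
          then z (S.rev c) else 0) =
      ((if S.tgt c = S.tgt b ∧ S.slope b < S.slope c then z c else 0) + if c = b then z c else 0) -
        ((if S.tgt c = S.tgt b then 1 else 0) - if S.src c = S.tgt b then 1 else 0) * z c := by
    have hcb (h : S.tgt c = S.tgt b) : S.slope c = S.slope b ↔ c = b :=
      ⟨fun hs => eq_of_slope_eq hb hc hs (.inr h), fun h => h ▸ rfl⟩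
    simp only [key_lt_key_iff, hc, hb.not_up_rev, hc.not_up_rev, hz.apply_rev, src_rev, slope_rev]
    grind
  rw [Finset.sum_filter, hS.sum_eq_sum_up,
    Finset.sum_congr rfl fun c hc => hterm c (Finset.mem_filter.1 hc).2, Finset.sum_sub_distrib,
    hw, sub_zero, Finset.sum_add_distrib, ← Finset.sum_filter, Finset.filter_filter]
  simp [hb]

open Classical in
/-- The potential in the sector before the segment `b` in the clockwise order around its source. -/
noncomputable def potential (S : SegmentSystem B) (z : B → ℝ) (b : B) : ℝ :=
  S.leftFlow z (S.src b) + ∑ b' with S.src b' = S.src b ∧ S.key b' < S.key b, z b'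

lemma potential_rev (hS : S.Generic) (hz : IsCirculation S.src S.rev z) (b : B) :
    S.potential z (S.rev b) = S.potential z b + z b := by
  have hup {b : B} (hb : S.Up b) : S.potential z (S.rev b) = S.potential z b + z b := by
    have hflow := leftFlow_src_add_eq hS hz hb
    have hbefore := sum_key_lt_of_up (z := z) hb
    have hbefore_rev := sum_key_lt_rev_of_up hS hz hb
    rw [potential, potential, src_rev]
    rw [src_rev] at hbefore_rev
    linarith
  rcases hS.up_or_up_rev b with hb | hb
  · exact hup hb
  · have h := hup hb
    rw [S.rev_rev, hz.apply_rev] at h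
    linarith

lemma Generic.exists_isSphericalRotation (hS : S.Generic) :
    ∃ σ, IsSphericalRotation S.src S.rev σ := by
  have hkey (b b' : B) (h : S.src b = S.src b') : S.key b = S.key b' → b = b' := hS.eq_of_key_eq h
  obtain ⟨σ, hσ⟩ := exists_isCyclicSucc hkey
  refine ⟨σ, hσ.sameCycle_iff hkey, fun z hz =>
    ⟨S.potential z, fun b => ⟨potential_rev hS hz b, ?_⟩⟩⟩
  have hbase := (hσ b).1
  have hsum := hσ.sum_lt_apply hkey b (hz.sum_eq_zero b)
  rw [hbase] at hsum
  rw [potential, potential, hbase, add_assoc]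
  congr 1
  convert hsum

end Rotation

/-- The image of a system of segments under an injective linear map. -/
def map (S : SegmentSystem B) (e : ℝ × ℝ →ₗ[ℝ] ℝ × ℝ) (he : Function.Injective e) :
    SegmentSystem B where
  src b := e (S.src b)
  rev := S.rev
  rev_rev := S.rev_rev
  src_rev_ne b := he.ne (S.src_rev_ne b)
  noncross b b' h h' := by
    have hseg (p q : ℝ × ℝ) : e '' segment ℝ p q = segment ℝ (e p) (e q) :=
      image_segment ℝ e.toAffineMap p q
    simpa only [Set.image_inter he, Set.image_pair, hseg] using
      Set.image_mono (f := e) (S.noncross b b' h h')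

lemma exists_generic_map [Finite B] (S : SegmentSystem B) :
    ∃ e : ℝ × ℝ →ₗ[ℝ] ℝ × ℝ, ∃ he : Function.Injective e, (S.map e he).Generic := by
  let bad (b b' : B) : ℝ := ((S.src b').2 - (S.src b).2) / ((S.src b).1 - (S.src b').1)
  obtain ⟨c, hc⟩ := (Set.finite_range fun q : B × B => bad q.1 q.2).exists_notMem
  refine ⟨(LinearMap.fst ℝ ℝ ℝ).prod (LinearMap.snd ℝ ℝ ℝ + c • LinearMap.fst ℝ ℝ ℝ), ?_, ?_⟩
  · rintro ⟨x, y⟩ ⟨x', y'⟩ h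
    simp only [LinearMap.prod_apply, Function.prod_apply, LinearMap.fst_apply, LinearMap.add_apply,
      LinearMap.snd_apply, LinearMap.smul_apply, smul_eq_mul, Prod.mk.injEq] at h
    obtain ⟨rfl, h⟩ := h
    rw [add_left_injective _ h]
  · intro b b' h
    have h : (S.src b).2 + c * (S.src b).1 = (S.src b').2 + c * (S.src b').1 := h
    have hx : (S.src b).1 = (S.src b').1 := by
      by_contra hne
      exact hc ⟨(b, b'), (div_eq_iff (sub_ne_zero.2 hne)).2 (by linarith)⟩
    have hy : (S.src b).2 = (S.src b').2 := by rw [hx] at h; exact add_left_injective _ h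
    exact congrArg (LinearMap.prod _ _) (Prod.ext hx hy)

theorem exists_isSphericalRotation [Fintype B] (S : SegmentSystem B) :
    ∃ σ, IsSphericalRotation S.src S.rev σ := by
  obtain ⟨e, he, hgen⟩ := S.exists_generic_map
  obtain ⟨σ, hσ⟩ := hgen.exists_isSphericalRotation
  refine ⟨σ, fun b b' => (hσ.sameCycle_iff b b').trans he.eq_iff, fun z hz => ?_⟩
  refine hσ.exists_potential z ⟨hz.apply_rev, fun b => ?_⟩
  convert hz.sum_eq_zero b using 3
  exact he.eq_iff

end SegmentSystem

/-! ### The rotation system of a planar drawing -/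

lemma exists_perm_comp_eq {D B P : Type*} [Finite B] {base : B → P} {ρ : Equiv.Perm B}
    (hρ : ∀ b b', ρ.SameCycle b b' ↔ base b = base b') {f : D → B} (hf : Function.Injective f)
    (hrange : ∀ d b, base b = base (f d) → b ∈ Set.range f) :
    ∃ σ : Equiv.Perm D, (∀ d, f (σ d) = ρ (f d)) ∧
      ∀ d d', σ.SameCycle d d' ↔ base (f d) = base (f d') := by
  have hmem (b : B) : ρ b ∈ Set.range f ↔ b ∈ Set.range f := by
    have hbase : base b = base (ρ b) := (hρ _ _).1 (Equiv.Perm.sameCycle_apply_right.2 (.refl _ _))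
    constructor
    · rintro ⟨d, hd⟩
      exact hrange d b (by rw [hd, hbase])
    · rintro ⟨d, rfl⟩
      exact hrange d _ hbase.symm
  let e := Equiv.ofInjective f hf
  let σ : Equiv.Perm D := e.symm.permCongr (ρ.subtypePerm hmem)
  have hσ (d : D) : f (σ d) = ρ (f d) := Equiv.apply_ofInjective_symm hf _
  have hpow (n : ℕ) (d : D) : f ((σ ^ n) d) = (ρ ^ n) (f d) := by
    rw [Equiv.Perm.coe_pow, Equiv.Perm.coe_pow]
    exact Function.Semiconj.iterate_right hσ n d
  have := Finite.of_injective f hf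
  refine ⟨σ, hσ, fun d d' => (Iff.intro ?_ ?_).trans (hρ _ _)⟩
  · intro h
    obtain ⟨n, rfl⟩ := h.exists_nat_pow_eq
    exact ⟨n, (hpow n d).symm⟩
  · intro h
    obtain ⟨n, hn⟩ := h.exists_nat_pow_eq
    exact ⟨n, hf ((hpow n d).trans hn)⟩

namespace PolyDrawing

variable {V : Type*} {G : SimpleGraph V} (D : PolyDrawing G)

open Classical in
/-- The polyline of the edge of a dart, traversed from the tail of the dart to its head. -/
noncomputable def dartPoly (d : G.Dart) : Polyline :=
  if (D.poly d.edge).pt 0 = D.pos d.fst then D.poly d.edge else (D.poly d.edge).reverse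

variable {D}

lemma pos_fst_ne_pos_snd (d : G.Dart) : D.pos d.fst ≠ D.pos d.snd := D.inj.ne d.adj.ne

lemma pt_zero_and_pt_len (d : G.Dart) :
    ((D.poly d.edge).pt 0 = D.pos d.fst ∧ (D.poly d.edge).pt (D.poly d.edge).len = D.pos d.snd) ∨
    ((D.poly d.edge).pt 0 = D.pos d.snd ∧ (D.poly d.edge).pt (D.poly d.edge).len = D.pos d.fst) :=
  Set.pair_eq_pair_iff.1 (D.ends d.fst d.snd d.adj)

lemma dartPoly_len (d : G.Dart) : (D.dartPoly d).len = (D.poly d.edge).len := by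
  rw [dartPoly]
  split_ifs <;> rfl

lemma dartPoly_image (d : G.Dart) : (D.dartPoly d).image = (D.poly d.edge).image := by
  rw [dartPoly]
  split_ifs
  · rfl
  · exact Polyline.image_reverse _

lemma IsPlanar.simple_dartPoly (hD : D.IsPlanar) (d : G.Dart) : (D.dartPoly d).Simple := by
  rw [dartPoly]
  split_ifs
  · exact hD.1 _ d.edge_mem
  · exact (hD.1 _ d.edge_mem).reverse

lemma dartPoly_symm_len (d : G.Dart) : (D.dartPoly d.symm).len = (D.dartPoly d).len := by
  rw [dartPoly_len, dartPoly_len, SimpleGraph.Dart.edge_symm]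

lemma dartPoly_pt_zero (d : G.Dart) : (D.dartPoly d).pt 0 = D.pos d.fst := by
  rw [dartPoly]
  split_ifs with h
  · exact h
  · exact ((pt_zero_and_pt_len d).resolve_left fun h' => h h'.1).2

lemma dartPoly_symm_pt (d : G.Dart) {i : ℕ} (hi : i ≤ (D.dartPoly d).len) :
    (D.dartPoly d.symm).pt i = (D.dartPoly d).pt ((D.dartPoly d).len - i) := by
  have hiff : (D.poly d.edge).pt 0 = D.pos d.snd ↔ (D.poly d.edge).pt 0 ≠ D.pos d.fst := by
    have := pos_fst_ne_pos_snd (D := D) d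
    rcases pt_zero_and_pt_len (D := D) d with h | h <;> rw [h.1] <;> tauto
  rw [dartPoly_len] at hi ⊢
  rw [dartPoly, dartPoly, SimpleGraph.Dart.edge_symm]
  simp only [SimpleGraph.Dart.symm, Prod.fst_swap, hiff, ne_eq, ite_not]
  split_ifs
  · rfl
  · simp only [Polyline.reverse, Nat.sub_sub_self hi]

lemma dartPoly_pt_len (d : G.Dart) : (D.dartPoly d).pt (D.dartPoly d).len = D.pos d.snd := by
  simpa [dartPoly_pt_zero] using (dartPoly_symm_pt (D := D) d (Nat.zero_le _)).symm

lemma IsPlanar.pos_mem_seg (hD : D.IsPlanar) {d : G.Dart} {i : ℕ} (hi : i < (D.dartPoly d).len)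
    {w : V} (hw : D.pos w ∈ (D.dartPoly d).seg i) :
    i = 0 ∧ w = d.fst ∨ i + 1 = (D.dartPoly d).len ∧ w = d.snd := by
  have himage : D.pos w ∈ (D.poly d.edge).image := by
    rw [← dartPoly_image]
    exact Polyline.mem_image_iff.2 ⟨i, hi, hw⟩
  have hends : D.pos w ∈ ({D.pos d.fst, D.pos d.snd} : Set (ℝ × ℝ)) :=
    hD.2.1 d.fst d.snd d.adj ▸ ⟨himage, w, rfl⟩
  rw [Set.mem_insert_iff, Set.mem_singleton_iff, D.inj.eq_iff, D.inj.eq_iff] at hends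
  rcases hends with rfl | rfl
  · rw [← dartPoly_pt_zero] at hw
    have := (hD.simple_dartPoly d).eq_or_eq_of_pt_mem_seg hi (Nat.zero_le _) hw
    exact .inl ⟨by lia, rfl⟩
  · rw [← dartPoly_pt_len] at hw
    have := (hD.simple_dartPoly d).eq_or_eq_of_pt_mem_seg hi le_rfl hw
    exact .inr ⟨by lia, rfl⟩

lemma IsPlanar.exists_pos_of_edge_ne (hD : D.IsPlanar) {d d' : G.Dart} (h : d'.edge ≠ d.edge)
    {i i' : ℕ} (hi : i < (D.dartPoly d).len) (hi' : i' < (D.dartPoly d').len) {p : ℝ × ℝ}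
    (hp : p ∈ (D.dartPoly d).seg i) (hp' : p ∈ (D.dartPoly d').seg i') : ∃ w, p = D.pos w := by
  have hmem {d : G.Dart} {i : ℕ} (hi : i < (D.dartPoly d).len) (hp : p ∈ (D.dartPoly d).seg i) :
      p ∈ (D.poly d.edge).image := by
    rw [← dartPoly_image]
    exact Polyline.mem_image_iff.2 ⟨i, hi, hp⟩
  obtain ⟨w, -, hw⟩ := hD.2.2 _ d.edge_mem _ d'.edge_mem h.symm ⟨hmem hi hp, hmem hi' hp'⟩
  exact ⟨w, hw.symm⟩

variable (D)

/-- The directed segments of a drawing: `(d, i)` is the `i`-th segment of the dart `d`. -/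
abbrev DartSeg : Type _ := {b : G.Dart × ℕ // b.2 < (D.dartPoly b.1).len}

variable {D}

namespace DartSeg

/-- The starting point of a directed segment. -/
noncomputable def src (b : D.DartSeg) : ℝ × ℝ := (D.dartPoly b.1.1).pt b.1.2

/-- The same segment in the opposite direction. -/
noncomputable def rev (b : D.DartSeg) : D.DartSeg :=
  ⟨(b.1.1.symm, (D.dartPoly b.1.1).len - 1 - b.1.2), by
    have := (D.dartPoly b.1.1).len_pos
    rw [dartPoly_symm_len]
    lia⟩

lemma rev_rev (b : D.DartSeg) : b.rev.rev = b := by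
  have := b.2
  refine Subtype.ext (Prod.ext (SimpleGraph.Dart.symm_symm _) ?_)
  change (D.dartPoly b.1.1.symm).len - 1 - ((D.dartPoly b.1.1).len - 1 - b.1.2) = b.1.2
  rw [dartPoly_symm_len]
  lia

lemma src_rev (b : D.DartSeg) : b.rev.src = (D.dartPoly b.1.1).pt (b.1.2 + 1) := by
  have := b.2
  rw [src, rev, dartPoly_symm_pt _ (by lia)]
  congr 1
  lia

lemma segment_src_rev (b : D.DartSeg) :
    segment ℝ b.src b.rev.src = (D.dartPoly b.1.1).seg b.1.2 := by
  rw [src_rev, src, Polyline.seg]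

lemma src_rev_ne (hD : D.IsPlanar) (b : D.DartSeg) : b.rev.src ≠ b.src := by
  rw [src_rev, src, Ne, ((hD.simple_dartPoly b.1.1).pt_injOn).eq_iff b.2 b.2.le]
  lia

lemma pos_mem_pair (hD : D.IsPlanar) {b : D.DartSeg} {w : V}
    (hw : D.pos w ∈ segment ℝ b.src b.rev.src) : D.pos w ∈ ({b.src, b.rev.src} : Set (ℝ × ℝ)) := by
  rw [segment_src_rev] at hw
  rw [src_rev, src]
  rcases hD.pos_mem_seg b.2 hw with ⟨h, rfl⟩ | ⟨h, rfl⟩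
  · rw [h, dartPoly_pt_zero]
    exact .inl rfl
  · rw [h, dartPoly_pt_len]
    exact .inr rfl

lemma inter_subset_of_dart_eq (hD : D.IsPlanar) {b b' : D.DartSeg} (hne : b' ≠ b)
    (hdart : b'.1.1 = b.1.1) :
    segment ℝ b.src b.rev.src ∩ segment ℝ b'.src b'.rev.src ⊆
      {b.src, b.rev.src} ∩ {b'.src, b'.rev.src} := by
  obtain ⟨⟨d, i⟩, hi⟩ := b
  obtain ⟨⟨d', j⟩, hj⟩ := b'
  obtain rfl : d' = d := hdart
  have hij : i ≠ j := by
    rintro rfl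
    exact hne rfl
  rw [segment_src_rev, segment_src_rev, src_rev, src_rev]
  exact (hD.simple_dartPoly d').seg_inter_seg_subset hij hi hj

lemma noncross (hD : D.IsPlanar) {b b' : D.DartSeg} (hne : b' ≠ b) (hne' : b' ≠ b.rev) :
    segment ℝ b.src b.rev.src ∩ segment ℝ b'.src b'.rev.src ⊆
      {b.src, b.rev.src} ∩ {b'.src, b'.rev.src} := by
  by_cases hedge : b'.1.1.edge = b.1.1.edge
  · rcases SimpleGraph.dart_edge_eq_iff _ _ |>.1 hedge with h | h
    · exact inter_subset_of_dart_eq hD hne h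
    · have hrev : b'.rev ≠ b := fun h' => hne' (by rw [← h', rev_rev])
      have hsymm : b'.rev.1.1 = b.1.1 := by simp [rev, h]
      have := inter_subset_of_dart_eq hD hrev hsymm
      rwa [rev_rev, segment_symm ℝ b'.rev.src, Set.pair_comm b'.rev.src] at this
  · rintro p ⟨hp, hp'⟩
    obtain ⟨w, rfl⟩ := hD.exists_pos_of_edge_ne hedge b.2 b'.2
      (segment_src_rev b ▸ hp) (segment_src_rev b' ▸ hp')
    exact ⟨pos_mem_pair hD hp, pos_mem_pair hD hp'⟩

lemma src_eq_pos (hD : D.IsPlanar) {b : D.DartSeg} {w : V} (h : b.src = D.pos w) :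
    b.1.2 = 0 ∧ w = b.1.1.fst := by
  have hw : D.pos w ∈ (D.dartPoly b.1.1).seg b.1.2 := by
    rw [← segment_src_rev, ← h]
    exact left_mem_segment ..
  refine (hD.pos_mem_seg b.2 hw).resolve_right fun ⟨hlen, hsnd⟩ => ?_
  apply src_rev_ne hD b
  rw [src_rev, hlen, dartPoly_pt_len, h, hsnd]

lemma eq_or_eq_rev_of_src_eq (hD : D.IsPlanar) {a b c : D.DartSeg}
    (hab : b.1 = (a.1.1, a.1.2 + 1)) (h : c.src = b.src) : c = b ∨ c = a.rev := by
  obtain ⟨⟨d, i⟩, ha⟩ := a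
  obtain ⟨b, hb⟩ := b
  obtain ⟨⟨d', j⟩, hc⟩ := c
  obtain rfl : b = (d, i + 1) := hab
  dsimp only at ha hb hc
  change (D.dartPoly d').pt j = (D.dartPoly d).pt (i + 1) at h
  have hedge : d'.edge = d.edge := by
    by_contra hedge
    obtain ⟨w, hw⟩ := hD.exists_pos_of_edge_ne hedge hb hc (left_mem_segment ..)
      (h ▸ left_mem_segment ..)
    exact Nat.succ_ne_zero i (src_eq_pos hD (b := ⟨(d, i + 1), hb⟩) hw).1
  rcases SimpleGraph.dart_edge_eq_iff _ _ |>.1 hedge with rfl | rfl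
  · have hji : j = i + 1 := (hD.simple_dartPoly _).pt_injOn hc.le hb.le h
    exact .inl (Subtype.ext (Prod.ext rfl hji))
  · rw [dartPoly_symm_len] at hc
    have hji : (D.dartPoly d).len - j = i + 1 :=
      (hD.simple_dartPoly d).pt_injOn (Nat.sub_le _ _) hb.le
        ((dartPoly_symm_pt d hc.le).symm.trans h)
    have hj : j = (D.dartPoly d).len - 1 - i := by lia
    exact .inr (Subtype.ext (Prod.ext rfl hj))

variable (D) in
/-- The first segment of a dart. -/
def first (d : G.Dart) : D.DartSeg := ⟨(d, 0), (D.dartPoly d).len_pos⟩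

lemma first_injective : Function.Injective (first D) := fun _ _ h => congrArg (·.1.1) h

lemma eq_first {b : D.DartSeg} (hb : b.1.2 = 0) : b = first D b.1.1 :=
  Subtype.ext (Prod.ext rfl hb)

lemma exists_succ {b : D.DartSeg} (hb : b.1.2 ≠ 0) :
    ∃ a : D.DartSeg, b.1 = (a.1.1, a.1.2 + 1) := by
  obtain ⟨i, hi⟩ := Nat.exists_eq_succ_of_ne_zero hb
  exact ⟨⟨(b.1.1, i), (Nat.lt_of_succ_lt (hi ▸ b.2))⟩, Prod.ext rfl hi⟩

lemma src_first (d : G.Dart) : (first D d).src = D.pos d.fst := dartPoly_pt_zero d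

lemma exists_rev_eq_first (d : G.Dart) :
    ∃ b : D.DartSeg, b.1.1 = d ∧ b.rev = first D d.symm :=
  ⟨⟨(d, (D.dartPoly d).len - 1), Nat.sub_one_lt_of_lt (D.dartPoly d).len_pos⟩, rfl,
    Subtype.ext (Prod.ext rfl (Nat.sub_self _))⟩

lemma rev_ne_of_succ {a b : D.DartSeg} (hab : b.1 = (a.1.1, a.1.2 + 1)) : a.rev ≠ b := fun h =>
  a.1.1.symm_ne ((congrArg (·.1.1) h).trans (congrArg Prod.fst hab))

lemma src_rev_eq_of_succ {a b : D.DartSeg} (hab : b.1 = (a.1.1, a.1.2 + 1)) :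
    a.rev.src = b.src := by
  rw [src_rev, src, hab]

instance [Finite G.Dart] : Finite D.DartSeg :=
  Finite.of_surjective
    (fun x : Σ d : G.Dart, Fin (D.dartPoly d).len => (⟨(x.1, x.2), x.2.2⟩ : D.DartSeg))
    fun b => ⟨⟨b.1.1, b.1.2, b.2⟩, rfl⟩

lemma apply_eq_rev_of_succ (hD : D.IsPlanar) {ρ : Equiv.Perm D.DartSeg}
    (hρ : ∀ b b', ρ.SameCycle b b' ↔ src b = src b') {a b : D.DartSeg}
    (hab : b.1 = (a.1.1, a.1.2 + 1)) : ρ b = a.rev := by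
  have hsrc : (ρ b).src = b.src :=
    (hρ _ _).1 (Equiv.Perm.sameCycle_apply_left.2 (.refl _ _))
  refine (eq_or_eq_rev_of_src_eq hD hab hsrc).resolve_left fun hfix => rev_ne_of_succ hab ?_
  exact (((hρ _ _).2 (src_rev_eq_of_succ hab).symm).eq_of_left hfix).symm

variable [Fintype G.Dart] [Fintype D.DartSeg]

lemma isCirculation (hD : D.IsPlanar) {z : G.Dart → ℝ}
    (hz : IsCirculation (fun d : G.Dart => d.fst) SimpleGraph.Dart.symm z) :
    IsCirculation src rev fun b : D.DartSeg => z b.1.1 where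
  apply_rev b := hz.apply_rev b.1.1
  sum_eq_zero b := by
    classical
    suffices ∑ c : D.DartSeg with c.src = b.src, z c.1.1 = 0 by convert this
    by_cases hb : b.1.2 = 0
    · have hfilter : Finset.univ.filter (fun c : D.DartSeg => c.src = b.src) =
          (Finset.univ.filter fun d : G.Dart => d.fst = b.1.1.fst).map
            ⟨first D, first_injective⟩ := by
        ext c
        rw [eq_first hb, src_first]
        simp only [Finset.mem_filter_univ, Finset.mem_map, Function.Embedding.coeFn_mk]
        constructor
        · intro hc
          obtain ⟨hc0, hfst⟩ := src_eq_pos hD hc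
          exact ⟨c.1.1, hfst.symm, (eq_first hc0).symm⟩
        · rintro ⟨d, hd, rfl⟩
          rw [src_first, hd]
          rfl
      rw [hfilter, Finset.sum_map]
      exact hz.sum_eq_zero b.1.1
    · obtain ⟨a, hab⟩ := exists_succ hb
      have hfilter : Finset.univ.filter (fun c : D.DartSeg => c.src = b.src) = {a.rev, b} := by
        ext c
        simp only [Finset.mem_filter_univ, Finset.mem_insert, Finset.mem_singleton]
        refine ⟨fun hc => (eq_or_eq_rev_of_src_eq hD hab hc).symm, ?_⟩
        rintro (rfl | rfl)
        exacts [src_rev_eq_of_succ hab, rfl]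
      rw [hfilter, Finset.sum_pair (rev_ne_of_succ hab), hab]
      exact (congrArg (· + _) (hz.apply_rev a.1.1)).trans (neg_add_cancel _)

end DartSeg

/-- The segments of a planar drawing. -/
noncomputable def IsPlanar.segmentSystem (hD : D.IsPlanar) : SegmentSystem D.DartSeg where
  src := DartSeg.src
  rev := DartSeg.rev
  rev_rev := DartSeg.rev_rev
  src_rev_ne := DartSeg.src_rev_ne hD
  noncross _ _ := DartSeg.noncross hD

theorem _root_.GraphPlanar.exists_isSphericalRotation [Fintype G.Dart] (hG : GraphPlanar G) :
    ∃ σ, IsSphericalRotation (fun d : G.Dart => d.fst) SimpleGraph.Dart.symm σ := by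
  obtain ⟨D, hD⟩ := hG
  let _ := Fintype.ofFinite D.DartSeg
  obtain ⟨ρ, hρ⟩ := hD.segmentSystem.exists_isSphericalRotation
  obtain ⟨σ, hσ, hcycle⟩ := exists_perm_comp_eq hρ.sameCycle_iff DartSeg.first_injective
    fun d b hb => ⟨b.1.1, .symm <| DartSeg.eq_first
      (DartSeg.src_eq_pos hD (hb.trans (DartSeg.src_first d))).1⟩
  refine ⟨σ, fun d d' => ?_, fun z hz => ?_⟩
  · rw [hcycle]
    exact (congrArg₂ Eq (DartSeg.src_first d) (DartSeg.src_first d')).to_iff.trans D.inj.eq_iff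
  obtain ⟨g, hg⟩ := hρ.exists_potential _ (DartSeg.isCirculation hD hz)
  have hsucc {a b : D.DartSeg} (hab : b.1 = (a.1.1, a.1.2 + 1)) : g b = g a := by
    have h := (hg b).2
    rw [DartSeg.apply_eq_rev_of_succ hD hρ.sameCycle_iff hab, congrArg Prod.fst hab] at h
    exact add_right_cancel (h.symm.trans (hg a).1)
  have hfirst (i : ℕ) : ∀ b : D.DartSeg, b.1.2 = i → g b = g (DartSeg.first D b.1.1) := by
    induction i with
    | zero => exact fun b hb => congrArg g (DartSeg.eq_first hb)
    | succ i ih =>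
      intro b hb
      obtain ⟨a, hab⟩ := DartSeg.exists_succ (b := b) (by lia)
      rw [hsucc hab, ih a (by simpa [hab] using hb), hab]
  refine ⟨fun d => g (DartSeg.first D d), fun d => ⟨?_, ?_⟩⟩ <;> beta_reduce
  · obtain ⟨b, rfl, hb⟩ := DartSeg.exists_rev_eq_first (D := D) d
    rw [← hb, ← hfirst _ b rfl]
    exact (hg b).1
  · rw [hσ]
    exact (hg _).2

end PolyDrawing

/-! ### st-numberings -/

section StNumbering

variable {V α : Type*} {G : SimpleGraph V} {s t : V} {S : Set V}

lemma exists_nodup_isChain_of_reflTransGen {r : V → V → Prop} {x y : V}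
    (h : Relation.ReflTransGen r x y) (hx : x ∉ S) (hy : y ∈ S) :
    ∃ L, ∃ b ∈ S, (x :: L).Nodup ∧ (x :: (L ++ [b])).IsChain r ∧ ∀ v ∈ x :: L, v ∉ S := by
  induction h using Relation.ReflTransGen.head_induction_on with
  | refl => exact absurd hy hx
  | @head x x' hxx' _ ih =>
    by_cases hx' : x' ∈ S
    · exact ⟨[], x', hx', by simp, by simpa using hxx', by simpa using hx⟩
    obtain ⟨L, b, hb, hnodup, hchain, hL⟩ := ih hx'
    by_cases hmem : x ∈ x' :: L
    · obtain ⟨l₁, l₂, heq⟩ := List.append_of_mem hmem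
      rw [← List.cons_append, heq, List.append_assoc] at hchain
      rw [heq] at hnodup hL
      exact ⟨l₂, b, hb, hnodup.of_append_right, hchain.right_of_append,
        fun v hv => hL v (List.mem_append_right _ hv)⟩
    · exact ⟨x' :: L, b, hb, List.nodup_cons.2 ⟨hmem, hnodup⟩, hchain.cons_cons hxx',
        List.forall_mem_cons.2 ⟨hx, hL⟩⟩

lemma exists_rel_of_mem_of_isChain {r : V → V → Prop} {a b v : V} {L : List V}
    (h : (a :: (L ++ [b])).IsChain r) (hv : v ∈ L) :
    (∃ u ∈ a :: L, r u v) ∧ ∃ w ∈ L ++ [b], r v w := by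
  obtain ⟨l₁, l₂, rfl⟩ := List.append_of_mem hv
  rw [List.append_assoc, List.cons_append, ← List.cons_append, List.isChain_append] at h
  obtain ⟨-, hright, hleft⟩ := h
  constructor
  · exact ⟨(a :: l₁).getLast (by simp), by grind, hleft _ (List.getLast_mem_getLast? _) v (by simp)⟩
  · exact ⟨(l₂ ++ [b]).head (by simp), by grind,
      (List.isChain_cons.1 hright).1 _ (List.head_mem_head? _)⟩

lemma exists_pairwise_lt_of_nodup [LinearOrder α] [DenselyOrdered α] (f : V → α) {x y : α}
    (hxy : x < y) {L : List V} (hL : L.Nodup) :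
    ∃ f' : V → α, (∀ v ∉ L, f' v = f v) ∧ (∀ v ∈ L, f' v ∈ Set.Ioo x y) ∧
      L.Pairwise (f' · < f' ·) := by
  classical
  induction L generalizing x with
  | nil => exact ⟨f, by simp⟩
  | cons v L ih =>
    obtain ⟨hv, hL⟩ := List.nodup_cons.1 hL
    obtain ⟨z, hxz, hzy⟩ := exists_between hxy
    obtain ⟨f', hf', hmem, hpair⟩ := ih hzy hL
    have hupdate {w : V} (hw : w ∈ L) : Function.update f' v z w = f' w :=
      Function.update_of_ne (ne_of_mem_of_not_mem hw hv) _ _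
    refine ⟨Function.update f' v z, fun w hw => ?_, ?_, ?_⟩
    · obtain ⟨hwv, hwL⟩ := not_or.1 (List.mem_cons.not.1 hw)
      rw [Function.update_of_ne hwv, hf' w hwL]
    · refine List.forall_mem_cons.2 ⟨by simpa using ⟨hxz, hzy⟩, fun w hw => ?_⟩
      rw [hupdate hw]
      exact ⟨hxz.trans (hmem w hw).1, (hmem w hw).2⟩
    · refine List.pairwise_cons.2 ⟨fun w hw => ?_, hpair.imp_of_mem fun hu hw h => ?_⟩
      · rw [Function.update_self, hupdate hw]
        exact (hmem w hw).1
      · rwa [hupdate hu, hupdate hw]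

/-- `f` is an `st`-numbering of the subgraph induced by `S`: its minimum is attained at `s`, its
maximum at `t`, and every other vertex has a lower and a higher neighbour in `S`. -/
structure IsStNumbering [LinearOrder α] (G : SimpleGraph V) (s t : V) (S : Set V) (f : V → α) :
    Prop where
  source_mem : s ∈ S
  sink_mem : t ∈ S
  injOn : Set.InjOn f S
  source_le : ∀ v ∈ S, f s ≤ f v
  le_sink : ∀ v ∈ S, f v ≤ f t
  exists_lt : ∀ v ∈ S, v ≠ s → v ≠ t → ∃ u ∈ S, G.Adj v u ∧ f u < f v
  exists_gt : ∀ v ∈ S, v ≠ s → v ≠ t → ∃ u ∈ S, G.Adj v u ∧ f v < f u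

namespace IsStNumbering

section

variable [LinearOrder α] {f : V → α}

lemma exists_gap [Finite V] {a b : V} (hb : b ∈ S) (hab : f a < f b) :
    ∃ c, f a < c ∧ c ≤ f b ∧ ∀ v ∈ S, f v ≤ f a ∨ c ≤ f v := by
  obtain ⟨v, ⟨_, hv⟩, hmin⟩ := Set.exists_min_image {v ∈ S | f a < f v} f (Set.toFinite _)
    ⟨b, hb, hab⟩
  exact ⟨f v, hv, hmin b ⟨hb, hab⟩,
    fun w hw => (le_or_gt (f w) (f a)).imp_right fun h => hmin w ⟨hw, h⟩⟩

lemma union_of_isChain (hf : IsStNumbering G s t S f) {f' : V → α} (hf' : S.EqOn f' f) {a b : V}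
    {L : List V} (ha : a ∈ S) (hb : b ∈ S) (hne : ∀ v ∈ S, ∀ w ∈ L, f' v ≠ f' w)
    (hchain : (a :: (L ++ [b])).IsChain fun u v => G.Adj u v ∧ f' u < f' v) :
    IsStNumbering G s t (S ∪ {v | v ∈ L}) f' := by
  have : IsTrans V (f' · < f' ·) := ⟨fun _ _ _ => lt_trans⟩
  have hpair := (hchain.imp fun _ _ h => h.2 : (a :: (L ++ [b])).IsChain (f' · < f' ·)).pairwise
  have ⟨hpairL, hlast⟩ := List.pairwise_append.1 hpair.of_cons
  have hmem {v : V} (hv : v ∈ L) : f a < f' v ∧ f' v < f b := by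
    rw [← hf' ha, ← hf' hb]
    exact ⟨List.rel_of_pairwise_cons hpair (List.mem_append_left _ hv),
      hlast.2 v hv b (List.mem_singleton_self b)⟩
  refine ⟨.inl hf.source_mem, .inl hf.sink_mem, ?_, ?_, ?_, ?_, ?_⟩
  · rintro v (hv | hv) w (hw | hw) h
    · exact hf.injOn hv hw (by rwa [hf' hv, hf' hw] at h)
    · exact absurd h (hne v hv w hw)
    · exact absurd h.symm (hne w hw v hv)
    · exact List.inj_on_of_nodup_map (List.pairwise_map.2 (hpairL.imp ne_of_lt)) hv hw h
  · rw [hf' hf.source_mem]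
    rintro v (hv | hv)
    · exact (hf.source_le v hv).trans_eq (hf' hv).symm
    · exact (hf.source_le a ha).trans (hmem hv).1.le
  · rw [hf' hf.sink_mem]
    rintro v (hv | hv)
    · exact (hf' hv).trans_le (hf.le_sink v hv)
    · exact (hmem hv).2.le.trans (hf.le_sink b hb)
  · rintro v (hv | hv) hvs hvt
    · obtain ⟨u, hu, hadj, hlt⟩ := hf.exists_lt v hv hvs hvt
      exact ⟨u, .inl hu, hadj, by rwa [hf' hu, hf' hv]⟩
    · obtain ⟨u, hu, hadj, hlt⟩ := (exists_rel_of_mem_of_isChain hchain hv).1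
      refine ⟨u, (List.mem_cons.1 hu).imp_left fun h => ?_, hadj.symm, hlt⟩
      rwa [h]
  · rintro v (hv | hv) hvs hvt
    · obtain ⟨u, hu, hadj, hlt⟩ := hf.exists_gt v hv hvs hvt
      exact ⟨u, .inl hu, hadj, by rwa [hf' hu, hf' hv]⟩
    · obtain ⟨u, hu, hadj, hlt⟩ := (exists_rel_of_mem_of_isChain hchain hv).2
      refine ⟨u, (List.mem_append.1 hu).symm.imp_left fun h => ?_, hadj, hlt⟩
      rwa [List.mem_singleton.1 h]

lemma exists_extend [Finite V] [DenselyOrdered α] (hf : IsStNumbering G s t S f) {a b : V}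
    {L : List V} (ha : a ∈ S) (hb : b ∈ S) (hab : f a < f b) (hnodup : L.Nodup)
    (hL : ∀ v ∈ L, v ∉ S) (hchain : (a :: (L ++ [b])).IsChain G.Adj) :
    ∃ f' : V → α, IsStNumbering G s t (S ∪ {v | v ∈ L}) f' := by
  obtain ⟨c, hac, hcb, hgap⟩ := exists_gap hb hab
  obtain ⟨f', hf', hmem, hpair⟩ := exists_pairwise_lt_of_nodup f hac hnodup
  replace hf' : S.EqOn f' f := fun v hv => hf' v fun h => hL v h hv
  refine ⟨f', hf.union_of_isChain hf' ha hb (fun v hv w hw => ?_) ?_⟩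
  · rw [hf' hv]
    rcases hgap v hv with h | h
    exacts [(h.trans_lt (hmem w hw).1).ne, ((hmem w hw).2.trans_le h).ne']
  · have hpair' : (a :: (L ++ [b])).Pairwise (f' · < f' ·) := by
      simp only [List.pairwise_cons, List.pairwise_append, List.mem_append, List.mem_singleton,
        hpair, hf' ha, hf' hb]
      grind
    rw [List.isChain_iff_getElem] at hchain ⊢
    exact fun i hi => ⟨hchain i hi, List.isChain_iff_getElem.1 hpair'.isChain i hi⟩

lemma exists_ssuperset [Finite V] [DenselyOrdered α] (hf : IsStNumbering G s t S f)
    (hst : s ≠ t) (hconn : G.Connected) (h2 : ∀ v : V, (G.induce ({v}ᶜ : Set V)).Connected)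
    (hS : S ≠ Set.univ) : ∃ S', S ⊂ S' ∧ ∃ f' : V → α, IsStNumbering G s t S' f' := by
  obtain ⟨a, ha, x, hx, hax⟩ : ∃ a ∈ S, ∃ x ∉ S, G.Adj a x := by
    obtain ⟨z, hz⟩ := (Set.ne_univ_iff_exists_notMem S).1 hS
    obtain ⟨p⟩ := hconn.preconnected s z
    obtain ⟨d, -, hfst, hsnd⟩ := p.exists_boundary_dart S hf.source_mem hz
    exact ⟨d.fst, hfst, d.snd, hsnd, d.adj⟩
  obtain ⟨y, hy, hya⟩ : ∃ y ∈ S, y ≠ a := by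
    by_cases hsa : s = a
    · exact ⟨t, hf.sink_mem, fun hta => hst (hsa.trans hta.symm)⟩
    · exact ⟨s, hf.source_mem, hsa⟩
  obtain ⟨L, b, hb, hnodup, hchain, hL⟩ := exists_nodup_isChain_of_reflTransGen
    (S := Subtype.val ⁻¹' S) ((SimpleGraph.reachable_iff_reflTransGen _ _).1
      ((h2 a).preconnected ⟨x, ne_of_mem_of_not_mem ha hx |>.symm⟩ ⟨y, hya⟩)) hx hy
  let L' : List V := (⟨x, ne_of_mem_of_not_mem ha hx |>.symm⟩ :: L).map Subtype.val
  have hchain' : (a :: (L' ++ [b.1])).IsChain G.Adj := by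
    have := (List.isChain_map (R := G.Adj) Subtype.val).2 (hchain.imp fun _ _ h => h)
    simpa [L', hax] using this
  have hnodup' : L'.Nodup := hnodup.map Subtype.val_injective
  have hL' : ∀ v ∈ L', v ∉ S := List.forall_mem_map.2 hL
  have hssubset : S ⊂ S ∪ {v | v ∈ L'} :=
    (Set.ssubset_iff_of_subset Set.subset_union_left).2 ⟨x, .inr (by simp [L']), hx⟩
  refine ⟨_, hssubset, ?_⟩
  rcases lt_or_gt_of_ne fun h => b.2 (hf.injOn ha hb h).symm with hab | hba
  · exact hf.exists_extend ha hb hab hnodup' hL' hchain'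
  · have hrev : (b.1 :: (L'.reverse ++ [a])).IsChain G.Adj := by
      have := List.isChain_reverse.2 (hchain'.imp fun _ _ h => h.symm)
      simpa using this
    simpa using hf.exists_extend hb ha hba (List.nodup_reverse.2 hnodup') (by simpa using hL') hrev

end

lemma exists_of_connected [Finite V] (hconn : G.Connected)
    (h2 : ∀ v : V, (G.induce ({v}ᶜ : Set V)).Connected) (hst : s ≠ t) :
    ∃ f : V → ℝ, IsStNumbering G s t Set.univ f := by
  classical
  have hne : {S : Set V | ∃ f : V → ℝ, IsStNumbering G s t S f}.Nonempty := by
    refine ⟨{s, t}, fun v => if v = s then 0 else 1, ?_⟩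
    constructor <;> simp [Set.InjOn, hst, hst.symm]
  obtain ⟨S, ⟨f, hf⟩, hmax⟩ := (Set.toFinite _).exists_maximal hne
  by_contra hcon
  obtain ⟨S', hlt, hS'⟩ := hf.exists_ssuperset hst hconn h2 fun h => hcon ⟨f, h ▸ hf⟩
  exact hlt.not_ge (hmax hS' hlt.le)

section

variable [Fintype V] {lev : V → ℕ}

lemma exists_nat (hconn : G.Connected) (h2 : ∀ v : V, (G.induce ({v}ᶜ : Set V)).Connected)
    (hst : s ≠ t) :
    ∃ lev : V → ℕ, IsStNumbering G s t Set.univ lev ∧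
      Set.range lev = Set.Iio (Fintype.card V) := by
  obtain ⟨f, hf⟩ := exists_of_connected hconn h2 hst
  have hinj : f.Injective := Set.injOn_univ.1 hf.injOn
  let ho := LinearOrder.lift' f hinj
  let e : V ≃o Fin (Fintype.card V) := (Fintype.orderIsoFinOfCardEq V rfl).symm
  have he : StrictMono e := e.strictMono
  refine ⟨fun v => e v, ⟨trivial, trivial, ?_, ?_, ?_, ?_, ?_⟩, ?_⟩
  · exact (Fin.val_injective.comp e.injective).injOn
  · exact fun v hv => he.monotone (hf.source_le v hv)
  · exact fun v hv => he.monotone (hf.le_sink v hv)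
  · intro v hv hvs hvt
    obtain ⟨u, hu, hadj, hlt⟩ := hf.exists_lt v hv hvs hvt
    exact ⟨u, hu, hadj, he hlt⟩
  · intro v hv hvs hvt
    obtain ⟨u, hu, hadj, hlt⟩ := hf.exists_gt v hv hvs hvt
    exact ⟨u, hu, hadj, he hlt⟩
  · ext k
    exact ⟨fun ⟨v, hv⟩ => hv ▸ (e v).2, fun hk => ⟨e.symm ⟨k, hk⟩, by simp⟩⟩

lemma eq_zero (h : IsStNumbering G s t Set.univ lev)
    (hrange : Set.range lev = Set.Iio (Fintype.card V)) : lev s = 0 := by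
  have : Nonempty V := ⟨s⟩
  obtain ⟨v, hv⟩ : 0 ∈ Set.range lev := hrange ▸ Fintype.card_pos
  exact Nat.le_zero.1 (hv ▸ h.source_le v trivial)

lemma add_one_eq (h : IsStNumbering G s t Set.univ lev)
    (hrange : Set.range lev = Set.Iio (Fintype.card V)) : lev t + 1 = Fintype.card V := by
  have : Nonempty V := ⟨s⟩
  have hlt : lev t < Fintype.card V := hrange.subset ⟨t, rfl⟩
  obtain ⟨v, hv⟩ : Fintype.card V - 1 ∈ Set.range lev :=
    hrange ▸ Nat.sub_lt Fintype.card_pos Nat.one_pos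
  have := h.le_sink v trivial
  lia

end

end IsStNumbering

end StNumbering

/-! ### Bipolar orientations of plane graphs -/

section Bipolar

variable {V α : Type*} {G : SimpleGraph V} {σ : Equiv.Perm G.Dart}

/-- The face permutation of a rotation system: the successor of a dart on the face beside it. -/
def facePerm (σ : Equiv.Perm G.Dart) : Equiv.Perm G.Dart :=
  (Function.Involutive.toPerm _ SimpleGraph.Dart.symm_involutive).trans σ

lemma facePerm_apply (d : G.Dart) : facePerm σ d = σ d.symm := rfl

/-- The faces of a rotation system are the orbits of its face permutation. -/
def Face (σ : Equiv.Perm G.Dart) : Type _ := Quotient (Equiv.Perm.SameCycle.setoid (facePerm σ))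

instance [Finite V] : Finite (Face σ) :=
  have : Finite G.Dart := .of_injective _ SimpleGraph.Dart.toProd_injective
  Quotient.finite _

/-- The face that contains a dart. -/
def face (σ : Equiv.Perm G.Dart) (d : G.Dart) : Face σ := Quotient.mk _ d

lemma face_surjective : (face σ).Surjective := Quotient.mk_surjective

lemma face_eq_iff {d d' : G.Dart} : face σ d = face σ d' ↔ (facePerm σ).SameCycle d d' :=
  Quotient.eq

lemma face_symm (d : G.Dart) : face σ d.symm = face σ (σ d) :=
  face_eq_iff.2 ⟨1, by simp [facePerm_apply]⟩

/-- A dart is up with respect to a numbering of the vertices if the numbering increases along it. -/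
def IsUp [LT α] (lev : V → α) (d : G.Dart) : Prop := lev d.fst < lev d.snd

lemma isUp_symm [LinearOrder α] {lev : V → α} (hlev : lev.Injective) {d : G.Dart} :
    IsUp lev d.symm ↔ ¬ IsUp lev d :=
  (lt_iff_le_and_ne.trans (and_iff_left (hlev.ne d.adj.ne'))).trans not_lt.symm

/-! ### The Euler inequality -/

section Euler

/-- The coboundary of a function on the faces, read off on the up darts. -/
def faceCoboundary [LT α] (σ : Equiv.Perm G.Dart) (lev : V → α) :
    (Face σ → ℝ) →ₗ[ℝ] ({d : G.Dart // IsUp lev d} → ℝ) :=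
  .pi fun u => .proj (face σ u.1.symm) - .proj (face σ u.1)

open Classical in
/-- The divergence of a flow along the up darts. -/
noncomputable def divergence [LT α] [Fintype G.Dart] (lev : V → α) :
    ({d : G.Dart // IsUp lev d} → ℝ) →ₗ[ℝ] (V → ℝ) :=
  Fintype.linearCombination ℝ fun u => Pi.single u.1.fst 1 - Pi.single u.1.snd 1

open Classical in
/-- The extension of a flow along the up darts to a function on all darts that changes sign under
reversal. -/
noncomputable def antisymmExtend [LT α] {lev : V → α} (y : {d : G.Dart // IsUp lev d} → ℝ)
    (d : G.Dart) : ℝ :=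
  if h : IsUp lev d then y ⟨d, h⟩ else if h : IsUp lev d.symm then -y ⟨d.symm, h⟩ else 0

variable [LinearOrder α] {lev : V → α} {y : {d : G.Dart // IsUp lev d} → ℝ}

lemma antisymmExtend_coe (u : {d : G.Dart // IsUp lev d}) : antisymmExtend y u = y u :=
  dif_pos u.2

lemma antisymmExtend_symm (hlev : lev.Injective) (d : G.Dart) :
    antisymmExtend y d.symm = -antisymmExtend y d := by
  by_cases h : IsUp lev d
  · have h' : ¬ IsUp lev d.symm := mt (isUp_symm hlev).1 (not_not.2 h)
    simp [antisymmExtend, h, h']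
  · simp [antisymmExtend, h, (isUp_symm hlev).2 h]

variable [Fintype G.Dart]

open Classical in
lemma sum_dart_eq_sum_isUp (hlev : lev.Injective) (F : G.Dart → ℝ) :
    ∑ d, F d = ∑ u : {d : G.Dart // IsUp lev d}, (F u + F u.1.symm) := by
  rw [← Fintype.sum_subtype_add_sum_subtype (IsUp lev) F, Finset.sum_add_distrib]
  congr 1
  refine Fintype.sum_equiv
    ((Function.Involutive.toPerm _ SimpleGraph.Dart.symm_involutive).subtypeEquiv fun d => ?_)
    _ _ fun d => ?_
  · exact (isUp_symm hlev).symm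
  · exact congrArg F (SimpleGraph.Dart.symm_symm _).symm

lemma isCirculation_antisymmExtend (hlev : lev.Injective) (hy : divergence lev y = 0) :
    IsCirculation (fun d : G.Dart => d.fst) SimpleGraph.Dart.symm (antisymmExtend y) := by
  classical
  refine ⟨antisymmExtend_symm hlev, fun d => ?_⟩
  rw [Finset.sum_filter, sum_dart_eq_sum_isUp hlev]
  have hv := congrFun hy d.fst
  rw [divergence, Fintype.linearCombination_apply, Finset.sum_apply] at hv
  refine Eq.trans (Finset.sum_congr rfl fun u _ => ?_) hv
  have hsnd : u.1.symm.fst = u.1.snd := rfl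
  simp only [antisymmExtend_symm hlev, antisymmExtend_coe, Pi.smul_apply, Pi.sub_apply,
    Pi.single_apply, eq_comm (a := d.fst), hsnd]
  split_ifs <;> simp

lemma ker_divergence_le_range_faceCoboundary (hlev : lev.Injective)
    (hσ : IsSphericalRotation (fun d : G.Dart => d.fst) SimpleGraph.Dart.symm σ) :
    (divergence (G := G) lev).ker ≤ (faceCoboundary σ lev).range := by
  intro y hy
  obtain ⟨g, hg⟩ := hσ.exists_potential _ (isCirculation_antisymmExtend hlev hy)
  have hface (d : G.Dart) : g (facePerm σ d) = g d := by
    rw [facePerm_apply, (hg _).2, (hg _).1, antisymmExtend_symm hlev, add_neg_cancel_right]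
  have hpow (n : ℕ) (d : G.Dart) : g ((facePerm σ ^ n) d) = g d := by
    induction n generalizing d with
    | zero => rfl
    | succ n ih => rw [pow_succ, Equiv.Perm.mul_apply, ih, hface]
  refine ⟨Quotient.lift g fun a b hab => ?_, funext fun u => ?_⟩
  · obtain ⟨n, rfl⟩ := Equiv.Perm.SameCycle.exists_nat_pow_eq hab
    exact (hpow n a).symm
  · change g u.1.symm - g u.1 = y u
    rw [(hg u.1).1, antisymmExtend_coe, add_sub_cancel_left]

open Classical in
lemma card_isUp_add_two_le [Fintype V] [Fintype (Face σ)] [Nonempty G.Dart] (hlev : lev.Injective)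
    (hσ : IsSphericalRotation (fun d : G.Dart => d.fst) SimpleGraph.Dart.symm σ) :
    Fintype.card {d : G.Dart // IsUp lev d} + 2 ≤ Fintype.card V + Fintype.card (Face σ) := by
  obtain ⟨d₀⟩ := ‹Nonempty G.Dart›
  have hsum (y) : ∑ v, divergence (G := G) lev y v = 0 := by
    simp only [divergence, Fintype.linearCombination_apply, Finset.sum_apply]
    rw [Finset.sum_comm]
    simp [← Finset.mul_sum]
  have hdiv : Module.finrank ℝ (divergence (G := G) lev).range < Fintype.card V := by
    rw [← Module.finrank_fintype_fun_eq_card ℝ]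
    refine Submodule.finrank_lt fun htop => ?_
    obtain ⟨y, hy⟩ := htop.ge (Submodule.mem_top (x := Pi.single d₀.fst 1))
    simpa [hy] using hsum y
  have hker : 1 ≤ Module.finrank ℝ (faceCoboundary σ lev).ker := by
    refine Submodule.one_le_finrank_iff.2 fun hbot => ?_
    have hone : (fun _ => 1) ∈ (faceCoboundary σ lev).ker := by
      ext
      simp [faceCoboundary]
    rw [hbot, Submodule.mem_bot] at hone
    simpa using congrFun hone (face σ d₀)
  have hrank := (divergence (G := G) lev).finrank_range_add_finrank_ker
  have hrank' := (faceCoboundary σ lev).finrank_range_add_finrank_ker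
  have hle := Submodule.finrank_mono (ker_divergence_le_range_faceCoboundary hlev hσ)
  rw [Module.finrank_fintype_fun_eq_card] at hrank hrank'
  lia

end Euler

/-! ### Switches and peaks -/

lemma exists_sameCycle_and_not {β : Type*} [Finite β] {f : Equiv.Perm β} {p : β → Prop} {x y : β}
    (h : f.SameCycle x y) (hx : p x) (hy : ¬ p y) : ∃ z, f.SameCycle x z ∧ p z ∧ ¬ p (f z) := by
  obtain ⟨n, rfl⟩ := h.exists_nat_pow_eq
  by_contra! hcon
  exact hy (Nat.rec hx (fun n ih => by
    simpa [pow_succ'] using hcon ((f ^ n) x) ⟨n, by simp⟩ ih) n)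

section LinearOrder

variable [LinearOrder α] {lev : V → α} {s t : V}

lemma exists_switch [Finite V] (hσ : ∀ d d', σ.SameCycle d d' ↔ d.fst = d'.fst)
    (hlev : IsStNumbering G s t Set.univ lev) {v : V} (hs : v ≠ s) (ht : v ≠ t) :
    ∃ d : G.Dart, d.fst = v ∧ ¬ IsUp lev d ∧ IsUp lev (σ d) := by
  have : Finite G.Dart := .of_injective _ SimpleGraph.Dart.toProd_injective
  obtain ⟨u, -, hu, hlt⟩ := hlev.exists_lt v trivial hs ht
  obtain ⟨w, -, hw, hgt⟩ := hlev.exists_gt v trivial hs ht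
  obtain ⟨d, hd, hdown, hup⟩ := exists_sameCycle_and_not (p := fun d => ¬ IsUp lev d)
    ((hσ ⟨(v, u), hu⟩ ⟨(v, w), hw⟩).2 rfl) hlt.not_gt (not_not.2 hgt)
  exact ⟨d, ((hσ _ _).1 hd).symm, hdown, not_not.1 hup⟩

lemma exists_peak [Finite V] (hσ : ∀ d d', σ.SameCycle d d' ↔ d.fst = d'.fst)
    (hlev : lev.Injective) (q : Face σ) :
    ∃ d : G.Dart, face σ d = q ∧ IsUp lev d ∧ ¬ IsUp lev (facePerm σ d) := by
  have : Finite G.Dart := .of_injective _ SimpleGraph.Dart.toProd_injective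
  obtain ⟨d₀, rfl⟩ := face_surjective q
  have hfst (d : G.Dart) : (facePerm σ d).fst = d.snd :=
    (hσ _ _).1 (Equiv.Perm.sameCycle_apply_left.2 (.refl _ _))
  obtain ⟨d, hd, hmax⟩ := Set.exists_max_image {d | (facePerm σ).SameCycle d d₀}
    (fun d => lev d.snd) (Set.toFinite _) ⟨d₀, .refl _ _⟩
  refine ⟨d, face_eq_iff.2 hd, ?_, ?_⟩
  · have hle := hmax ((facePerm σ).symm d) (Equiv.Perm.sameCycle_symm_apply_left.2 hd)
    rw [← hfst, Equiv.apply_symm_apply] at hle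
    exact hle.lt_of_ne (hlev.ne d.adj.ne)
  · rw [IsUp, hfst]
    exact (hmax _ (Equiv.Perm.sameCycle_apply_left.2 hd)).not_gt

open Classical in
lemma card_switches_add_card_peaks [Fintype G.Dart] (hlev : lev.Injective) :
    Finset.card {d | ¬ IsUp lev d ∧ IsUp lev (σ d)} +
      Finset.card {d | IsUp lev d ∧ ¬ IsUp lev (facePerm σ d)} =
      Fintype.card {d : G.Dart // IsUp lev d} := by
  let e : G.Dart ≃ G.Dart := Function.Involutive.toPerm _ SimpleGraph.Dart.symm_involutive
  have hpeak : Finset.card {d | IsUp lev d ∧ ¬ IsUp lev (facePerm σ d)} =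
      Finset.card {d | ¬ IsUp lev d ∧ ¬ IsUp lev (σ d)} :=
    Finset.card_equiv e fun d => by
      rw [Finset.mem_filter, Finset.mem_filter]
      simp [e, isUp_symm hlev, facePerm_apply]
  have hdown : Finset.card {d : G.Dart | IsUp lev d} = Finset.card {d | ¬ IsUp lev d} :=
    Finset.card_equiv e fun d => by simp [e, isUp_symm hlev]
  rw [hpeak, Fintype.card_subtype, hdown, ← Finset.filter_filter, ← Finset.filter_filter,
    Finset.card_filter_add_card_filter_not]

end LinearOrder

/-- A plane `st`-graph, combinatorially: a rotation system together with an `st`-numbering by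
`0, …, n - 1` whose source and sink are adjacent, such that the up darts are consecutive around
every vertex and every face has a single peak. -/
structure StMap (G : SimpleGraph V) [Fintype V] where
  σ : Equiv.Perm G.Dart
  lev : V → ℕ
  s : V
  t : V
  sameCycle_iff : ∀ d d', σ.SameCycle d d' ↔ d.fst = d'.fst
  isStNumbering : IsStNumbering G s t Set.univ lev
  range_lev : Set.range lev = Set.Iio (Fintype.card V)
  adj : G.Adj s t
  switch : ∀ d d' : G.Dart, d.fst = d'.fst → ¬ IsUp lev d → IsUp lev (σ d) → ¬ IsUp lev d' →
    IsUp lev (σ d') → d = d'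
  peak : ∀ d d' : G.Dart, face σ d = face σ d' → IsUp lev d → ¬ IsUp lev (facePerm σ d) →
    IsUp lev d' → ¬ IsUp lev (facePerm σ d') → d = d'

open Classical in
/- Switches surject onto the inner vertices and peaks onto the faces, while the Euler inequality
bounds the number of switches and peaks from above; so both surjections are injective. -/
theorem exists_stMap [Fintype V] (hG : GraphPlanar G) (hconn : G.Connected)
    (h2 : ∀ v, (G.induce ({v}ᶜ : Set V)).Connected) {s t : V} (hst : G.Adj s t) :
    Nonempty (StMap G) := by
  obtain ⟨σ, hσ⟩ := hG.exists_isSphericalRotation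
  obtain ⟨lev, hlev, hrange⟩ := IsStNumbering.exists_nat hconn h2 hst.ne
  have hinj : lev.Injective := Set.injOn_univ.1 hlev.injOn
  have : Fintype (Face σ) := .ofFinite _
  have : Nonempty G.Dart := ⟨⟨(s, t), hst⟩⟩
  let A : Finset G.Dart := {d | ¬ IsUp lev d ∧ IsUp lev (σ d)}
  let B : Finset G.Dart := {d | IsUp lev d ∧ ¬ IsUp lev (facePerm σ d)}
  have hA : Finset.univ \ {s, t} ⊆ A.image fun d => d.fst := fun v hv => by
    obtain ⟨hs, ht⟩ : v ≠ s ∧ v ≠ t := by simpa using hv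
    obtain ⟨d, rfl, hd⟩ := exists_switch hσ.sameCycle_iff hlev hs ht
    exact Finset.mem_image_of_mem _ (by simpa [A] using hd)
  have hB : Finset.univ ⊆ B.image (face σ) := fun q _ => by
    obtain ⟨d, rfl, hd⟩ := exists_peak hσ.sameCycle_iff hinj q
    exact Finset.mem_image_of_mem _ (by simpa [B] using hd)
  have hAcard := Finset.card_le_card hA
  have hBcard := Finset.card_le_card hB
  rw [Finset.card_sdiff_of_subset (Finset.subset_univ _), Finset.card_pair hst.ne] at hAcard
  have hAimage : (A.image fun d => d.fst).card ≤ A.card := Finset.card_image_le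
  have hBimage : (B.image (face σ)).card ≤ B.card := Finset.card_image_le
  have heuler := card_isUp_add_two_le hinj hσ
  have hcount : A.card + B.card = _ := card_switches_add_card_peaks hinj
  rw [Finset.card_univ] at hAcard hBcard
  have hAinj := Finset.card_image_iff.1 (by lia : (A.image fun d => d.fst).card = A.card)
  have hBinj := Finset.card_image_iff.1 (by lia : (B.image (face σ)).card = B.card)
  exact ⟨σ, lev, s, t, hσ.sameCycle_iff, hlev, hrange, hst,
    fun d d' h h₁ h₂ h₃ h₄ => hAinj (by simp [A, h₁, h₂]) (by simp [A, h₃, h₄]) h,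
    fun d d' h h₁ h₂ h₃ h₄ => hBinj (by simpa [B] using ⟨h₁, h₂⟩) (by simpa [B] using ⟨h₃, h₄⟩) h⟩

end Bipolar

/-! ### Sweeping a plane `st`-graph -/

section FacePath

variable {V : Type*} {G : SimpleGraph V} {σ : Equiv.Perm G.Dart} {L L₁ L₂ : List G.Dart}
  {a b c : Face σ}

/-- Crossing the edges of the darts of a list in succession, each from its own face to the face on
its other side, leads from the first to the second face. -/
def IsFacePath (σ : Equiv.Perm G.Dart) : Face σ → List G.Dart → Face σ → Prop
  | a, [], b => a = b
  | a, d :: L, b => face σ d = a ∧ IsFacePath σ (face σ d.symm) L b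

lemma isFacePath_append :
    IsFacePath σ a (L₁ ++ L₂) c ↔ ∃ b, IsFacePath σ a L₁ b ∧ IsFacePath σ b L₂ c := by
  induction L₁ generalizing a with
  | nil => simp [IsFacePath]
  | cons d L ih => simp [IsFacePath, ih, and_assoc]

lemma IsFacePath.reverse (h : IsFacePath σ a L b) :
    IsFacePath σ b (L.map SimpleGraph.Dart.symm).reverse a := by
  induction L generalizing a with
  | nil => exact Eq.symm h
  | cons d L ih =>
    rw [List.map_cons, List.reverse_cons, isFacePath_append]
    exact ⟨_, ih h.2, rfl, by rw [SimpleGraph.Dart.symm_symm]; exact h.1⟩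

lemma mem_reverse_map_symm {d : G.Dart} :
    d ∈ (L.map SimpleGraph.Dart.symm).reverse ↔ d.symm ∈ L := by
  rw [List.mem_reverse, List.mem_map_of_involutive SimpleGraph.Dart.symm_involutive]

lemma nodup_reverse_map_symm (h : L.Nodup) : (L.map SimpleGraph.Dart.symm).reverse.Nodup :=
  List.nodup_reverse.2 (h.map SimpleGraph.Dart.symm_involutive.injective)

lemma isFacePath_iterate (d : G.Dart) (n : ℕ) :
    IsFacePath σ (face σ d) (List.iterate σ d n) (face σ (σ^[n] d)) := by
  induction n generalizing d with
  | zero => rfl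
  | succ n ih => exact ⟨rfl, face_symm d ▸ ih (σ d)⟩

end FacePath

section CycleList

variable {α : Type*}

/-- The cycle of a permutation through a point, listed from that point on. In contrast to
`Equiv.Perm.toList`, the cycle of a fixed point is a singleton. -/
noncomputable def cycleList (f : Equiv.Perm α) (x : α) : List α :=
  List.iterate f x (Function.minimalPeriod f x)

lemma nodup_cycleList (f : Equiv.Perm α) (x : α) : (cycleList f x).Nodup := by
  rw [cycleList, ← List.range_map_iterate]
  exact List.nodup_range.map_on fun i hi j hj h =>
    Function.iterate_injOn_Iio_minimalPeriod (List.mem_range.1 hi) (List.mem_range.1 hj) h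

variable [Finite α] {f : Equiv.Perm α} {x y : α}

lemma mem_cycleList : y ∈ cycleList f x ↔ f.SameCycle x y := by
  have hpos : 0 < Function.minimalPeriod f x :=
    Function.minimalPeriod_pos_of_mem_periodicPts (f.injective.mem_periodicPts x)
  rw [cycleList, List.mem_iterate]
  refine ⟨fun ⟨i, _, h⟩ => ⟨i, by simp [h, Equiv.Perm.iterate_eq_pow]⟩, fun h => ?_⟩
  obtain ⟨n, rfl⟩ := h.exists_nat_pow_eq
  exact ⟨_, Nat.mod_lt n hpos, by
    rw [Function.iterate_mod_minimalPeriod_eq, Equiv.Perm.iterate_eq_pow]⟩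

lemma exists_cycleList_eq_cons (f : Equiv.Perm α) (x : α) : ∃ L, cycleList f x = x :: L := by
  obtain ⟨n, hn⟩ := Nat.exists_eq_succ_of_ne_zero
    (Function.minimalPeriod_pos_of_mem_periodicPts (f.injective.mem_periodicPts x)).ne'
  exact ⟨_, by rw [cycleList, hn]; rfl⟩

end CycleList

lemma eq_filter_append_filter_not {α : Type*} (p : α → Bool) {L : List α}
    (h : L.Pairwise fun a b => p b → p a) : L = L.filter p ++ L.filter fun a => !p a := by
  induction h with
  | nil => rfl
  | @cons a L ha _ ih =>
    by_cases hpa : p a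
    · rw [List.filter_cons_of_pos hpa, List.filter_cons_of_neg (by simp [hpa]), List.cons_append,
        ← ih]
    · have hL : ∀ b ∈ L, ¬ p b := fun b hb hpb => hpa (ha b hb hpb)
      rw [List.filter_cons_of_neg hpa, List.filter_eq_nil_iff.2 hL, List.nil_append,
        List.filter_eq_self.2 (by simpa [hpa] using hL)]

namespace StMap

variable {V : Type*} [Fintype V] {G : SimpleGraph V} (M : StMap G)

lemma lev_injective : M.lev.Injective := Set.injOn_univ.1 M.isStNumbering.injOn

lemma lev_s : M.lev M.s = 0 := M.isStNumbering.eq_zero M.range_lev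

lemma lev_t : M.lev M.t + 1 = Fintype.card V := M.isStNumbering.add_one_eq M.range_lev

lemma lev_lt_card (v : V) : M.lev v < Fintype.card V :=
  M.range_lev.subset (Set.mem_range_self v)

lemma exists_lev_eq {k : ℕ} (hk : k < Fintype.card V) : ∃ v, M.lev v = k :=
  M.range_lev.superset hk

/-- The dart from the source to the sink. -/
def d₀ : G.Dart := ⟨(M.s, M.t), M.adj⟩

lemma isUp_or_isUp_symm (d : G.Dart) : IsUp M.lev d ∨ IsUp M.lev d.symm :=
  or_iff_not_imp_left.2 (isUp_symm M.lev_injective).2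

lemma facePerm_fst (d : G.Dart) : (facePerm M.σ d).fst = d.snd :=
  ((M.sameCycle_iff _ _).1 ⟨1, rfl⟩ : d.symm.fst = (M.σ d.symm).fst).symm

lemma isUp_of_fst_eq_s {d : G.Dart} (h : d.fst = M.s) : IsUp M.lev d := by
  rw [IsUp, h]
  exact lt_of_le_of_ne (M.lev_s ▸ Nat.zero_le _) (M.lev_injective.ne (h ▸ d.adj.ne))

lemma isUp_of_snd_eq_t {d : G.Dart} (h : d.snd = M.t) : IsUp M.lev d := by
  have hne : M.lev d.fst ≠ M.lev d.snd := M.lev_injective.ne d.adj.ne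
  have := M.lev_lt_card d.fst
  have := M.lev_t
  rw [IsUp, h] at *
  lia

/-- The successor relation on the darts of a face, restricted to up darts. -/
def UpNext (d d' : G.Dart) : Prop := facePerm M.σ d = d' ∧ IsUp M.lev d ∧ IsUp M.lev d'

variable {M}

lemma exists_reflTransGen_peak {d : G.Dart} (hd : IsUp M.lev d) :
    ∃ p, Relation.ReflTransGen M.UpNext d p ∧ IsUp M.lev p ∧ ¬ IsUp M.lev (facePerm M.σ p) := by
  by_cases h : IsUp M.lev (facePerm M.σ d)
  · have : M.lev d.snd < M.lev (facePerm M.σ d).snd := by rwa [IsUp, facePerm_fst] at h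
    have := M.lev_lt_card (facePerm M.σ d).snd
    obtain ⟨p, hp, hp'⟩ := exists_reflTransGen_peak h
    exact ⟨p, hp.head ⟨rfl, hd, h⟩, hp'⟩
  · exact ⟨d, .refl, hd, h⟩
termination_by Fintype.card V - M.lev d.snd

lemma face_eq_of_reflTransGen {d d' : G.Dart} (h : Relation.ReflTransGen M.UpNext d d') :
    face M.σ d = face M.σ d' := by
  induction h with
  | refl => rfl
  | tail _ h ih => exact ih.trans (face_eq_iff.2 ⟨1, by simpa using h.1⟩)

lemma eq_or_lev_le_of_reflTransGen {d d' : G.Dart} (h : Relation.ReflTransGen M.UpNext d d') :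
    d = d' ∨ M.lev d.snd ≤ M.lev d'.fst := by
  induction h with
  | refl => exact .inl rfl
  | @tail b c _ h ih =>
    right
    rw [← h.1, facePerm_fst]
    rcases ih with rfl | ih
    · exact le_rfl
    · exact ih.trans h.2.1.le

variable (M) in
/-- A dart crosses level `k` upwards if it starts at one of the vertices numbered `0, …, k` and
ends at a later vertex. -/
def Crosses (k : ℕ) (d : G.Dart) : Prop := M.lev d.fst ≤ k ∧ k < M.lev d.snd

variable {k : ℕ}

lemma Crosses.isUp {d : G.Dart} (h : M.Crosses k d) : IsUp M.lev d := h.1.trans_lt h.2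

lemma crosses_d₀ (hk : k + 1 < Fintype.card V) : M.Crosses k M.d₀ :=
  ⟨M.lev_s.trans_le k.zero_le, by have := M.lev_t; change k < M.lev M.t; lia⟩

/- Since a face has a single peak, its boundary runs upwards only once. -/
lemma Crosses.eq_of_face_eq {d d' : G.Dart} (hd : M.Crosses k d) (hd' : M.Crosses k d')
    (h : face M.σ d = face M.σ d') : d = d' := by
  obtain ⟨p, hp, hup, hpeak⟩ := exists_reflTransGen_peak hd.isUp
  obtain ⟨p', hp', hup', hpeak'⟩ := exists_reflTransGen_peak hd'.isUp
  obtain rfl : p = p' := M.peak _ _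
    ((face_eq_of_reflTransGen hp).symm.trans (h.trans (face_eq_of_reflTransGen hp')))
    hup hpeak hup' hpeak'
  have huniq : Relator.RightUnique (Function.swap M.UpNext) := fun _ _ _ h h' =>
    (facePerm M.σ).injective (h.1.trans h'.1.symm)
  obtain ⟨h₁, h₂⟩ := hd
  obtain ⟨h₁', h₂'⟩ := hd'
  rcases Relation.ReflTransGen.total_of_right_unique huniq hp.swap hp'.swap with h | h <;>
    rcases eq_or_lev_le_of_reflTransGen h.swap with h | h
  · exact h.symm
  · lia
  · exact h
  · lia

lemma exists_eq_append_of_isFacePath (hk : k + 1 < Fintype.card V) {I R : List G.Dart}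
    {a b : Face M.σ} (hI : ∀ e ∈ I, e ≠ M.d₀ ∧ M.Crosses k e) (hR : ∀ e ∈ R, M.Crosses k e)
    (hIpath : IsFacePath M.σ a I b) (hRpath : IsFacePath M.σ a R (face M.σ M.d₀)) :
    ∃ B, R = I ++ B ∧ IsFacePath M.σ b B (face M.σ M.d₀) := by
  induction I generalizing a R with
  | nil => exact ⟨R, rfl, hIpath ▸ hRpath⟩
  | cons f I ih =>
    obtain ⟨⟨hf₀, hf⟩, hI⟩ := List.forall_mem_cons.1 hI
    rcases R with _ | ⟨g, R⟩
    · exact absurd (hf.eq_of_face_eq (crosses_d₀ hk) (hIpath.1.trans hRpath)) hf₀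
    · obtain ⟨hg, hR'⟩ := List.forall_mem_cons.1 hR
      obtain rfl := hf.eq_of_face_eq hg (hIpath.1.trans hRpath.1.symm)
      obtain ⟨B, rfl, hB⟩ := ih hI hR' hIpath.2 hRpath.2
      exact ⟨B, rfl, hB⟩

variable (M) in
/-- The edges at a vertex of a plane `st`-graph, other than the edge from source to sink, listed
from left to right: those that go up and those that come in from below. Both lists lead from the
face on the left of the vertex to the face on its right. -/
structure Fan (v : V) where
  out : List G.Dart
  inn : List G.Dart
  left : Face M.σ
  right : Face M.σ
  nodup_out : out.Nodup
  nodup_inn : inn.Nodup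
  mem_out : ∀ d, d ∈ out ↔ d ≠ M.d₀ ∧ d.fst = v ∧ IsUp M.lev d
  mem_inn : ∀ d, d ∈ inn ↔ d ≠ M.d₀ ∧ d.snd = v ∧ IsUp M.lev d
  path_out : v ≠ M.t → IsFacePath M.σ left out right
  path_inn : v ≠ M.s → IsFacePath M.σ left inn right
  left_eq : v = M.s → left = face M.σ M.d₀.symm
  right_eq : v = M.s → right = face M.σ M.d₀

lemma mem_cycleList_σ [Finite G.Dart] {d e : G.Dart} :
    e ∈ cycleList M.σ d ↔ e.fst = d.fst :=
  mem_cycleList.trans ((M.sameCycle_iff d e).trans eq_comm)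

lemma isFacePath_cycleList (d : G.Dart) :
    IsFacePath M.σ (face M.σ d) (cycleList M.σ d) (face M.σ d) := by
  have h := isFacePath_iterate (σ := M.σ) d (Function.minimalPeriod M.σ d)
  rwa [Function.iterate_minimalPeriod] at h

lemma not_isUp_of_snd_eq_s {d : G.Dart} (h : d.snd = M.s) : ¬ IsUp M.lev d :=
  (isUp_symm M.lev_injective).1 (M.isUp_of_fst_eq_s h)

lemma not_isUp_of_fst_eq_t {d : G.Dart} (h : d.fst = M.t) : ¬ IsUp M.lev d :=
  (isUp_symm M.lev_injective).1 (M.isUp_of_snd_eq_t h)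

variable (M) in
lemma nonempty_fan_s : Nonempty (M.Fan M.s) := by
  have : Finite G.Dart := .of_injective _ SimpleGraph.Dart.toProd_injective
  obtain ⟨L, hL⟩ := exists_cycleList_eq_cons M.σ M.d₀
  have hpath := hL ▸ M.isFacePath_cycleList M.d₀
  obtain ⟨hd₀, hnodup⟩ := List.nodup_cons.1 (hL ▸ nodup_cycleList M.σ M.d₀)
  refine ⟨⟨L, [], _, _, hnodup, List.nodup_nil, fun d => ?_, fun d => ?_, fun _ => hpath.2,
    fun h => absurd rfl h, fun _ => rfl, fun _ => rfl⟩⟩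
  · have hmem : d ∈ M.d₀ :: L ↔ d.fst = M.s := hL ▸ mem_cycleList_σ
    rw [List.mem_cons] at hmem
    exact ⟨fun hd => ⟨ne_of_mem_of_not_mem hd hd₀, hmem.1 (.inr hd),
      M.isUp_of_fst_eq_s (hmem.1 (.inr hd))⟩, fun h => (hmem.2 h.2.1).resolve_left h.1⟩
  · exact iff_of_false List.not_mem_nil fun h => not_isUp_of_snd_eq_s h.2.1 h.2.2

variable (M) in
lemma nonempty_fan_t : Nonempty (M.Fan M.t) := by
  have : Finite G.Dart := .of_injective _ SimpleGraph.Dart.toProd_injective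
  obtain ⟨L, hL⟩ := exists_cycleList_eq_cons M.σ M.d₀.symm
  have hpath := (hL ▸ M.isFacePath_cycleList M.d₀.symm).2.reverse
  obtain ⟨hd₀, hnodup⟩ := List.nodup_cons.1 (hL ▸ nodup_cycleList M.σ M.d₀.symm)
  refine ⟨⟨[], _, _, _, List.nodup_nil, nodup_reverse_map_symm hnodup, fun d => ?_, fun d => ?_,
    fun h => absurd rfl h, fun _ => hpath, fun h => absurd h.symm M.adj.ne,
    fun h => absurd h.symm M.adj.ne⟩⟩
  · exact iff_of_false List.not_mem_nil fun h => not_isUp_of_fst_eq_t h.2.1 h.2.2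
  · have hmem : d.symm ∈ M.d₀.symm :: L ↔ d.snd = M.t := hL ▸ mem_cycleList_σ
    rw [List.mem_cons, SimpleGraph.Dart.symm_involutive.injective.eq_iff] at hmem
    rw [mem_reverse_map_symm]
    refine ⟨fun hd => ⟨?_, hmem.1 (.inr hd), M.isUp_of_snd_eq_t (hmem.1 (.inr hd))⟩,
      fun h => (hmem.2 h.2.1).resolve_left h.1⟩
    rintro rfl
    exact hd₀ hd

/- Going around an inner vertex from the first up dart on, no up dart follows a down dart. -/
lemma pairwise_cycleList {d : G.Dart} (hd : ¬ IsUp M.lev d) (hσd : IsUp M.lev (M.σ d)) :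
    (cycleList M.σ (M.σ d)).Pairwise fun e e' => IsUp M.lev e' → IsUp M.lev e := by
  have : Finite G.Dart := .of_injective _ SimpleGraph.Dart.toProd_injective
  have : IsTrans G.Dart fun e e' => IsUp M.lev e' → IsUp M.lev e := ⟨fun _ _ _ h h' => h ∘ h'⟩
  rw [← List.isChain_iff_pairwise, List.isChain_iff_getElem]
  intro i hi hup
  by_contra hdown
  have hsucc : (cycleList M.σ (M.σ d))[i + 1] = M.σ (cycleList M.σ (M.σ d))[i] := by
    simp only [cycleList, List.getElem_iterate, Function.iterate_succ_apply']
  have hmem := mem_cycleList_σ.1 (List.getElem_mem (Nat.lt_of_succ_lt hi))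
  have hswitch := M.switch _ _ (hmem.trans ((M.sameCycle_iff _ _).1 ⟨-1, by simp⟩)) hdown
    (hsucc ▸ hup) hd hσd
  have hzero : (cycleList M.σ (M.σ d))[i + 1] = (cycleList M.σ (M.σ d))[0] := by
    rw [hsucc, hswitch]
    simp only [cycleList, List.getElem_iterate, Function.iterate_zero_apply]
  exact Nat.succ_ne_zero i (((nodup_cycleList _ _).getElem_inj_iff).1 hzero)

open Classical in
lemma nonempty_fan_of_ne {v : V} (hs : v ≠ M.s) (ht : v ≠ M.t) : Nonempty (M.Fan v) := by
  have : Finite G.Dart := .of_injective _ SimpleGraph.Dart.toProd_injective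
  obtain ⟨d, hdv, hdown, hup⟩ := exists_switch M.sameCycle_iff M.isStNumbering hs ht
  set L := cycleList M.σ (M.σ d)
  have hL : L.Nodup := nodup_cycleList _ _
  have hmem (e : G.Dart) : e ∈ L ↔ e.fst = v :=
    mem_cycleList_σ.trans (by rw [← (M.sameCycle_iff d (M.σ d)).1 ⟨1, rfl⟩, hdv])
  have hpath := isFacePath_cycleList (M := M) (M.σ d)
  rw [eq_filter_append_filter_not (L := cycleList _ _) (fun e => decide (IsUp M.lev e))
    (by simpa using pairwise_cycleList hdown hup), isFacePath_append] at hpath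
  obtain ⟨b, hout, hinn⟩ := hpath
  refine ⟨⟨_, _, _, b, hL.filter _, nodup_reverse_map_symm (hL.filter _), fun e => ?_, fun e => ?_,
    fun _ => hout, fun _ => hinn.reverse, fun h => absurd h hs, fun h => absurd h hs⟩⟩
  · have (he : e.fst = v) : e ≠ M.d₀ := by rintro rfl; exact hs he.symm
    rw [List.mem_filter, hmem, decide_eq_true_eq]
    tauto
  · have (he : e.snd = v) : e ≠ M.d₀ := by rintro rfl; exact ht he.symm
    simp only [mem_reverse_map_symm, List.mem_filter, hmem, Bool.not_eq_true',
      decide_eq_false_iff_not, isUp_symm M.lev_injective, not_not]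
    tauto

variable (M) in
lemma nonempty_fan (v : V) : Nonempty (M.Fan v) := by
  rcases eq_or_ne v M.s with rfl | hs
  · exact M.nonempty_fan_s
  rcases eq_or_ne v M.t with rfl | ht
  · exact M.nonempty_fan_t
  exact nonempty_fan_of_ne hs ht

variable (M) in
/-- The edges, other than the edge from source to sink, between the first `k + 1` vertices and the
remaining ones. -/
structure IsFront (k : ℕ) (L : List G.Dart) : Prop where
  nodup : L.Nodup
  mem_iff : ∀ d, d ∈ L ↔ d ≠ M.d₀ ∧ M.Crosses k d

variable (M) in
/-- A sweep of a plane `st`-graph by a horizontal line: `front k` lists from left to right the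
edges, other than the edge from source to sink, that cross the line just above the vertex numbered
`k`. At every vertex the incoming edges, which are consecutive, are replaced by the outgoing ones.
-/
structure Sweep where
  fan : ∀ v, M.Fan v
  front : ℕ → List G.Dart
  inn_ne_nil : ∀ v, v ≠ M.s → (fan v).inn ≠ []
  front_zero : front 0 = (fan M.s).out
  isFront : ∀ k, M.IsFront k (front k)
  step : ∀ v k, M.lev v = k + 1 →
    ∃ A B, front k = A ++ (fan v).inn ++ B ∧ front (k + 1) = A ++ (fan v).out ++ B

namespace Fan

variable {v : V} (F : M.Fan v)

include F in
lemma inn_ne_nil (h3 : 3 ≤ Fintype.card V) (hv : v ≠ M.s) : F.inn ≠ [] := by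
  have := M.lev_t
  by_cases hvt : v = M.t
  · obtain ⟨u, hu⟩ := M.exists_lev_eq (k := M.lev M.t - 1) (by lia)
    have hus : u ≠ M.s := by rintro rfl; have := M.lev_s; lia
    obtain ⟨w, -, hw, huw⟩ := M.isStNumbering.exists_gt u trivial hus (by rintro rfl; lia)
    obtain rfl : w = v := M.lev_injective (by have := M.lev_lt_card w; subst hvt; lia)
    refine List.ne_nil_of_mem ((F.mem_inn ⟨(u, w), hw⟩).2 ⟨fun h => ?_, rfl, huw⟩)
    exact hus (congrArg (·.fst) h)
  · obtain ⟨u, -, hu, huv⟩ := M.isStNumbering.exists_lt v trivial hv hvt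
    refine List.ne_nil_of_mem ((F.mem_inn ⟨(u, v), hu.symm⟩).2 ⟨fun h => ?_, rfl, huv⟩)
    exact hvt (congrArg (·.snd) h)

lemma ne_and_crosses_of_mem_inn (hv : M.lev v = k + 1) {e : G.Dart} (he : e ∈ F.inn) :
    e ≠ M.d₀ ∧ M.Crosses k e := by
  obtain ⟨hne, rfl, hup⟩ := (F.mem_inn e).1 he
  exact ⟨hne, Nat.lt_succ_iff.1 (hup.trans_eq hv), by lia⟩

end Fan

lemma isFront_out_s (F : M.Fan M.s) : M.IsFront 0 F.out where
  nodup := F.nodup_out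
  mem_iff d := by
    rw [F.mem_out, Crosses, IsUp, Nat.le_zero, ← M.lev_s, M.lev_injective.eq_iff]
    exact and_congr_right fun _ => and_congr_right fun h => by rw [h]

lemma isFront_nil (hk : Fintype.card V ≤ k + 1) : M.IsFront k [] where
  nodup := List.nodup_nil
  mem_iff d := iff_of_false List.not_mem_nil fun h => by
    have := h.2.2
    have := M.lev_lt_card d.snd
    lia

lemma IsFront.step {v : V} (F : M.Fan v) (hv : M.lev v = k + 1) {A B : List G.Dart}
    (h : M.IsFront k (A ++ F.inn ++ B)) : M.IsFront (k + 1) (A ++ F.out ++ B) where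
  nodup := by
    have hdisj : ∀ e ∈ F.out, e ∉ A ++ F.inn ++ B := fun e he he' => by
      have := ((h.mem_iff e).1 he').2.1
      rw [((F.mem_out e).1 he).2.1] at this
      lia
    have := h.nodup
    have := F.nodup_out
    simp only [List.nodup_append', List.disjoint_left, List.mem_append] at *
    grind
  mem_iff d := by
    have hold : d ∈ A ∨ d ∈ B ↔ d ∈ A ++ F.inn ++ B ∧ d ∉ F.inn := by
      have := h.nodup
      simp only [List.nodup_append', List.disjoint_left, List.mem_append] at *
      grind
    have hfst : d.fst = v ↔ M.lev d.fst = k + 1 := by rw [← hv, M.lev_injective.eq_iff]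
    have hsnd : d.snd = v ↔ M.lev d.snd = k + 1 := by rw [← hv, M.lev_injective.eq_iff]
    calc d ∈ A ++ F.out ++ B ↔ d ∈ F.out ∨ (d ∈ A ∨ d ∈ B) := by
          simp only [List.mem_append]; tauto
      _ ↔ d ≠ M.d₀ ∧ M.Crosses (k + 1) d := by
          rw [hold, h.mem_iff, F.mem_out, F.mem_inn, hfst, hsnd, Crosses, Crosses, IsUp]
          lia

/- The incoming edges of the next vertex are consecutive on the sweep line: from their common left
face on, both lists cross the same faces, and the sweep line leaves each of them by the only edge it
can. -/
lemma exists_front_eq_append {v : V} (F : M.Fan v) (hF : F.inn ≠ []) (hv : M.lev v = k + 1)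
    {L : List G.Dart} (hL : M.IsFront k L) {a : Face M.σ}
    (hpath : IsFacePath M.σ a L (face M.σ M.d₀)) :
    ∃ A B, L = A ++ F.inn ++ B ∧ IsFacePath M.σ a A F.left ∧
      IsFacePath M.σ F.right B (face M.σ M.d₀) := by
  have hvs : v ≠ M.s := by rintro rfl; simp [M.lev_s] at hv
  have hinn (e : G.Dart) (he : e ∈ F.inn) := F.ne_and_crosses_of_mem_inn hv he
  obtain ⟨e, I, heI⟩ := List.exists_cons_of_ne_nil hF
  obtain ⟨A, R, rfl⟩ := List.append_of_mem
    ((hL.mem_iff e).2 (hinn e (heI ▸ List.mem_cons_self)))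
  obtain ⟨c, hA, hR⟩ := isFacePath_append.1 hpath
  obtain rfl : F.left = c := ((heI ▸ F.path_inn hvs).1.symm.trans hR.1 :)
  obtain ⟨B, hB, hBpath⟩ := exists_eq_append_of_isFacePath (hv ▸ M.lev_lt_card v) hinn
    (fun f hf => ((hL.mem_iff f).1 (List.mem_append_right _ hf)).2) (F.path_inn hvs) hR
  exact ⟨A, B, by rw [hB, List.append_assoc], hA, hBpath⟩

variable (M) in
theorem nonempty_sweep (h3 : 3 ≤ Fintype.card V) : Nonempty M.Sweep := by
  obtain ⟨fan⟩ := Classical.nonempty_pi.2 M.nonempty_fan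
  let P (k : ℕ) (L : List G.Dart) : Prop := M.IsFront k L ∧
    (k + 1 < Fintype.card V → IsFacePath M.σ (face M.σ M.d₀.symm) L (face M.σ M.d₀))
  have hzero : P 0 (fan M.s).out := ⟨isFront_out_s _, fun _ => by
    have h := (fan M.s).path_out M.adj.ne
    rwa [(fan M.s).left_eq rfl, (fan M.s).right_eq rfl] at h⟩
  have hstep (k : ℕ) (L : {L // P k L}) : ∃ L' : {L' // P (k + 1) L'}, ∀ v, M.lev v = k + 1 →
      ∃ A B, L.1 = A ++ (fan v).inn ++ B ∧ L'.1 = A ++ (fan v).out ++ B := by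
    by_cases hk : k + 1 < Fintype.card V
    · obtain ⟨v, hv⟩ := M.exists_lev_eq hk
      obtain ⟨L, hfront, hpath⟩ := L
      have hvs : v ≠ M.s := by rintro rfl; simp [M.lev_s] at hv
      obtain ⟨A, B, rfl, hA, hB⟩ := exists_front_eq_append (fan v) ((fan v).inn_ne_nil h3 hvs) hv
        hfront (hpath hk)
      refine ⟨⟨A ++ (fan v).out ++ B, hfront.step _ hv, fun hk' => ?_⟩, fun v' hv' => ?_⟩
      · have hvt : v ≠ M.t := by rintro rfl; have := M.lev_t; lia
        exact isFacePath_append.2 ⟨_, isFacePath_append.2 ⟨_, hA, (fan v).path_out hvt⟩, hB⟩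
      · obtain rfl := M.lev_injective (hv'.trans hv.symm)
        exact ⟨A, B, rfl, rfl⟩
    · exact ⟨⟨[], isFront_nil (by lia), fun h => absurd h (by lia)⟩,
        fun v hv => absurd (M.lev_lt_card v) (by lia)⟩
  choose next hnext using hstep
  let front (k : ℕ) : {L // P k L} := Nat.rec ⟨_, hzero⟩ next k
  exact ⟨fan, fun k => (front k).1, fun v hv => (fan v).inn_ne_nil h3 hv, rfl,
    fun k => (front k).2.1, fun v k => hnext k (front k) v⟩

end StMap

/-! ### Coordinates -/

section Height

/-- The height of the strip between levels `k` and `k + 1`. Each strip is three times as high as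
the next one, so that a horizontal gap reached in one strip survives the next. -/
def strip (N k : ℕ) : ℤ := 3 ^ (N - k)

/-- The height of level `k`. -/
def height (N k : ℕ) : ℤ := ∑ j ∈ Finset.range k, strip N j

variable {N j k : ℕ}

lemma strip_pos (N k : ℕ) : 0 < strip N k := pow_pos three_pos _

lemma strip_eq_three_mul (h : k < N) : strip N k = 3 * strip N (k + 1) := by
  rw [strip, strip, ← pow_succ']
  congr 1
  lia

lemma strip_dvd_strip (N : ℕ) (h : j ≤ k) : strip N k ∣ strip N j :=
  pow_dvd_pow _ (by lia)

lemma height_succ (N k : ℕ) : height N (k + 1) = height N k + strip N k :=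
  Finset.sum_range_succ _ _

lemma height_strictMono (N : ℕ) : StrictMono (height N) :=
  strictMono_nat_of_lt_succ fun k => by
    rw [height_succ]
    exact lt_add_of_pos_right _ (strip_pos N k)

lemma strip_dvd_height_sub (N : ℕ) (h : j ≤ k + 1) :
    strip N k ∣ height N (k + 1) - height N j := by
  rw [height, height, ← Finset.sum_Ico_eq_sub _ h]
  exact Finset.dvd_sum fun i hi =>
    strip_dvd_strip N (Nat.lt_succ_iff.1 (Finset.mem_Ico.1 hi).2)

end Height

lemma pairwise_append_append {α : Type*} {R : α → α → Prop} {A I B : List α} :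
    (A ++ I ++ B).Pairwise R ↔ (A.Pairwise R ∧ I.Pairwise R ∧ B.Pairwise R) ∧
      (∀ a ∈ A, ∀ i ∈ I, R a i) ∧ (∀ a ∈ A, ∀ b ∈ B, R a b) ∧ ∀ i ∈ I, ∀ b ∈ B, R i b := by
  simp only [List.pairwise_append, List.mem_append]
  grind

lemma length_lt_ncard_neighborSet {V : Type*} [Finite V] {G : SimpleGraph V} {v : V}
    {L : List G.Dart} (hL : L.Nodup) (hv : ∀ d ∈ L, d.fst = v) {e : G.Dart} (he : e.fst = v)
    (heL : e ∉ L) : L.length < (G.neighborSet v).ncard := by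
  classical
  have hv' : ∀ d ∈ e :: L, d.fst = v := List.forall_mem_cons.2 ⟨he, hv⟩
  have hnodup : ((e :: L).map fun d => d.snd).Nodup :=
    (List.nodup_cons.2 ⟨heL, hL⟩).map_on fun x hx y hy h => by
      ext
      exacts [(hv' x hx).trans (hv' y hy).symm, h]
  have hsub : (((e :: L).map fun d => d.snd).toFinset : Set V) ⊆ G.neighborSet v := fun w hw => by
    obtain ⟨d, hd, rfl⟩ := List.mem_map.1 (List.mem_toFinset.1 hw)
    exact hv' d hd ▸ d.adj
  have hcard := Set.ncard_le_ncard hsub (Set.toFinite _)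
  rwa [Set.ncard_coe_finset, List.toFinset_card_of_nodup hnodup, List.length_map,
    List.length_cons] at hcard

namespace StMap

variable {V : Type*} [Fintype V] {G : SimpleGraph V} {M : StMap G}

namespace Fan

variable {v : V} (F : M.Fan v)

lemma length_out_lt : F.out.length < (G.neighborSet v).ncard := by
  suffices ∃ e : G.Dart, e.fst = v ∧ e ∉ F.out by
    obtain ⟨e, he, heF⟩ := this
    exact length_lt_ncard_neighborSet F.nodup_out (fun d hd => ((F.mem_out d).1 hd).2.1) he heF
  rcases eq_or_ne v M.s with rfl | hs
  · exact ⟨M.d₀, rfl, fun h => ((F.mem_out _).1 h).1 rfl⟩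
  rcases eq_or_ne v M.t with rfl | ht
  · exact ⟨M.d₀.symm, rfl, fun h => not_isUp_of_fst_eq_t rfl ((F.mem_out _).1 h).2.2⟩
  obtain ⟨u, -, hu, huv⟩ := M.isStNumbering.exists_lt v trivial hs ht
  exact ⟨⟨(v, u), hu⟩, rfl, fun h => huv.not_gt ((F.mem_out _).1 h).2.2⟩

lemma length_inn_lt : F.inn.length < (G.neighborSet v).ncard := by
  suffices ∃ e : G.Dart, e.snd = v ∧ e ∉ F.inn by
    obtain ⟨e, he, heF⟩ := this
    rw [← List.length_reverse, ← List.length_map SimpleGraph.Dart.symm, List.map_reverse]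
    refine length_lt_ncard_neighborSet (nodup_reverse_map_symm F.nodup_inn)
      (fun d hd => ((F.mem_inn _).1 (mem_reverse_map_symm.1 hd)).2.1) (e := e.symm) he ?_
    rwa [mem_reverse_map_symm, SimpleGraph.Dart.symm_symm]
  rcases eq_or_ne v M.s with rfl | hs
  · exact ⟨M.d₀.symm, rfl, fun h => not_isUp_of_snd_eq_s rfl ((F.mem_inn _).1 h).2.2⟩
  rcases eq_or_ne v M.t with rfl | ht
  · exact ⟨M.d₀, rfl, fun h => ((F.mem_inn _).1 h).1 rfl⟩
  obtain ⟨w, -, hw, hvw⟩ := M.isStNumbering.exists_gt v trivial hs ht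
  exact ⟨⟨(w, v), hw.symm⟩, rfl, fun h => hvw.not_gt ((F.mem_inn _).1 h).2.2⟩

end Fan

/-- The ordinate of a vertex. -/
def Y (M : StMap G) (v : V) : ℤ := height (Fintype.card V) (M.lev v)

namespace Sweep

variable (S : M.Sweep)

/-- The incoming edge of a vertex that is drawn straight: the middle one of the incoming edges. -/
noncomputable def prim (v : V) : G.Dart := (S.fan v).inn.getD ((S.fan v).inn.length / 2) M.d₀

section

variable {v : V} (hv : v ≠ M.s)
include hv

lemma prim_mem : S.prim v ∈ (S.fan v).inn := by
  have hlen := List.length_pos_of_ne_nil (S.inn_ne_nil v hv)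
  rw [prim, List.getD_eq_getElem _ _ (Nat.div_lt_self hlen one_lt_two)]
  exact List.getElem_mem _

lemma prim_snd : (S.prim v).snd = v := (((S.fan v).mem_inn _).1 (S.prim_mem hv)).2.1

lemma lev_prim_fst_lt : M.lev (S.prim v).fst < M.lev v := by
  obtain ⟨-, hsnd, hup⟩ := ((S.fan v).mem_inn _).1 (S.prim_mem hv)
  exact hup.trans_eq (congrArg M.lev hsnd)

end

open Classical in
/-- The horizontal shift per unit of height of an edge on its way up: `-1`, `0` or `1` from left
to right among the edges that leave its lower end. -/
noncomputable def slope (d : G.Dart) : ℤ := ((S.fan d.fst).out.idxOf d : ℤ) - 1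

open Classical in
/-- The abscissa of a vertex, which lies on the straight continuation of one incoming edge. -/
noncomputable def X (v : V) : ℤ :=
  if _h : v = M.s then 0
  else X (S.prim v).fst + S.slope (S.prim v) * (M.Y v - M.Y (S.prim v).fst)
termination_by M.lev v
decreasing_by exact S.lev_prim_fst_lt _h

/-- The abscissa at level `k` of the line on which an edge leaves its lower end. -/
noncomputable def xAt (d : G.Dart) (k : ℕ) : ℤ :=
  S.X d.fst + S.slope d * (height (Fintype.card V) k - M.Y d.fst)

lemma X_s : S.X M.s = 0 := by rw [X, dif_pos rfl]

lemma X_eq_xAt_prim {v : V} (hv : v ≠ M.s) : S.X v = S.xAt (S.prim v) (M.lev v) := by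
  rw [X, dif_neg hv, xAt, Y]

lemma xAt_lev_fst (d : G.Dart) : S.xAt d (M.lev d.fst) = S.X d.fst := by
  rw [xAt, Y, sub_self, mul_zero, add_zero]

lemma xAt_succ (d : G.Dart) (k : ℕ) :
    S.xAt d (k + 1) = S.xAt d k + S.slope d * strip (Fintype.card V) k := by
  rw [xAt, xAt, height_succ]
  ring

lemma strip_dvd_X {v : V} {k : ℕ} (hk : M.lev v ≤ k + 1) : strip (Fintype.card V) k ∣ S.X v := by
  by_cases hv : v = M.s
  · rw [hv, X_s]
    exact dvd_zero _
  · have hlt := S.lev_prim_fst_lt hv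
    obtain ⟨j, hj⟩ := Nat.exists_eq_add_one_of_ne_zero (Nat.ne_zero_of_lt hlt)
    rw [S.X_eq_xAt_prim hv, hj]
    refine (strip_dvd_strip _ (by lia : j ≤ k)).trans (dvd_add (strip_dvd_X (by lia)) ?_)
    exact (strip_dvd_height_sub _ (by lia)).mul_left _
termination_by M.lev v

lemma strip_dvd_xAt {d : G.Dart} {k : ℕ} (h : M.lev d.fst ≤ k + 1) :
    strip (Fintype.card V) k ∣ S.xAt d (k + 1) :=
  dvd_add (S.strip_dvd_X h) ((strip_dvd_height_sub _ h).mul_left _)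

/-- The left-to-right order of the edges crossing the strip `k`: strict at its top, and weak at its
bottom, where two edges may leave the same vertex. -/
def Before (k : ℕ) (e e' : G.Dart) : Prop :=
  S.xAt e k ≤ S.xAt e' k ∧ S.xAt e (k + 1) < S.xAt e' (k + 1)

lemma pairwise_out_slope_lt (v : V) :
    (S.fan v).out.Pairwise fun e e' => S.slope e < S.slope e' := by
  classical
  rw [List.pairwise_iff_getElem]
  intro i j hi hj hij
  have hfst (i : ℕ) (hi : i < (S.fan v).out.length) : (S.fan v).out[i].fst = v :=
    (((S.fan v).mem_out _).1 (List.getElem_mem hi)).2.1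
  rw [slope, slope, hfst, hfst]
  simpa [(S.fan v).nodup_out.idxOf_getElem] using hij

lemma pairwise_out_before (v : V) : (S.fan v).out.Pairwise (S.Before (M.lev v)) := by
  refine (S.pairwise_out_slope_lt v).imp_of_mem fun he he' h => ?_
  have hX {e : G.Dart} (he : e ∈ (S.fan v).out) : S.xAt e (M.lev v) = S.X v := by
    obtain ⟨-, rfl, -⟩ := ((S.fan v).mem_out _).1 he
    exact S.xAt_lev_fst e
  refine ⟨by rw [hX he, hX he'], ?_⟩
  rw [xAt_succ, xAt_succ, hX he, hX he']
  gcongr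
  exact strip_pos _ _

section MaxDeg

variable (hdeg : MaxDegLE G 4)
include hdeg

lemma abs_slope_le {d : G.Dart} (hd : IsUp M.lev d) (h₀ : d ≠ M.d₀) : |S.slope d| ≤ 1 := by
  classical
  have hidx := List.idxOf_lt_length_iff.2 (((S.fan d.fst).mem_out d).2 ⟨h₀, rfl, hd⟩)
  have hlen := (S.fan d.fst).length_out_lt
  have := hdeg d.fst
  rw [abs_le, slope]
  lia

/- A gap at the lower end of a strip is a multiple of the height of the previous strip, while two
edges approach each other by at most twice the height of the strip itself. -/
lemma xAt_lt_xAt_succ {e e' : G.Dart} {k : ℕ} (hk : k < Fintype.card V)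
    (he₀ : e ≠ M.d₀) (he : M.Crosses (k + 1) e) (he₀' : e' ≠ M.d₀) (he' : M.Crosses (k + 1) e')
    (h : S.xAt e (k + 1) < S.xAt e' (k + 1)) : S.xAt e (k + 2) < S.xAt e' (k + 2) := by
  have hgap := Int.le_of_dvd (sub_pos.2 h) (dvd_sub (S.strip_dvd_xAt he'.1) (S.strip_dvd_xAt he.1))
  have hslope := abs_le.1 (S.abs_slope_le hdeg he.isUp he₀)
  have hslope' := abs_le.1 (S.abs_slope_le hdeg he'.isUp he₀')
  have hpos := strip_pos (Fintype.card V) (k + 1)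
  rw [strip_eq_three_mul hk] at hgap
  rw [S.xAt_succ e, S.xAt_succ e']
  nlinarith

theorem pairwise_front_before {k : ℕ} (hk : k < Fintype.card V) :
    (S.front k).Pairwise (S.Before k) := by
  induction k with
  | zero =>
    rw [S.front_zero]
    exact M.lev_s ▸ S.pairwise_out_before M.s
  | succ k ih =>
    obtain ⟨v, hv⟩ := M.exists_lev_eq hk
    have hvs : v ≠ M.s := by rintro rfl; simp [M.lev_s] at hv
    obtain ⟨A, B, hold, hnew⟩ := S.step v k hv
    have hmem (e : G.Dart) := ((S.isFront (k + 1)).mem_iff e).1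
    have hout (e : G.Dart) (he : e ∈ (S.fan v).out) :
        S.xAt e (k + 1) = S.xAt (S.prim v) (k + 1) := by
      rw [← hv, ← S.X_eq_xAt_prim hvs, ← (((S.fan v).mem_out e).1 he).2.1, xAt_lev_fst]
    have hlt (e e' : G.Dart) (he : e ∈ S.front (k + 1)) (he' : e' ∈ S.front (k + 1))
        (h : S.xAt e (k + 1) < S.xAt e' (k + 1)) : S.Before (k + 1) e e' :=
      ⟨h.le, S.xAt_lt_xAt_succ hdeg (Nat.lt_of_succ_lt hk) (hmem e he).1 (hmem e he).2
        (hmem e' he').1 (hmem e' he').2 h⟩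
    have ih := ih (Nat.lt_of_succ_lt hk)
    rw [hold, pairwise_append_append] at ih
    obtain ⟨⟨hA, -, hB⟩, hAI, hAB, hIB⟩ := ih
    rw [hnew] at hlt ⊢
    simp only [List.mem_append] at hlt
    refine pairwise_append_append.2 ⟨⟨hA.imp_of_mem fun he he' h => hlt _ _ (by simp [he])
      (by simp [he']) h.2, hv ▸ S.pairwise_out_before v, hB.imp_of_mem fun he he' h =>
      hlt _ _ (by simp [he]) (by simp [he']) h.2⟩, fun e he e' he' => ?_, fun e he e' he' => ?_,
      fun e he e' he' => ?_⟩ <;> refine hlt e e' (by simp [he]) (by simp [he']) ?_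
    · exact hout e' he' ▸ (hAI e he _ (S.prim_mem hvs)).2
    · exact (hAB e he e' he').2
    · exact hout e he ▸ (hIB _ (S.prim_mem hvs) e' he').2

lemma before_or_before {k : ℕ} {e e' : G.Dart} (he : e ∈ S.front k) (he' : e' ∈ S.front k)
    (hne : e ≠ e') : S.Before k e e' ∨ S.Before k e' e := by
  have hk : k < Fintype.card V :=
    (((S.isFront k).mem_iff e).1 he).2.2.trans (M.lev_lt_card e.snd)
  have : Std.Symm fun e e' : G.Dart => S.Before k e e' ∨ S.Before k e' e := ⟨fun _ _ => Or.symm⟩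
  exact ((S.pairwise_front_before hdeg hk).imp (S := fun e e' => S.Before k e e' ∨ S.Before k e' e)
    Or.inl).forall he he' hne

lemma forall_lt_or_forall_lt_of_passing {v : V} {d : G.Dart} (h₀ : d ≠ M.d₀)
    (hfst : M.lev d.fst < M.lev v) (hsnd : M.lev v < M.lev d.snd) :
    (∀ e ∈ (S.fan v).inn, S.xAt d (M.lev v) < S.xAt e (M.lev v)) ∨
      ∀ e ∈ (S.fan v).inn, S.xAt e (M.lev v) < S.xAt d (M.lev v) := by
  obtain ⟨k, hv⟩ := Nat.exists_eq_add_one_of_ne_zero (Nat.ne_zero_of_lt hfst)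
  have hk : k < Fintype.card V := Nat.lt_of_succ_lt (hv.symm.trans_lt (M.lev_lt_card v))
  have hd : d ∈ S.front k := ((S.isFront k).mem_iff d).2 ⟨h₀, by lia, by lia⟩
  have hdv : d ∉ (S.fan v).inn := fun h =>
    hsnd.ne (congrArg M.lev (((S.fan v).mem_inn d).1 h).2.1.symm)
  have hp := S.pairwise_front_before hdeg hk
  obtain ⟨A, B, hold, -⟩ := S.step v k hv
  rw [hold] at hp hd
  obtain ⟨-, hAI, -, hIB⟩ := pairwise_append_append.1 hp
  simp only [List.mem_append, hdv, or_false] at hd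
  rw [hv]
  exact hd.imp (fun hd e he => (hAI d hd e he).2) fun hd e he => (hIB e he d hd).2

lemma pairwise_inn_xAt_lt (v : V) :
    (S.fan v).inn.Pairwise fun e e' => S.xAt e (M.lev v) < S.xAt e' (M.lev v) := by
  rcases hv : M.lev v with _ | k
  · have hnil : (S.fan v).inn = [] := List.eq_nil_iff_forall_not_mem.2 fun e he => by
      obtain ⟨-, rfl, hup⟩ := ((S.fan v).mem_inn e).1 he
      exact Nat.not_lt_zero _ (hup.trans_eq hv)
    rw [hnil]
    exact .nil
  · have hk : k < Fintype.card V := Nat.lt_of_succ_lt (hv.symm.trans_lt (M.lev_lt_card v))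
    have hp := S.pairwise_front_before hdeg hk
    obtain ⟨A, B, hold, -⟩ := S.step v k hv
    rw [hold] at hp
    exact (pairwise_append_append.1 hp).1.2.1.imp And.right

/- There are at most three incoming edges, and the straight one is in the middle. -/
lemma bent_inn_opposite {v : V} (hv : v ≠ M.s) {d d' : G.Dart} (hd : d ∈ (S.fan v).inn)
    (hd' : d' ∈ (S.fan v).inn) (hne : d ≠ d') (h : d ≠ S.prim v) (h' : d' ≠ S.prim v) :
    (S.xAt d (M.lev v) < S.X v ∧ S.X v < S.xAt d' (M.lev v)) ∨
      (S.xAt d' (M.lev v) < S.X v ∧ S.X v < S.xAt d (M.lev v)) := by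
  have hp := S.pairwise_inn_xAt_lt hdeg v
  have hlen := (S.fan v).length_inn_lt.trans_le (hdeg v)
  rw [S.X_eq_xAt_prim hv]
  unfold prim at h h' ⊢
  generalize (S.fan v).inn = l at *
  match l with
  | [] => simp at hd
  | [a] => simp_all
  | [a, b] => simp at hd hd' h h'; grind
  | [a, b, c] => simp at hd hd' h h' hp ⊢; grind

lemma abs_X_le (v : V) : |S.X v| ≤ M.Y v := by
  by_cases hv : v = M.s
  · simp [hv, X_s, Y, M.lev_s, height]
  · have hlt := S.lev_prim_fst_lt hv
    have ih := abs_X_le (S.prim v).fst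
    obtain ⟨hne, -, hup⟩ := ((S.fan v).mem_inn _).1 (S.prim_mem hv)
    have hY : 0 ≤ M.Y v - M.Y (S.prim v).fst :=
      sub_nonneg.2 (height_strictMono (Fintype.card V) hlt).le
    calc |S.X v| ≤ |S.X (S.prim v).fst|
          + |S.slope (S.prim v)| * |M.Y v - M.Y (S.prim v).fst| := by
          rw [S.X_eq_xAt_prim hv, xAt, ← abs_mul]
          exact abs_add_le _ _
      _ ≤ M.Y (S.prim v).fst + 1 * (M.Y v - M.Y (S.prim v).fst) := by
          rw [abs_of_nonneg hY]
          gcongr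
          exact S.abs_slope_le hdeg hup hne
      _ = M.Y v := by ring
termination_by M.lev v

end MaxDeg

end Sweep

end StMap

/-! ### The polylines of the drawing -/

lemma fst_eq_of_mem_segment {a b p : ℝ × ℝ} (hp : p ∈ segment ℝ a b) (hab : a.1 = b.1) :
    p.1 = a.1 := by
  simpa [← hab] using fst_mem_uIcc_of_mem_segment hp

lemma snd_eq_of_mem_segment {a b p : ℝ × ℝ} (hp : p ∈ segment ℝ a b) (hab : a.2 = b.2) :
    p.2 = a.2 := by
  simpa [← hab] using snd_mem_uIcc_of_mem_segment hp

namespace Polyline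

variable {a b c : ℝ × ℝ} {l : List (ℝ × ℝ)}

/-- The polyline through the points `a`, `b` and those of `l`, in this order. -/
def through (a b : ℝ × ℝ) (l : List (ℝ × ℝ)) : Polyline where
  len := l.length + 1
  len_pos := Nat.le_add_left ..
  pt := fun i => (a :: b :: l).getD i 0

lemma mem_image_through_nil {p : ℝ × ℝ} : p ∈ (through a b []).image ↔ p ∈ segment ℝ a b := by
  rw [mem_image_iff]
  exact ⟨fun ⟨i, hi, hp⟩ => by rwa [Nat.lt_one_iff.1 hi] at hp, fun hp => ⟨0, one_pos, hp⟩⟩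

lemma mem_image_through_cons {p : ℝ × ℝ} : p ∈ (through a b (c :: l)).image ↔
    p ∈ segment ℝ a b ∨ p ∈ (through b c l).image := by
  simp only [mem_image_iff]
  constructor
  · rintro ⟨_ | i, hi, hp⟩
    exacts [.inl hp, .inr ⟨i, Nat.lt_of_succ_lt_succ hi, hp⟩]
  · rintro (hp | ⟨i, hi, hp⟩)
    exacts [⟨0, Nat.succ_pos _, hp⟩, ⟨i + 1, Nat.succ_lt_succ hi, hp⟩]

lemma simple_through_nil (hab : a ≠ b) : (through a b []).Simple :=
  simple_of_seg_inter_seg (fun i hi => by rwa [Nat.lt_one_iff.1 hi])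
    fun i j hij hj => absurd (hij.trans_le (Nat.lt_succ_iff.1 hj)) i.not_lt_zero

lemma simple_through_cons (hab : a ≠ b) (h : (through b c l).Simple)
    (hb : ∀ p ∈ segment ℝ a b, p ∈ (through b c l).image → p = b) :
    (through a b (c :: l)).Simple := by
  refine simple_of_seg_inter_seg (fun i hi => ?_) fun i j hij hj p hpi hpj => ?_
  · rcases i with _ | i
    · exact hab
    · have hi : i < (through b c l).len := Nat.lt_of_succ_lt_succ hi
      exact fun e => i.lt_succ_self.ne (h.pt_injOn hi.le hi e)
  · obtain _ | j := j
    · exact absurd hij i.not_lt_zero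
    have hj : j < (through b c l).len := Nat.lt_of_succ_lt_succ hj
    rcases i with _ | i
    · obtain rfl := hb p hpi (mem_image_iff.2 ⟨j, hj, hpj⟩)
      obtain rfl : 0 = j := (h.eq_or_eq_of_pt_mem_seg hj (Nat.zero_le _) hpj).resolve_right
        j.succ_ne_zero.symm
      exact ⟨rfl, rfl⟩
    · obtain ⟨rfl, hp⟩ := h.seg_inter_seg_of_lt (Nat.lt_of_succ_lt_succ hij) hj hpi hpj
      exact ⟨rfl, hp⟩

lemma octilinear_through_nil (hab : a ≠ b) (ho : OctiSeg a b) : (through a b []).Octilinear :=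
  ⟨⟨fun i hi => by rwa [Nat.lt_one_iff.1 hi],
    fun i hi => absurd (Nat.lt_of_succ_lt_succ hi) i.not_lt_zero⟩,
    fun i hi => by rwa [Nat.lt_one_iff.1 hi]⟩

lemma octilinear_through_cons (hab : a ≠ b) (ho : OctiSeg a b)
    (hc : ¬ Collinear ℝ ({a, b, c} : Set (ℝ × ℝ))) (h : (through b c l).Octilinear) :
    (through a b (c :: l)).Octilinear := by
  refine ⟨⟨?_, ?_⟩, ?_⟩ <;> rintro (_ | i) hi
  exacts [hab, h.1.1 i (Nat.lt_of_succ_lt_succ hi), hc, h.1.2 i (Nat.lt_of_succ_lt_succ hi), ho,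
    h.2 i (Nat.lt_of_succ_lt_succ hi)]

section Bent

variable (hab : a.2 < b.2) (hbc : b.2 = c.2) (hne : b.1 ≠ c.1)
include hab hbc hne

lemma simple_through_of_horizontal : (through a b [c]).Simple := by
  refine simple_through_cons (ne_of_apply_ne _ hab.ne)
    (simple_through_nil (ne_of_apply_ne _ hne)) fun p hp hp' => ?_
  exact eq_right_of_mem_segment (LinearMap.snd ℝ ℝ ℝ) hab.ne hp
    (snd_eq_of_mem_segment (mem_image_through_nil.1 hp') hbc)

lemma octilinear_through_of_horizontal (ho : OctiSeg a b) : (through a b [c]).Octilinear := by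
  refine octilinear_through_cons (ne_of_apply_ne _ hab.ne) ho (not_collinear_of_cross_ne_zero ?_)
    (octilinear_through_nil (ne_of_apply_ne _ hne) (.inl (sub_eq_zero.2 hbc.symm)))
  rw [← hbc, show (b.1 - a.1) * (b.2 - a.2) - (b.2 - a.2) * (c.1 - a.1) =
    (b.2 - a.2) * (b.1 - c.1) by ring]
  exact mul_ne_zero (sub_ne_zero.2 hab.ne') (sub_ne_zero.2 hne)

end Bent

/-- The detour from the origin to `(x, y)` around the region `|p.1| ≤ p.2 ≤ y`: to the left by
`m`, then up, then diagonally down to the right. -/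
def detour (m x y : ℝ) : Polyline := through (0, 0) (-m, 0) [(-m, y + x + m), (x, y)]

section Detour

variable {m x y : ℝ}

lemma mem_image_detour {p : ℝ × ℝ} : p ∈ (detour m x y).image ↔ p ∈ segment ℝ (0, 0) (-m, 0) ∨
    p ∈ segment ℝ (-m, 0) (-m, y + x + m) ∨ p ∈ segment ℝ (-m, y + x + m) (x, y) := by
  rw [detour, mem_image_through_cons, mem_image_through_cons, mem_image_through_nil]

lemma eq_or_eq_of_mem_image_detour (hym : y < m) (hx : 0 < x + m) {p : ℝ × ℝ}
    (hp : p ∈ (detour m x y).image) (hp₁ : |p.1| ≤ p.2) (hp₂ : p.2 ≤ y) :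
    p = (0, 0) ∨ p = (x, y) := by
  rcases mem_image_detour.1 hp with hp | hp | hp
  · have h2 : p.2 = 0 := (snd_eq_of_mem_segment hp rfl :)
    rw [h2, abs_nonpos_iff] at hp₁
    exact .inl (Prod.ext hp₁ h2)
  · have h1 : p.1 = -m := (fst_eq_of_mem_segment hp rfl :)
    linarith [(abs_le.1 hp₁).1]
  · have hle : y ≤ y + x + m := by linarith
    have h2 := snd_mem_uIcc_of_mem_segment hp
    rw [Set.uIcc_of_ge hle] at h2
    exact .inr (eq_right_of_mem_segment (LinearMap.snd ℝ ℝ ℝ) (by simp; linarith) hp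
      (hp₂.antisymm h2.1))

variable (hm : 0 < m) (hy : 0 < y) (hx : 0 < x + m)
include hm hy hx

lemma simple_detour : (detour m x y).Simple := by
  refine simple_through_cons (by simp [hm.ne']) (simple_through_cons (ne_of_apply_ne Prod.snd ?_)
    (simple_through_nil (ne_of_apply_ne Prod.fst ?_)) fun p hp hp' => ?_) fun p hp hp' => ?_
  · exact ne_of_lt (by linarith)
  · exact ne_of_lt (by linarith)
  · exact eq_left_of_mem_segment (LinearMap.fst ℝ ℝ ℝ) (ne_of_lt (by simp; linarith))
      (mem_image_through_nil.1 hp') (fst_eq_of_mem_segment hp rfl :)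
  · have h2 : p.2 = 0 := (snd_eq_of_mem_segment hp rfl :)
    rcases mem_image_through_cons.1 hp' with hp' | hp'
    · exact eq_left_of_mem_segment (LinearMap.snd ℝ ℝ ℝ) (ne_of_lt (by simp; linarith)) hp' h2
    · have h2' := snd_mem_uIcc_of_mem_segment (mem_image_through_nil.1 hp')
      rw [Set.uIcc_of_ge (by simp; linarith)] at h2'
      linarith [h2'.1]

lemma octilinear_detour : (detour m x y).Octilinear := by
  have hdiag : OctiSeg (-m, y + x + m) (x, y) := .inr (.inr (.inr (by ring)))
  refine octilinear_through_cons (by simp [hm.ne']) (.inl (sub_self _))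
    (not_collinear_of_cross_ne_zero ?_) (octilinear_through_cons (ne_of_apply_ne Prod.snd ?_)
    (.inr (.inl (sub_self _))) (not_collinear_of_cross_ne_zero ?_)
    (octilinear_through_nil (ne_of_apply_ne Prod.fst ?_) hdiag))
  · suffices m ≠ 0 ∧ y + x + m ≠ 0 by simpa
    exact ⟨hm.ne', by linarith⟩
  · exact ne_of_lt (by linarith)
  · suffices y + x + m ≠ 0 ∧ x + m ≠ 0 by simpa
    exact ⟨by linarith, hx.ne'⟩
  · exact ne_of_lt (by linarith)

end Detour

end Polyline

/-! ### The curves of the edges -/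

lemma toR_injective : Function.Injective toR := fun _ _ h =>
  Prod.ext (Int.cast_injective (congrArg Prod.fst h)) (Int.cast_injective (congrArg Prod.snd h))

namespace StMap

variable {V : Type*} [Fintype V] {G : SimpleGraph V} {M : StMap G}

section Ordinates

variable {u v : V}

lemma Y_lt_Y : M.Y u < M.Y v ↔ M.lev u < M.lev v := (height_strictMono _).lt_iff_lt

lemma Y_le_Y : M.Y u ≤ M.Y v ↔ M.lev u ≤ M.lev v := (height_strictMono _).le_iff_le

lemma Y_injective : Function.Injective M.Y := (height_strictMono _).injective.comp M.lev_injective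

lemma Y_s : M.Y M.s = 0 := by rw [Y, M.lev_s, height, Finset.sum_range_zero]

lemma Y_le_Y_t (v : V) : M.Y v ≤ M.Y M.t :=
  Y_le_Y.2 (Nat.lt_succ_iff.1 ((M.lev_lt_card v).trans_eq M.lev_t.symm))

lemma Y_t_pos : 0 < M.Y M.t := by
  rw [← M.Y_s, Y_lt_Y]
  exact M.isUp_of_fst_eq_s (d := M.d₀) rfl

end Ordinates

namespace Sweep

variable (S : M.Sweep)

/-- The grid point at which a vertex is placed. -/
noncomputable def pos (v : V) : ℤ × ℤ := (S.X v, M.Y v)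

lemma pos_injective : Function.Injective S.pos := fun _ _ h => Y_injective (congrArg Prod.snd h)

/-- The abscissa at height `y` of the line on which an edge leaves its lower end. -/
noncomputable def line (d : G.Dart) (y : ℝ) : ℝ := S.X d.fst + S.slope d * (y - M.Y d.fst)

lemma line_height (d : G.Dart) (k : ℕ) :
    S.line d (height (Fintype.card V) k) = S.xAt d k := by
  rw [line, xAt]
  push_cast
  rfl

lemma line_Y (d : G.Dart) (v : V) : S.line d (M.Y v) = S.xAt d (M.lev v) := S.line_height d _

lemma line_Y_fst (d : G.Dart) : S.line d (M.Y d.fst) = S.X d.fst := by rw [line_Y, xAt_lev_fst]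

/- The lines are affine: where the first one is not flatter, compare at the top of the strip,
otherwise at its bottom. -/
lemma Before.line_lt {S : M.Sweep} {k : ℕ} {e e' : G.Dart} (h : S.Before k e e') {y : ℝ}
    (hk : height (Fintype.card V) k < y) (hk' : y ≤ height (Fintype.card V) (k + 1)) :
    S.line e y < S.line e' y := by
  have hbot : S.line e (height (Fintype.card V) k) ≤ S.line e' (height (Fintype.card V) k) := by
    rw [line_height, line_height]
    exact_mod_cast h.1
  have htop : S.line e (height (Fintype.card V) (k + 1)) <
      S.line e' (height (Fintype.card V) (k + 1)) := by
    rw [line_height, line_height]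
    exact_mod_cast h.2
  unfold line at *
  rcases lt_or_ge (S.slope e : ℝ) (S.slope e') with hs | hs
  · linarith [mul_pos (sub_pos.2 hs) (sub_pos.2 hk)]
  · linarith [mul_nonneg (sub_nonneg.2 hs) (sub_nonneg.2 hk')]

/-- The curve along which an edge other than `d₀` is drawn: it rises on its line up to the height
of its upper end, and then continues horizontally. -/
def curve (d : G.Dart) : Set (ℝ × ℝ) :=
  {p | p.2 ∈ Set.Icc (M.Y d.fst : ℝ) (M.Y d.snd) ∧ p.1 = S.line d p.2} ∪
    {p | p.2 = M.Y d.snd ∧ p.1 ∈ Set.uIcc (S.xAt d (M.lev d.snd) : ℝ) (S.X d.snd)}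

section Curve

variable {d d' : G.Dart} {p : ℝ × ℝ} {w : V}

lemma snd_mem_Icc_of_mem_curve (hd : IsUp M.lev d) (hp : p ∈ S.curve d) :
    p.2 ∈ Set.Icc (M.Y d.fst : ℝ) (M.Y d.snd) := by
  rcases hp with hp | hp
  · exact hp.1
  · rw [hp.1]
    exact Set.right_mem_Icc.2 (Int.cast_le.2 (Y_lt_Y.2 hd).le)

lemma curve_trichotomy (hd : IsUp M.lev d) (h₀ : d ≠ M.d₀) (hp : p ∈ S.curve d)
    (hw : p.2 = M.Y w) :
    (d.fst = w ∧ p.1 = S.X w) ∨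
      (d ∈ (S.fan w).inn ∧ p.1 ∈ Set.uIcc (S.xAt d (M.lev w) : ℝ) (S.X w)) ∨
      (M.lev d.fst < M.lev w ∧ M.lev w < M.lev d.snd) ∧ p.1 = S.xAt d (M.lev w) := by
  rcases hp with ⟨⟨hfst, hsnd⟩, hp⟩ | ⟨hsnd, hp⟩
  · rw [hw, Int.cast_le, Y_le_Y] at hfst hsnd
    rw [hw] at hp
    rcases hfst.eq_or_lt with h | hfst
    · obtain rfl := M.lev_injective h
      exact .inl ⟨rfl, hp.trans (S.line_Y_fst d)⟩
    rw [line_Y] at hp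
    rcases hsnd.eq_or_lt with h | hsnd
    · exact .inr (.inl ⟨((S.fan w).mem_inn d).2 ⟨h₀, (M.lev_injective h).symm, hd⟩,
        hp ▸ Set.left_mem_uIcc⟩)
    · exact .inr (.inr ⟨⟨hfst, hsnd⟩, hp⟩)
  · obtain rfl := Y_injective (Int.cast_injective (hw.symm.trans hsnd))
    exact .inr (.inl ⟨((S.fan _).mem_inn d).2 ⟨h₀, rfl, hd⟩, hp⟩)

variable (hdeg : MaxDegLE G 4)
include hdeg

lemma line_ne_line (h₀ : d ≠ M.d₀) (h₀' : d' ≠ M.d₀) (hne : d ≠ d') {y : ℝ}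
    (hy : y ∈ Set.Ioc (M.Y d.fst : ℝ) (M.Y d.snd))
    (hy' : y ∈ Set.Ioc (M.Y d'.fst : ℝ) (M.Y d'.snd)) : S.line d y ≠ S.line d' y := by
  have hpos : (height (Fintype.card V) 0 : ℝ) < y := by
    refine lt_of_le_of_lt (Int.cast_le.2 ?_) hy.1
    exact (height_strictMono _).monotone (Nat.zero_le _)
  obtain ⟨k, hk, hk'⟩ := Nat.exists_not_and_succ_of_not_zero_of_exists
    (p := fun k => y ≤ height (Fintype.card V) k) hpos.not_ge ⟨_, hy.2⟩
  rw [not_le] at hk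
  have hfront {e : G.Dart} (he₀ : e ≠ M.d₀) (he : y ∈ Set.Ioc (M.Y e.fst : ℝ) (M.Y e.snd)) :
      e ∈ S.front k := ((S.isFront k).mem_iff e).2 ⟨he₀,
    Nat.lt_succ_iff.1 ((height_strictMono _).lt_iff_lt.1 (Int.cast_lt.1 (he.1.trans_le hk'))),
    (height_strictMono _).lt_iff_lt.1 (Int.cast_lt.1 (hk.trans_le he.2))⟩
  rcases S.before_or_before hdeg (hfront h₀ hy) (hfront h₀' hy') hne with h | h
  · exact (h.line_lt hk hk').ne
  · exact (h.line_lt hk hk').ne'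

lemma ne_xAt_of_passing (h₀ : d ≠ M.d₀) (hfst : M.lev d.fst < M.lev w)
    (hsnd : M.lev w < M.lev d.snd) (hd' : d' ∈ (S.fan w).inn) {x : ℝ}
    (hx : x ∈ Set.uIcc (S.xAt d' (M.lev w) : ℝ) (S.X w)) : x ≠ S.xAt d (M.lev w) := by
  have hws : w ≠ M.s := by rintro rfl; simp [M.lev_s] at hfst
  have hprim := S.prim_mem hws
  rw [S.X_eq_xAt_prim hws] at hx
  rcases S.forall_lt_or_forall_lt_of_passing hdeg h₀ hfst hsnd with h | h
  · exact ((lt_min (Int.cast_lt.2 (h _ hd')) (Int.cast_lt.2 (h _ hprim))).trans_le hx.1).ne'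
  · exact (hx.2.trans_lt (max_lt (Int.cast_lt.2 (h _ hd')) (Int.cast_lt.2 (h _ hprim)))).ne

lemma X_ne_xAt_of_passing (h₀ : d ≠ M.d₀) (hfst : M.lev d.fst < M.lev w)
    (hsnd : M.lev w < M.lev d.snd) : (S.X w : ℝ) ≠ S.xAt d (M.lev w) := by
  have hws : w ≠ M.s := by rintro rfl; simp [M.lev_s] at hfst
  exact S.ne_xAt_of_passing hdeg h₀ hfst hsnd (S.prim_mem hws) Set.right_mem_uIcc

lemma mem_edge_of_pos_mem_curve (hd : IsUp M.lev d) (h₀ : d ≠ M.d₀)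
    (h : toR (S.pos w) ∈ S.curve d) : w ∈ d.edge := by
  rcases S.curve_trichotomy hd h₀ h rfl with ⟨rfl, -⟩ | ⟨hw, -⟩ | ⟨⟨hfst, hsnd⟩, hx⟩
  · exact Sym2.mem_mk_left _ _
  · obtain ⟨-, rfl, -⟩ := ((S.fan w).mem_inn d).1 hw
    exact Sym2.mem_mk_right _ _
  · exact absurd hx (S.X_ne_xAt_of_passing hdeg h₀ hfst hsnd)

lemma eq_X_of_mem_uIcc_of_mem_uIcc (hd : d ∈ (S.fan w).inn) (hd' : d' ∈ (S.fan w).inn)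
    (hne : d ≠ d') {x : ℝ} (hx : x ∈ Set.uIcc (S.xAt d (M.lev w) : ℝ) (S.X w))
    (hx' : x ∈ Set.uIcc (S.xAt d' (M.lev w) : ℝ) (S.X w)) : x = S.X w := by
  have hws : w ≠ M.s := fun h =>
    not_isUp_of_snd_eq_s ((((S.fan w).mem_inn d).1 hd).2.1.trans h) (((S.fan w).mem_inn d).1 hd).2.2
  by_cases h : d = S.prim w
  · simpa [h, ← S.X_eq_xAt_prim hws] using hx
  by_cases h' : d' = S.prim w
  · simpa [h', ← S.X_eq_xAt_prim hws] using hx'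
  rcases S.bent_inn_opposite hdeg hws hd hd' hne h h' with ⟨hlt, hgt⟩ | ⟨hlt, hgt⟩
  · rw [Set.uIcc_of_le (Int.cast_le.2 hlt.le)] at hx
    rw [Set.uIcc_of_ge (Int.cast_le.2 hgt.le)] at hx'
    exact hx.2.antisymm hx'.1
  · rw [Set.uIcc_of_ge (Int.cast_le.2 hgt.le)] at hx
    rw [Set.uIcc_of_le (Int.cast_le.2 hlt.le)] at hx'
    exact hx'.2.antisymm hx.1

lemma notMem_curve_of_passing (h₀ : d ≠ M.d₀) (hfst : M.lev d.fst < M.lev w)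
    (hsnd : M.lev w < M.lev d.snd) (hx : p.1 = S.xAt d (M.lev w)) (hw : p.2 = M.Y w)
    (hd' : IsUp M.lev d') (h₀' : d' ≠ M.d₀) (hne : d ≠ d') : p ∉ S.curve d' := fun hp => by
  rcases S.curve_trichotomy hd' h₀' hp hw with ⟨-, h⟩ | ⟨h', h⟩ | ⟨⟨hfst', hsnd'⟩, h⟩
  · exact S.X_ne_xAt_of_passing hdeg h₀ hfst hsnd (h.symm.trans hx)
  · exact S.ne_xAt_of_passing hdeg h₀ hfst hsnd h' h hx
  · refine S.line_ne_line hdeg h₀ h₀' hne (y := M.Y w) ?_ ?_ (by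
      rw [line_Y, line_Y, ← hx, ← h])
    · exact ⟨Int.cast_lt.2 (Y_lt_Y.2 hfst), Int.cast_le.2 (Y_lt_Y.2 hsnd).le⟩
    · exact ⟨Int.cast_lt.2 (Y_lt_Y.2 hfst'), Int.cast_le.2 (Y_lt_Y.2 hsnd').le⟩

lemma exists_Y_eq_of_mem_curve (hd : IsUp M.lev d) (h₀ : d ≠ M.d₀) (hd' : IsUp M.lev d')
    (h₀' : d' ≠ M.d₀) (hne : d ≠ d') (hp : p ∈ S.curve d) (hp' : p ∈ S.curve d') :
    ∃ w, p.2 = M.Y w := by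
  by_contra! h
  have hIoc {e : G.Dart} (he : IsUp M.lev e) (hp : p ∈ S.curve e) :
      p.2 ∈ Set.Ioc (M.Y e.fst : ℝ) (M.Y e.snd) := by
    obtain ⟨hfst, hsnd⟩ := S.snd_mem_Icc_of_mem_curve he hp
    exact ⟨hfst.lt_of_ne (h _).symm, hsnd⟩
  have hline {e : G.Dart} (hp : p ∈ S.curve e) : p.1 = S.line e p.2 :=
    (hp.resolve_right fun hp => h _ hp.1).2
  exact S.line_ne_line hdeg h₀ h₀' hne (hIoc hd hp) (hIoc hd' hp')
    ((hline hp).symm.trans (hline hp'))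

theorem exists_mem_edge_of_mem_curve (hd : IsUp M.lev d) (h₀ : d ≠ M.d₀) (hd' : IsUp M.lev d')
    (h₀' : d' ≠ M.d₀) (hne : d ≠ d') (hp : p ∈ S.curve d) (hp' : p ∈ S.curve d') :
    ∃ w ∈ d.edge, w ∈ d'.edge ∧ toR (S.pos w) = p := by
  obtain ⟨w, hw⟩ := S.exists_Y_eq_of_mem_curve hdeg hd h₀ hd' h₀' hne hp hp'
  suffices p.1 = S.X w by
    obtain rfl : toR (S.pos w) = p := Prod.ext this.symm hw.symm
    exact ⟨w, S.mem_edge_of_pos_mem_curve hdeg hd h₀ hp,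
      S.mem_edge_of_pos_mem_curve hdeg hd' h₀' hp', rfl⟩
  rcases S.curve_trichotomy hd h₀ hp hw with ⟨-, h⟩ | ⟨hinn, h⟩ | ⟨⟨hfst, hsnd⟩, h⟩
  · exact h
  · rcases S.curve_trichotomy hd' h₀' hp' hw with ⟨-, h'⟩ | ⟨hinn', h'⟩ | ⟨⟨hfst, hsnd⟩, h'⟩
    · exact h'
    · exact S.eq_X_of_mem_uIcc_of_mem_uIcc hdeg hinn hinn' hne h h'
    · exact absurd hp (S.notMem_curve_of_passing hdeg h₀' hfst hsnd h' hw hd h₀ hne.symm)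
  · exact absurd hp' (S.notMem_curve_of_passing hdeg h₀ hfst hsnd h hw hd' h₀' hne)

lemma abs_fst_le_snd_of_mem_curve (hd : IsUp M.lev d) (h₀ : d ≠ M.d₀) (hp : p ∈ S.curve d) :
    |p.1| ≤ p.2 := by
  have hX (v : V) : |(S.X v : ℝ)| ≤ M.Y v := by exact_mod_cast S.abs_X_le hdeg v
  have hline {y : ℝ} (hy : M.Y d.fst ≤ y) : |S.line d y| ≤ y := by
    have hslope : |(S.slope d : ℝ)| ≤ 1 := by exact_mod_cast S.abs_slope_le hdeg hd h₀
    calc |S.line d y| ≤ |(S.X d.fst : ℝ)| + |(S.slope d : ℝ)| * |y - M.Y d.fst| := by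
          rw [← abs_mul]
          exact abs_add_le _ _
      _ ≤ M.Y d.fst + 1 * (y - M.Y d.fst) := by
          rw [abs_of_nonneg (sub_nonneg.2 hy)]
          gcongr
          exact hX _
      _ = y := by ring
  rcases hp with ⟨hy, hx⟩ | ⟨hy, hx⟩
  · rw [hx]
    exact hline hy.1
  · have hxAt := hline (Int.cast_le.2 (Y_lt_Y.2 hd).le)
    rw [line_Y] at hxAt
    rw [hy, abs_le]
    exact ⟨(le_min (abs_le.1 hxAt).1 (abs_le.1 (hX _)).1).trans hx.1,
      hx.2.trans (max_le (abs_le.1 hxAt).2 (abs_le.1 (hX _)).2)⟩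

end Curve

end Sweep

end StMap

/-! ### The drawing -/

namespace StMap

variable {V : Type*} [Fintype V] {G : SimpleGraph V} {M : StMap G}

namespace Sweep

variable (S : M.Sweep)

/-- The point at which the line of an edge reaches the height of its upper end. -/
noncomputable def bend (d : G.Dart) : ℝ × ℝ := (S.xAt d (M.lev d.snd), M.Y d.snd)

open Classical in
/-- The polyline along which an edge is drawn: the edge from source to sink around the others, the
straight incoming edges of the vertices without bends, and all other edges with one bend. -/
noncomputable def polyline (d : G.Dart) : Polyline :=
  if d = M.d₀ then .detour (M.Y M.t + 1) (S.X M.t) (M.Y M.t)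
  else if d = S.prim d.snd then .through (toR (S.pos d.fst)) (toR (S.pos d.snd)) []
  else .through (toR (S.pos d.fst)) (S.bend d) [toR (S.pos d.snd)]

lemma polyline_d₀ : S.polyline M.d₀ = .detour (M.Y M.t + 1) (S.X M.t) (M.Y M.t) := if_pos rfl

lemma toR_pos_s : toR (S.pos M.s) = 0 := by simp [toR, pos, X_s, M.Y_s]

section

variable {d : G.Dart}

lemma polyline_of_eq_prim (h₀ : d ≠ M.d₀) (h : d = S.prim d.snd) :
    S.polyline d = .through (toR (S.pos d.fst)) (toR (S.pos d.snd)) [] := by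
  rw [polyline, if_neg h₀, if_pos h]

lemma polyline_of_ne_prim (h₀ : d ≠ M.d₀) (h : d ≠ S.prim d.snd) :
    S.polyline d = .through (toR (S.pos d.fst)) (S.bend d) [toR (S.pos d.snd)] := by
  rw [polyline, if_neg h₀, if_neg h]

lemma polyline_pt_zero (d : G.Dart) : (S.polyline d).pt 0 = toR (S.pos d.fst) := by
  rw [polyline]
  split_ifs with h₀
  · rw [h₀]
    exact S.toR_pos_s.symm
  all_goals rfl

lemma polyline_pt_len (d : G.Dart) :
    (S.polyline d).pt (S.polyline d).len = toR (S.pos d.snd) := by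
  rw [polyline]
  split_ifs with h₀
  · rw [h₀]
    rfl
  all_goals rfl

lemma bend_eq_of_eq_prim (hd : IsUp M.lev d) (h : d = S.prim d.snd) :
    S.bend d = toR (S.pos d.snd) := by
  have hs : d.snd ≠ M.s := fun h => not_isUp_of_snd_eq_s h hd
  rw [bend, toR, pos, S.X_eq_xAt_prim hs, ← h]

lemma segment_bend_subset_curve (hd : IsUp M.lev d) :
    segment ℝ (toR (S.pos d.fst)) (S.bend d) ⊆ S.curve d := fun p hp => by
  have hY : (M.Y d.fst : ℝ) ≤ M.Y d.snd := Int.cast_le.2 (Y_lt_Y.2 hd).le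
  have hp₂ := snd_mem_uIcc_of_mem_segment hp
  refine .inl ⟨Set.uIcc_of_le hY ▸ hp₂, ?_⟩
  obtain ⟨t, -, rfl⟩ := (segment_eq_image' ℝ _ _).subset hp
  simp only [toR, pos, bend, ← line_Y, line, Prod.fst_add, Prod.snd_add, Prod.smul_fst,
    Prod.smul_snd, Prod.fst_sub, Prod.snd_sub, smul_eq_mul]
  ring

lemma image_polyline_subset_curve (hd : IsUp M.lev d) (h₀ : d ≠ M.d₀) :
    (S.polyline d).image ⊆ S.curve d := fun p hp => by
  by_cases h : d = S.prim d.snd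
  · rw [S.polyline_of_eq_prim h₀ h, ← S.bend_eq_of_eq_prim hd h,
      Polyline.mem_image_through_nil] at hp
    exact S.segment_bend_subset_curve hd hp
  · rw [S.polyline_of_ne_prim h₀ h, Polyline.mem_image_through_cons,
      Polyline.mem_image_through_nil] at hp
    rcases hp with hp | hp
    · exact S.segment_bend_subset_curve hd hp
    · exact .inr ⟨(snd_eq_of_mem_segment hp rfl :), fst_mem_uIcc_of_mem_segment hp⟩

end

section MaxDeg

variable (hdeg : MaxDegLE G 4) {d d' : G.Dart} {p : ℝ × ℝ} {w : V}
include hdeg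

lemma X_t_add_pos : 0 < (S.X M.t : ℝ) + (M.Y M.t + 1) := by
  exact_mod_cast (by linarith [neg_le_of_abs_le (S.abs_X_le hdeg M.t)] :
    0 < S.X M.t + (M.Y M.t + 1))

lemma octiSeg_bend (hd : IsUp M.lev d) (h₀ : d ≠ M.d₀) :
    Polyline.OctiSeg (toR (S.pos d.fst)) (S.bend d) := by
  have hslope : S.slope d = -1 ∨ S.slope d = 0 ∨ S.slope d = 1 := by
    have := abs_le.1 (S.abs_slope_le hdeg hd h₀)
    lia
  simp only [Polyline.OctiSeg, toR, pos, bend, ← line_Y, line]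
  rcases hslope with h | h | h <;> rw [h] <;> push_cast
  · exact .inr (.inr (.inr (by ring)))
  · exact .inr (.inl (by ring))
  · exact .inr (.inr (.inl (by ring)))

lemma bend_fst_ne (hd : IsUp M.lev d) (h₀ : d ≠ M.d₀) (h : d ≠ S.prim d.snd) :
    (S.bend d).1 ≠ S.X d.snd := by
  have hs : d.snd ≠ M.s := fun h => not_isUp_of_snd_eq_s h hd
  obtain ⟨hprim₀, hsnd, hprim⟩ := ((S.fan _).mem_inn _).1 (S.prim_mem hs)
  have hY {e : G.Dart} (he : IsUp M.lev e) (hsnd : e.snd = d.snd) :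
      (M.Y d.snd : ℝ) ∈ Set.Ioc (M.Y e.fst : ℝ) (M.Y e.snd) :=
    hsnd ▸ Set.right_mem_Ioc.2 (Int.cast_lt.2 (Y_lt_Y.2 he))
  have := S.line_ne_line hdeg h₀ hprim₀ h (hY hd rfl) (hY hprim hsnd)
  rwa [line_Y, line_Y, ← S.X_eq_xAt_prim hs] at this

lemma simple_and_octilinear_polyline (hd : IsUp M.lev d) :
    (S.polyline d).Simple ∧ (S.polyline d).Octilinear := by
  by_cases h₀ : d = M.d₀
  · have hY : (0 : ℝ) < M.Y M.t := Int.cast_pos.2 Y_t_pos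
    have hm : (0 : ℝ) < M.Y M.t + 1 := by linarith
    rw [h₀, polyline_d₀]
    exact ⟨Polyline.simple_detour hm hY (S.X_t_add_pos hdeg),
      Polyline.octilinear_detour hm hY (S.X_t_add_pos hdeg)⟩
  have hY : (toR (S.pos d.fst)).2 < (S.bend d).2 := Int.cast_lt.2 (Y_lt_Y.2 hd)
  have hocti := S.octiSeg_bend hdeg hd h₀
  by_cases h : d = S.prim d.snd
  · have hne := ne_of_apply_ne Prod.snd hY.ne
    rw [S.polyline_of_eq_prim h₀ h, ← S.bend_eq_of_eq_prim hd h]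
    exact ⟨Polyline.simple_through_nil hne, Polyline.octilinear_through_nil hne hocti⟩
  · have hne := S.bend_fst_ne hdeg hd h₀ h
    rw [S.polyline_of_ne_prim h₀ h]
    exact ⟨Polyline.simple_through_of_horizontal hY rfl hne,
      Polyline.octilinear_through_of_horizontal hY rfl hne hocti⟩

lemma eq_pos_of_mem_image_polyline_d₀ (hp : p ∈ (S.polyline M.d₀).image) (hp₁ : |p.1| ≤ p.2)
    (hp₂ : p.2 ≤ M.Y M.t) : p = toR (S.pos M.s) ∨ p = toR (S.pos M.t) := by
  rw [polyline_d₀] at hp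
  rw [toR_pos_s]
  exact Polyline.eq_or_eq_of_mem_image_detour (lt_add_one _) (S.X_t_add_pos hdeg) hp hp₁ hp₂

lemma mem_edge_of_pos_mem_image_polyline (hd : IsUp M.lev d)
    (h : toR (S.pos w) ∈ (S.polyline d).image) : w ∈ d.edge := by
  by_cases h₀ : d = M.d₀
  · rw [h₀] at h ⊢
    refine (S.eq_pos_of_mem_image_polyline_d₀ hdeg h ?_ ?_).elim
      (fun h => Sym2.mem_iff.2 (.inl ?_)) fun h => Sym2.mem_iff.2 (.inr ?_)
    · change |(S.X w : ℝ)| ≤ M.Y w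
      exact_mod_cast S.abs_X_le hdeg w
    · exact Int.cast_le.2 (Y_le_Y_t w)
    all_goals exact S.pos_injective (toR_injective h)
  · exact S.mem_edge_of_pos_mem_curve hdeg hd h₀ (S.image_polyline_subset_curve hd h₀ h)

lemma exists_mem_edge_of_mem_image_polyline_d₀ (hd : IsUp M.lev d) (h₀ : d ≠ M.d₀)
    (hp : p ∈ (S.polyline d).image) (hp' : p ∈ (S.polyline M.d₀).image) :
    ∃ w ∈ d.edge, w ∈ M.d₀.edge ∧ toR (S.pos w) = p := by
  have hcurve := S.image_polyline_subset_curve hd h₀ hp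
  have hY : p.2 ≤ M.Y M.t :=
    (S.snd_mem_Icc_of_mem_curve hd hcurve).2.trans (Int.cast_le.2 (Y_le_Y_t _))
  rcases S.eq_pos_of_mem_image_polyline_d₀ hdeg hp'
    (S.abs_fst_le_snd_of_mem_curve hdeg hd h₀ hcurve) hY with rfl | rfl
  · exact ⟨_, S.mem_edge_of_pos_mem_curve hdeg hd h₀ hcurve, Sym2.mem_mk_left _ _, rfl⟩
  · exact ⟨_, S.mem_edge_of_pos_mem_curve hdeg hd h₀ hcurve, Sym2.mem_mk_right _ _, rfl⟩

lemma exists_mem_edge_of_mem_image_polyline (hd : IsUp M.lev d) (hd' : IsUp M.lev d')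
    (hne : d ≠ d') (hp : p ∈ (S.polyline d).image) (hp' : p ∈ (S.polyline d').image) :
    ∃ w ∈ d.edge, w ∈ d'.edge ∧ toR (S.pos w) = p := by
  by_cases h₀ : d = M.d₀
  · subst h₀
    obtain ⟨w, hw, hw', h⟩ := S.exists_mem_edge_of_mem_image_polyline_d₀ hdeg hd' hne.symm hp' hp
    exact ⟨w, hw', hw, h⟩
  by_cases h₀' : d' = M.d₀
  · subst h₀'
    exact S.exists_mem_edge_of_mem_image_polyline_d₀ hdeg hd h₀ hp hp'
  · exact S.exists_mem_edge_of_mem_curve hdeg hd h₀ hd' h₀' hne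
      (S.image_polyline_subset_curve hd h₀ hp) (S.image_polyline_subset_curve hd' h₀' hp')

end MaxDeg

end Sweep

variable (M) in
lemma exists_isUp_edge_eq {e : Sym2 V} (he : e ∈ G.edgeSet) :
    ∃ d : G.Dart, IsUp M.lev d ∧ d.edge = e := by
  induction e with
  | _ u v =>
    rcases M.isUp_or_isUp_symm ⟨(u, v), he⟩ with h | h
    exacts [⟨_, h, rfl⟩, ⟨_, h, SimpleGraph.Dart.edge_symm _⟩]

open Classical in
variable (M) in
/-- The upward orientation of an edge; pairs of vertices that are not edges get the value `d₀`. -/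
noncomputable def dartOf (e : Sym2 V) : G.Dart :=
  if he : e ∈ G.edgeSet then (M.exists_isUp_edge_eq he).choose else M.d₀

lemma dartOf_edge {d : G.Dart} (hd : IsUp M.lev d) : M.dartOf d.edge = d := by
  rw [dartOf, dif_pos d.edge_mem]
  obtain ⟨hup, hedge⟩ := (M.exists_isUp_edge_eq d.edge_mem).choose_spec
  refine ((SimpleGraph.dart_edge_eq_iff _ _).1 hedge).resolve_right fun h => ?_
  rw [h, isUp_symm M.lev_injective] at hup
  exact hup hd

namespace Sweep

variable (S : M.Sweep) (hdeg : MaxDegLE G 4)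

/-- The octilinear drawing read off from a sweep. -/
noncomputable def drawing : OctiDrawing G where
  pos := S.pos
  inj := S.pos_injective
  poly e := S.polyline (M.dartOf e)
  ends u v h := by
    obtain ⟨d, hd, hedge⟩ := M.exists_isUp_edge_eq (G.mem_edgeSet.2 h)
    rw [← hedge, dartOf_edge hd, polyline_pt_zero, polyline_pt_len]
    rcases SimpleGraph.dart_edge_eq_mk'_iff'.1 hedge with ⟨rfl, rfl⟩ | ⟨rfl, rfl⟩
    exacts [rfl, Set.pair_comm _ _]
  octi e he := by
    obtain ⟨d, hd, rfl⟩ := M.exists_isUp_edge_eq he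
    rw [dartOf_edge hd]
    exact (S.simple_and_octilinear_polyline hdeg hd).2

lemma drawing_poly_edge {d : G.Dart} (hd : IsUp M.lev d) :
    (S.drawing hdeg).poly d.edge = S.polyline d := congrArg S.polyline (dartOf_edge hd)

theorem drawing_isPlanar : (S.drawing hdeg).IsPlanar := by
  refine ⟨fun e he => ?_, fun u v h => ?_, fun e he e' he' hne p hp => ?_⟩
  · obtain ⟨d, hd, rfl⟩ := M.exists_isUp_edge_eq he
    rw [drawing_poly_edge S hdeg hd]
    exact (S.simple_and_octilinear_polyline hdeg hd).1
  · rw [← (S.drawing hdeg).ends u v h]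
    obtain ⟨d, hd, hedge⟩ := M.exists_isUp_edge_eq (G.mem_edgeSet.2 h)
    rw [← hedge, drawing_poly_edge S hdeg hd]
    refine Set.Subset.antisymm ?_ ?_
    · rintro _ ⟨hp, w, rfl⟩
      rw [polyline_pt_zero, polyline_pt_len]
      rcases Sym2.mem_iff.1 (S.mem_edge_of_pos_mem_image_polyline hdeg hd hp) with rfl | rfl
      exacts [.inl rfl, .inr rfl]
    · rintro _ (rfl | rfl)
      · exact ⟨Polyline.pt_mem_image (Nat.zero_le _), _, (S.polyline_pt_zero d).symm⟩
      · exact ⟨Polyline.pt_mem_image le_rfl, _, (S.polyline_pt_len d).symm⟩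
  · obtain ⟨d, hd, rfl⟩ := M.exists_isUp_edge_eq he
    obtain ⟨d', hd', rfl⟩ := M.exists_isUp_edge_eq he'
    rw [drawing_poly_edge S hdeg hd, drawing_poly_edge S hdeg hd'] at hp
    obtain ⟨w, hw, hw', h⟩ := S.exists_mem_edge_of_mem_image_polyline hdeg hd hd'
      (ne_of_apply_ne _ hne) hp.1 hp.2
    exact ⟨w, ⟨hw, hw'⟩, h⟩

/-! ### Counting bends -/

lemma isUp_prim {v : V} (hv : v ≠ M.s) : IsUp M.lev (S.prim v) :=
  (((S.fan v).mem_inn _).1 (S.prim_mem hv)).2.2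

open Classical in
/-- The edges without bends: those chosen as the straight incoming edge of some vertex. -/
noncomputable def straight : Finset (Sym2 V) :=
  (Finset.univ.erase M.s).image fun v => (S.prim v).edge

open Classical in
lemma straight_subset_edgeSet : (S.straight : Set (Sym2 V)) ⊆ G.edgeSet := fun e he => by
  obtain ⟨v, -, rfl⟩ := Finset.mem_image.1 he
  exact (S.prim v).edge_mem

lemma prim_edge_injOn : {v | v ≠ M.s}.InjOn fun v => (S.prim v).edge := fun v hv w hw h => by
  have := congrArg M.dartOf h
  rw [dartOf_edge (S.isUp_prim hv), dartOf_edge (S.isUp_prim hw)] at this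
  rw [← S.prim_snd hv, ← S.prim_snd hw, this]

open Classical in
lemma card_straight : S.straight.card + 1 = Fintype.card V := by
  have hinj : (Finset.univ.erase M.s : Set V).InjOn fun v => (S.prim v).edge :=
    S.prim_edge_injOn.mono fun v hv => Finset.ne_of_mem_erase hv
  rw [straight, Finset.card_image_of_injOn hinj, Finset.card_erase_add_one (Finset.mem_univ _),
    Finset.card_univ]

open Classical in
lemma bends_add_le {e : Sym2 V} (he : e ∈ G.edgeSet) :
    ((S.drawing hdeg).poly e).bends + (if e ∈ S.straight then 1 else 0) ≤
      1 + if e = M.d₀.edge then 1 else 0 := by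
  obtain ⟨d, hd, rfl⟩ := M.exists_isUp_edge_eq he
  have hstraight (h : d.edge ∈ S.straight) : d ≠ M.d₀ ∧ d = S.prim d.snd := by
    obtain ⟨v, hv, h⟩ := Finset.mem_image.1 h
    have hv : v ≠ M.s := Finset.ne_of_mem_erase hv
    obtain rfl : S.prim v = d := by
      rw [← dartOf_edge hd, ← h, dartOf_edge (S.isUp_prim hv)]
    exact ⟨(((S.fan v).mem_inn _).1 (S.prim_mem hv)).1, by rw [S.prim_snd hv]⟩
  rw [drawing_poly_edge S hdeg hd]
  by_cases h₀ : d = M.d₀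
  · rw [if_neg fun h => (hstraight h).1 h₀, if_pos (by rw [h₀]), h₀, polyline_d₀]
    exact le_rfl
  refine le_add_right ?_
  by_cases h : d = S.prim d.snd
  · rw [S.polyline_of_eq_prim h₀ h]
    change 0 + _ ≤ 1
    split_ifs <;> simp
  · rw [if_neg fun h' => h (hstraight h').2, S.polyline_of_ne_prim h₀ h]
    exact le_rfl

/- Every edge accounts for one bend and `d₀` for one more; the `n - 1` edges in `straight` save
theirs. -/
theorem totalBends_add_card_le :
    (S.drawing hdeg).totalBends + Fintype.card V ≤ G.edgeSet.ncard + 2 := by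
  classical
  set E := G.edgeSet.toFinite.toFinset
  have hE : E.card = G.edgeSet.ncard := (Set.ncard_eq_toFinset_card _ _).symm
  have hstraight : E.filter (· ∈ S.straight) = S.straight := by
    ext e
    simpa [E] using fun he => S.straight_subset_edgeSet he
  have hsum := Finset.sum_le_sum (s := E) fun e he =>
    S.bends_add_le hdeg ((Set.Finite.mem_toFinset _).1 he)
  rw [Finset.sum_add_distrib, Finset.sum_add_distrib, ← Finset.card_filter, hstraight,
    ← Finset.card_eq_sum_ones, hE, Finset.sum_ite_eq'] at hsum
  have hcard := S.card_straight
  have : (if M.d₀.edge ∈ E then 1 else 0) ≤ 1 := by split_ifs <;> simp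
  unfold OctiDrawing.totalBends
  lia

end Sweep

end StMap

lemma MaxDegLE.two_mul_ncard_edgeSet_le {V : Type*} [Fintype V] {G : SimpleGraph V} {k : ℕ}
    (h : MaxDegLE G k) : 2 * G.edgeSet.ncard ≤ k * Fintype.card V := by
  classical
  have hdeg (v : V) : G.degree v ≤ k := by
    rw [← G.card_neighborFinset_eq_degree, SimpleGraph.neighborFinset_def,
      ← Set.ncard_eq_toFinset_card']
    exact h v
  calc 2 * G.edgeSet.ncard = ∑ v, G.degree v := by
        rw [G.sum_degrees_eq_twice_card_edges, Set.ncard_eq_toFinset_card']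
        rfl
    _ ≤ ∑ _v : V, k := Finset.sum_le_sum fun v _ => hdeg v
    _ = k * Fintype.card V := by rw [Finset.sum_const, Finset.card_univ, smul_eq_mul, mul_comm]

lemma connected_of_connected_induce_compl_singleton {V : Type*} [Fintype V] {G : SimpleGraph V}
    (hcard : 3 ≤ Fintype.card V) (h : ∀ v, (G.induce ({v}ᶜ : Set V)).Connected) :
    G.Connected := by
  classical
  have : Nonempty V := Fintype.card_pos_iff.1 (by lia)
  refine ⟨fun u v => ?_⟩
  obtain ⟨w, -, hw⟩ : ∃ w ∈ Finset.univ, w ∉ ({u, v} : Finset V) :=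
    Finset.exists_mem_notMem_of_card_lt_card (Finset.card_le_two.trans_lt hcard)
  simp only [Finset.mem_insert, Finset.mem_singleton, not_or] at hw
  exact ((h w).preconnected ⟨u, Ne.symm hw.1⟩ ⟨v, Ne.symm hw.2⟩).map
    (SimpleGraph.Embedding.induce _).toHom

theorem octilinear_bends_le_of_triconnected_deg4_general {V : Type*} [Fintype V]
    {G : SimpleGraph V} (hcard : 3 ≤ Fintype.card V)
    (hconn₁ : ∀ v, (G.induce ({v}ᶜ : Set V)).Connected) (hplanar : GraphPlanar G)
    (hdeg : MaxDegLE G 4) :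
    ∃ D : OctiDrawing G, D.IsPlanar ∧ D.totalBends ≤ Fintype.card V + 2 := by
  have hconn := connected_of_connected_induce_compl_singleton hcard hconn₁
  have : Nontrivial V := Fintype.one_lt_card_iff_nontrivial.1 (by lia)
  obtain ⟨s, -⟩ := exists_pair_ne V
  obtain ⟨t, hst⟩ := hconn.preconnected.exists_adj_of_nontrivial s
  obtain ⟨M⟩ := exists_stMap hplanar hconn hconn₁ hst
  obtain ⟨S⟩ := M.nonempty_sweep hcard
  refine ⟨S.drawing hdeg, S.drawing_isPlanar hdeg, ?_⟩
  have hbends := S.totalBends_add_card_le hdeg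
  have hedges := hdeg.two_mul_ncard_edgeSet_le
  lia

/-- Every triconnected planar simple graph with maximum degree at most `4`
on `n` vertices admits a planar octilinear drawing with at most `n + 5` bends in total. -/
theorem octilinear_bends_le_of_triconnected_deg4 {V : Type*} [Fintype V]
    (G : SimpleGraph V) (h3 : Triconnected G) (hp : GraphPlanar G) (hd : MaxDegLE G 4) :
    ∃ D : OctiDrawing G, D.IsPlanar ∧ D.totalBends ≤ Fintype.card V + 5 := by
  obtain ⟨D, hD, hbends⟩ := octilinear_bends_le_of_triconnected_deg4_general (by have := h3.1; lia)
    (fun v => h3.2 {v} (by simp)) hp hd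
  exact ⟨D, hD, by lia⟩
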